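/- Let Ω ⊂ ℂ^n be a strictly convex bounded domain. For every (1,1)-form f ∈ L²_{(1,1)}(Ω) with ∂f = ∂̄f = 0, there exists u ∈ L²(Ω) with i ∂∂̄ u = f in the sense of distributions and ∫_Ω |u|² ≤ c_Ω ∫_Ω |f|², where c_Ω > 0 depends only on the diameter of Ω. -/

import Mathlib

open Complex MeasureTheory

/-- Partial derivative in the `j`-th coordinate direction. -/
noncomputable def pd {N : ℕ} {F : Type*} [NormedAddCommGroup F] [NormedSpace ℝ F]
    (j : Fin N) (f : EuclideanSpace ℝ (Fin N) → F) (x : EuclideanSpace ℝ (Fin N)) : F :=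
  fderiv ℝ f x (EuclideanSpace.single j 1)

/-- The index of `x_j` in `ℝ^{2n}` under the identification `z_j = x_j + i x_{j+n}`. -/
def idx1 {n : ℕ} (j : Fin n) : Fin (2 * n) := ⟨j.1, by have := j.2; omega⟩

/-- The index of `x_{j+n}` in `ℝ^{2n}`. -/
def idx2 {n : ℕ} (j : Fin n) : Fin (2 * n) := ⟨j.1 + n, by have := j.2; omega⟩

/-- Wirtinger derivative `∂/∂z_j = (1/2)(∂/∂x_j - i ∂/∂x_{j+n})`. -/
noncomputable def wz {n : ℕ} (j : Fin n) (f : EuclideanSpace ℝ (Fin (2 * n)) → ℂ)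
    (x : EuclideanSpace ℝ (Fin (2 * n))) : ℂ :=
  (1 / 2 : ℂ) * (pd (idx1 j) f x - Complex.I * pd (idx2 j) f x)

/-- Wirtinger derivative `∂/∂z̄_j = (1/2)(∂/∂x_j + i ∂/∂x_{j+n})`. -/
noncomputable def wzbar {n : ℕ} (j : Fin n) (f : EuclideanSpace ℝ (Fin (2 * n)) → ℂ)
    (x : EuclideanSpace ℝ (Fin (2 * n))) : ℂ :=
  (1 / 2 : ℂ) * (pd (idx1 j) f x + Complex.I * pd (idx2 j) f x)

/-- A complex-valued test function on `Ω`. -/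
def IsTestFun {n : ℕ} (Ω : Set (EuclideanSpace ℝ (Fin (2 * n))))
    (χ : EuclideanSpace ℝ (Fin (2 * n)) → ℂ) : Prop :=
  ContDiff ℝ (⊤ : ℕ∞) χ ∧ HasCompactSupport χ ∧ tsupport χ ⊆ Ω

/-!
On a convex set the homotopy formula writes a smooth closed `f` as `∂a + ∂̄b`, where `a` and `b` are
contractions of `f` along the cone with pole `y ∈ Ω` and satisfy `∂̄a = 0` and `∂b = 0`. Averaging
over `y` shows that some pole keeps their `L²` norms bounded by that of `f`. Integrating by parts
in `∫ f χ` leaves two pairings of a closed tuple with derivatives of `χ`, and the dual form of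
Hörmander's `L²` estimate bounds each of them by `‖∂∂̄ᵗ χ‖`. The weight is `|x - y|² / 2`, increased
by convex functions that are arbitrarily small on the convex hull of the supports and huge where
the closed tuple is cut off, so that no boundary condition enters. Mollifying on a smaller convex
domain removes the smoothness of `f`, and the Riesz representation theorem turns the resulting
estimate `|∫ f χ| ≤ C ‖∂∂̄ᵗ χ‖` into a solution `u`.
-/

open scoped ContDiff ComplexConjugate ENNReal

section ComplexDirections

/-- The complex conjugate `v.1 - i v.2` of a complexified direction. -/
def conjDir {E : Type*} [AddCommGroup E] (v : E × E) : E × E := (v.1, -v.2)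

@[simp]
lemma conjDir_conjDir {E : Type*} [AddCommGroup E] (v : E × E) : conjDir (conjDir v) = v := by
  simp [conjDir]

variable {E : Type*} [NormedAddCommGroup E] [NormedSpace ℝ E]

/-- The derivative of `f : E → ℂ` in a complexified direction: the pair `v : E × E` stands for
`v.1 + i v.2` in `E ⊗ ℂ`, so that every constant-coefficient complex vector field on `E`, the
Wirtinger operators included, is of this form. -/
noncomputable def dirDeriv (v : E × E) (f : E → ℂ) (x : E) : ℂ :=
  fderiv ℝ f x v.1 + I * fderiv ℝ f x v.2

/-- Smooth compactly supported complex-valued functions. -/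
structure IsCcSmooth (f : E → ℂ) : Prop where
  contDiff : ContDiff ℝ ∞ f
  hasCompactSupport : HasCompactSupport f

variable {v w : E × E} {f g : E → ℂ} {x : E}

lemma dirDeriv_eq_of_hasFDerivAt {f' : E →L[ℝ] ℂ} (v : E × E) (h : HasFDerivAt f f' x) :
    dirDeriv v f x = f' v.1 + I * f' v.2 := by
  rw [dirDeriv, h.fderiv]

lemma dirDeriv_ofReal {φ : E → ℝ} (v : E × E) (h : DifferentiableAt ℝ φ x) :
    dirDeriv v (fun y => (φ y : ℂ)) x = fderiv ℝ φ x v.1 + I * fderiv ℝ φ x v.2 :=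
  dirDeriv_eq_of_hasFDerivAt v (ofRealCLM.hasFDerivAt.comp x h.hasFDerivAt)

lemma conj_dirDeriv (v : E × E) (f : E → ℂ) (x : E) :
    conj (dirDeriv v f x) = dirDeriv (conjDir v) (fun y => conj (f y)) x := by
  have h : fderiv ℝ (fun y => conj (f y)) x = (conjCLE : ℂ →L[ℝ] ℂ) ∘L fderiv ℝ f x :=
    conjCLE.comp_fderiv
  simp [dirDeriv, conjDir, h]

lemma dirDeriv_add (v : E × E) (hf : DifferentiableAt ℝ f x) (hg : DifferentiableAt ℝ g x) :
    dirDeriv v (fun y => f y + g y) x = dirDeriv v f x + dirDeriv v g x := by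
  rw [dirDeriv_eq_of_hasFDerivAt v (hf.hasFDerivAt.fun_add hg.hasFDerivAt), dirDeriv, dirDeriv]
  simp only [add_apply]
  ring

lemma dirDeriv_neg (v : E × E) (f : E → ℂ) (x : E) :
    dirDeriv v (fun y => -f y) x = -dirDeriv v f x := by
  simp only [dirDeriv, fderiv_fun_neg, neg_apply]
  ring

lemma dirDeriv_mul (v : E × E) (hf : DifferentiableAt ℝ f x) (hg : DifferentiableAt ℝ g x) :
    dirDeriv v (fun y => f y * g y) x = dirDeriv v f x * g x + f x * dirDeriv v g x := by
  rw [dirDeriv_eq_of_hasFDerivAt v (hf.hasFDerivAt.fun_mul hg.hasFDerivAt), dirDeriv, dirDeriv]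
  simp only [add_apply, smul_apply, smul_eq_mul]
  ring

lemma dirDeriv_const (v : E × E) (c : ℂ) (x : E) : dirDeriv v (fun _ => c) x = 0 := by
  simp [dirDeriv]

lemma dirDeriv_const_mul (v : E × E) (c : ℂ) (hf : DifferentiableAt ℝ f x) :
    dirDeriv v (fun y => c * f y) x = c * dirDeriv v f x := by
  rw [dirDeriv_mul v (differentiableAt_const c) hf, dirDeriv_const, zero_mul, zero_add]

lemma dirDeriv_sum {ι : Type*} (s : Finset ι) (v : E × E) {f : ι → E → ℂ}
    (hf : ∀ i ∈ s, DifferentiableAt ℝ (f i) x) :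
    dirDeriv v (fun y => ∑ i ∈ s, f i y) x = ∑ i ∈ s, dirDeriv v (f i) x := by
  simp only [dirDeriv, fderiv_fun_sum hf, sum_apply, Finset.mul_sum,
    Finset.sum_add_distrib]

lemma dirDeriv_congr (v : E × E) (h : f =ᶠ[nhds x] g) : dirDeriv v f x = dirDeriv v g x := by
  rw [dirDeriv, dirDeriv, h.fderiv_eq]

lemma contDiff_dirDeriv (v : E × E) {m k : WithTop ℕ∞} (hf : ContDiff ℝ m f) (h : k + 1 ≤ m) :
    ContDiff ℝ k (dirDeriv v f) :=
  ((hf.fderiv_right h).clm_apply contDiff_const).add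
    (contDiff_const.mul ((hf.fderiv_right h).clm_apply contDiff_const))

lemma continuous_dirDeriv (v : E × E) (hf : ContDiff ℝ 1 f) : Continuous (dirDeriv v f) :=
  (contDiff_dirDeriv v hf (k := 0) (by norm_num)).continuous

lemma dirDeriv_eq_zero_of_notMem_tsupport (v : E × E) (hx : x ∉ tsupport f) :
    dirDeriv v f x = 0 := by
  rw [dirDeriv_congr v (g := fun _ => 0) (notMem_tsupport_iff_eventuallyEq.mp hx), dirDeriv_const]

lemma tsupport_dirDeriv_subset (v : E × E) (f : E → ℂ) : tsupport (dirDeriv v f) ⊆ tsupport f :=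
  closure_minimal (fun _ hx => by_contra fun h => hx (dirDeriv_eq_zero_of_notMem_tsupport v h))
    (isClosed_tsupport f)

lemma hasCompactSupport_dirDeriv (v : E × E) (hf : HasCompactSupport f) :
    HasCompactSupport (dirDeriv v f) :=
  hf.mono' ((subset_tsupport _).trans (tsupport_dirDeriv_subset v f))

lemma dirDeriv_dirDeriv_eq_fderiv_fderiv (v w : E × E) (hf : ContDiff ℝ 2 f) (x : E) :
    dirDeriv v (dirDeriv w f) x =
      fderiv ℝ (fderiv ℝ f) x v.1 w.1 - fderiv ℝ (fderiv ℝ f) x v.2 w.2 +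
        I * (fderiv ℝ (fderiv ℝ f) x v.2 w.1 + fderiv ℝ (fderiv ℝ f) x v.1 w.2) := by
  have hd : HasFDerivAt (fderiv ℝ f) (fderiv ℝ (fderiv ℝ f) x) x :=
    ((hf.fderiv_right (m := 1) (by norm_num)).differentiable (by norm_num) x).hasFDerivAt
  have happly (a : E) : HasFDerivAt (fun y => fderiv ℝ f y a)
      ((fderiv ℝ (fderiv ℝ f) x).flip a) x := by
    simpa using hd.clm_apply (hasFDerivAt_const a x)
  have h := dirDeriv_eq_of_hasFDerivAt v ((happly w.1).fun_add ((happly w.2).const_mul I))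
  simp only [add_apply, smul_apply, ContinuousLinearMap.flip_apply, smul_eq_mul] at h
  refine h.trans ?_
  linear_combination fderiv ℝ (fderiv ℝ f) x v.2 w.2 * I_mul_I

lemma dirDeriv_comm (v w : E × E) (hf : ContDiff ℝ 2 f) (x : E) :
    dirDeriv v (dirDeriv w f) x = dirDeriv w (dirDeriv v f) x := by
  have hsymm := hf.contDiffAt (x := x) |>.isSymmSndFDerivAt (by simp)
  rw [dirDeriv_dirDeriv_eq_fderiv_fderiv v w hf, dirDeriv_dirDeriv_eq_fderiv_fderiv w v hf,
    hsymm.eq w.1 v.1, hsymm.eq w.2 v.2, hsymm.eq w.2 v.1, hsymm.eq w.1 v.2]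
  ring

namespace IsCcSmooth

lemma continuous (hf : IsCcSmooth f) : Continuous f := hf.contDiff.continuous

lemma differentiableAt (hf : IsCcSmooth f) (x : E) : DifferentiableAt ℝ f x :=
  hf.contDiff.differentiable (by simp) x

lemma add (hf : IsCcSmooth f) (hg : IsCcSmooth g) : IsCcSmooth (fun x => f x + g x) :=
  ⟨hf.contDiff.add hg.contDiff, hf.hasCompactSupport.add hg.hasCompactSupport⟩

lemma mul_left (hf : IsCcSmooth f) (hg : ContDiff ℝ ∞ g) : IsCcSmooth (fun x => g x * f x) :=
  ⟨hg.mul hf.contDiff, hf.hasCompactSupport.mul_left⟩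

lemma neg (hf : IsCcSmooth f) : IsCcSmooth (fun x => -f x) := by
  simpa using hf.mul_left (contDiff_const (c := (-1 : ℂ)))

lemma sub (hf : IsCcSmooth f) (hg : IsCcSmooth g) : IsCcSmooth (fun x => f x - g x) := by
  simpa [sub_eq_add_neg] using hf.add hg.neg

lemma sum {ι : Type*} (s : Finset ι) {f : ι → E → ℂ} (hf : ∀ i ∈ s, IsCcSmooth (f i)) :
    IsCcSmooth (fun x => ∑ i ∈ s, f i x) := by
  classical
  induction s using Finset.induction_on with
  | empty => exact ⟨contDiff_const, HasCompactSupport.zero⟩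
  | insert i s hi ih =>
    simp only [Finset.sum_insert hi]
    exact (hf i (Finset.mem_insert_self i s)).add
      (ih fun j hj => hf j (Finset.mem_insert_of_mem hj))

lemma star (hf : IsCcSmooth f) : IsCcSmooth (fun x => conj (f x)) :=
  ⟨conjCLE.contDiff.comp hf.contDiff,
    hf.hasCompactSupport.comp_left (g := starRingEnd ℂ) (map_zero _)⟩

lemma dirDeriv (v : E × E) (hf : IsCcSmooth f) : IsCcSmooth (dirDeriv v f) :=
  ⟨contDiff_dirDeriv v hf.contDiff (by simp), hasCompactSupport_dirDeriv v hf.hasCompactSupport⟩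

variable [MeasurableSpace E] [OpensMeasurableSpace E] {μ : Measure E}

lemma integrable_mul (hf : IsCcSmooth f) (hg : LocallyIntegrable g μ) :
    Integrable (fun x => g x * f x) μ := by
  simpa only [smul_eq_mul, mul_comm] using
    hg.integrable_smul_left_of_hasCompactSupport hf.continuous hf.hasCompactSupport

lemma memLp_mul (hf : IsCcSmooth f) (hg : MemLp g 2 μ) : MemLp (fun x => f x * g x) 2 μ := by
  obtain ⟨C, hC⟩ := hf.hasCompactSupport.exists_bound_of_continuous hf.continuous
  exact hg.of_le_mul (c := C) (hf.continuous.aestronglyMeasurable.mul hg.1) (.of_forall fun x => by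
    rw [norm_mul]
    gcongr
    exact hC x)

variable [IsFiniteMeasureOnCompacts μ]

lemma integrable (hf : IsCcSmooth f) : Integrable f μ :=
  hf.continuous.integrable_of_hasCompactSupport hf.hasCompactSupport

lemma memLp_two (hf : IsCcSmooth f) : MemLp f 2 μ :=
  hf.continuous.memLp_of_hasCompactSupport hf.hasCompactSupport

end IsCcSmooth

variable [FiniteDimensional ℝ E] [MeasurableSpace E] [BorelSpace E] {μ : Measure E}
  [μ.IsAddHaarMeasure]

theorem integral_mul_dirDeriv_eq_neg_dirDeriv_mul (v : E × E) (hf : ContDiff ℝ 1 f)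
    (hg : ContDiff ℝ 1 g) (hgc : HasCompactSupport g) :
    ∫ x, f x * dirDeriv v g x ∂μ = -∫ x, dirDeriv v f x * g x ∂μ := by
  have hf' (a : E) : Continuous fun x => fderiv ℝ f x a :=
    (hf.continuous_fderiv one_ne_zero).clm_apply continuous_const
  have hg' (a : E) : Continuous fun x => fderiv ℝ g x a :=
    (hg.continuous_fderiv one_ne_zero).clm_apply continuous_const
  have hint₁ (a : E) : Integrable (fun x => fderiv ℝ f x a * g x) μ :=
    ((hf' a).mul hg.continuous).integrable_of_hasCompactSupport hgc.mul_left
  have hint₂ (a : E) : Integrable (fun x => f x * fderiv ℝ g x a) μ :=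
    (hf.continuous.mul (hg' a)).integrable_of_hasCompactSupport
      (hgc.fderiv_apply (𝕜 := ℝ) a).mul_left
  have hparts (a : E) : ∫ x, f x * fderiv ℝ g x a ∂μ = -∫ x, fderiv ℝ f x a * g x ∂μ :=
    integral_mul_fderiv_eq_neg_fderiv_mul_of_integrable (hint₁ a) (hint₂ a)
      ((hf.continuous.mul hg.continuous).integrable_of_hasCompactSupport hgc.mul_left)
      (fun x _ => hf.differentiable one_ne_zero x) (fun x _ => hg.differentiable one_ne_zero x)
  calc ∫ x, f x * dirDeriv v g x ∂μ
      = ∫ x, (f x * fderiv ℝ g x v.1 + I * (f x * fderiv ℝ g x v.2)) ∂μ := by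
        refine integral_congr_ae (.of_forall fun x => ?_)
        simp only [dirDeriv]
        ring
    _ = -(∫ x, fderiv ℝ f x v.1 * g x ∂μ + I * ∫ x, fderiv ℝ f x v.2 * g x ∂μ) := by
        rw [integral_add (hint₂ _) ((hint₂ _).const_mul I), integral_const_mul, hparts, hparts]
        ring
    _ = -∫ x, dirDeriv v f x * g x ∂μ := by
        rw [← integral_const_mul, ← integral_add (hint₁ _) ((hint₁ _).const_mul I)]
        refine congrArg Neg.neg (integral_congr_ae (.of_forall fun x => ?_))
        simp only [dirDeriv]
        ring

end ComplexDirections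

section WeightedDerivatives

variable {E : Type*} [NormedAddCommGroup E] [NormedSpace ℝ E]

/-- The weighted derivative `e^{-Φ} ∂_v (e^Φ f)` in a complexified direction. -/
noncomputable def wderiv (Φ : E → ℝ) (v : E × E) (f : E → ℂ) (x : E) : ℂ :=
  dirDeriv v f x + dirDeriv v (fun y => (Φ y : ℂ)) x * f x

/-- The complex Hessian of `Φ` along the complex vector fields `v j`, as a Hermitian form. -/
noncomputable def leviForm {ι : Type*} [Fintype ι] (Φ : E → ℝ) (v : ι → E × E) (x : E)
    (ξ : ι → ℂ) : ℂ :=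
  ∑ j, ∑ k, dirDeriv (v j) (dirDeriv (conjDir (v k)) fun y => (Φ y : ℂ)) x * (ξ k * conj (ξ j))

/-- The complex linear combination `∑ j, ξ j • v j` of complexified directions. -/
def dirComb {ι : Type*} [Fintype ι] (ξ : ι → ℂ) (v : ι → E × E) : E × E :=
  (∑ j, ((ξ j).re • (v j).1 - (ξ j).im • (v j).2), ∑ j, ((ξ j).re • (v j).2 + (ξ j).im • (v j).1))

variable {ι : Type*} [Fintype ι] {Φ : E → ℝ} {f g : E → ℂ} {v w : E × E}

@[simp]
lemma wderiv_zero (v : E × E) (f : E → ℂ) : wderiv 0 v f = dirDeriv v f := by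
  funext x
  simp [wderiv, dirDeriv_const]

lemma contDiff_ofReal_comp {m : WithTop ℕ∞} (hΦ : ContDiff ℝ m Φ) :
    ContDiff ℝ m fun y => (Φ y : ℂ) :=
  ofRealCLM.contDiff.comp hΦ

lemma contDiff_wderiv {m k : WithTop ℕ∞} (hΦ : ContDiff ℝ m Φ) (v : E × E) (hf : ContDiff ℝ m f)
    (h : k + 1 ≤ m) : ContDiff ℝ k (wderiv Φ v f) :=
  (contDiff_dirDeriv v hf h).add ((contDiff_dirDeriv v (contDiff_ofReal_comp hΦ) h).mul
    (hf.of_le (le_self_add.trans h)))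

lemma hasCompactSupport_wderiv (Φ : E → ℝ) (v : E × E) (hf : HasCompactSupport f) :
    HasCompactSupport (wderiv Φ v f) :=
  (hasCompactSupport_dirDeriv v hf).add hf.mul_left

lemma IsCcSmooth.wderiv (hΦ : ContDiff ℝ ∞ Φ) (v : E × E) (hf : IsCcSmooth f) :
    IsCcSmooth (wderiv Φ v f) :=
  (hf.dirDeriv v).add
    (hf.mul_left (contDiff_dirDeriv v (contDiff_ofReal_comp hΦ) (by simp)))

lemma conj_wderiv (Φ : E → ℝ) (v : E × E) (f : E → ℂ) (x : E) :
    conj (wderiv Φ v f x) = wderiv Φ (conjDir v) (fun y => conj (f y)) x := by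
  simp only [wderiv, map_add, map_mul, conj_dirDeriv, conj_ofReal]

lemma dirDeriv_neg_ofReal (v : E × E) (Φ : E → ℝ) (x : E) :
    dirDeriv v (fun y => ((-Φ) y : ℂ)) x = -dirDeriv v (fun y => (Φ y : ℂ)) x := by
  simp [dirDeriv_neg]

lemma dirDeriv_dirDeriv_ofReal (v w : E × E) (hΦ : ContDiff ℝ 2 Φ) (x : E) :
    dirDeriv v (dirDeriv w fun y => (Φ y : ℂ)) x =
      fderiv ℝ (fderiv ℝ Φ) x v.1 w.1 - fderiv ℝ (fderiv ℝ Φ) x v.2 w.2 +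
        I * (fderiv ℝ (fderiv ℝ Φ) x v.2 w.1 + fderiv ℝ (fderiv ℝ Φ) x v.1 w.2) := by
  have hfst : fderiv ℝ (fun y => (Φ y : ℂ)) = fun y => ofRealCLM ∘L fderiv ℝ Φ y :=
    funext fun y => (ofRealCLM.hasFDerivAt.comp y
      (hΦ.differentiable two_ne_zero y).hasFDerivAt).fderiv
  have hsnd : fderiv ℝ (fderiv ℝ (fun y => (Φ y : ℂ))) x =
      (ContinuousLinearMap.compL ℝ E ℝ ℂ ofRealCLM) ∘L fderiv ℝ (fderiv ℝ Φ) x := by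
    rw [hfst]
    exact ((ContinuousLinearMap.compL ℝ E ℝ ℂ ofRealCLM).hasFDerivAt.comp x
      ((hΦ.fderiv_right (m := 1) (by norm_num)).differentiable one_ne_zero x).hasFDerivAt).fderiv
  rw [dirDeriv_dirDeriv_eq_fderiv_fderiv v w (contDiff_ofReal_comp hΦ), hsnd]
  rfl

lemma wderiv_wderiv {Ψ : E → ℝ} (hΦ : ContDiff ℝ 2 Φ) (v w : E × E) (hf : ContDiff ℝ 2 f) (x : E) :
    wderiv Ψ v (wderiv Φ w f) x = dirDeriv v (dirDeriv w f) x +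
      dirDeriv v (dirDeriv w fun y => (Φ y : ℂ)) x * f x +
      dirDeriv w (fun y => (Φ y : ℂ)) x * dirDeriv v f x +
      dirDeriv v (fun y => (Ψ y : ℂ)) x *
        (dirDeriv w f x + dirDeriv w (fun y => (Φ y : ℂ)) x * f x) := by
  have hd {g : E → ℂ} (hg : ContDiff ℝ 2 g) : DifferentiableAt ℝ (dirDeriv w g) x :=
    (contDiff_dirDeriv w hg (k := 1) (by norm_num)).differentiable one_ne_zero x
  have hf' := hf.differentiable two_ne_zero x
  have hΦ' := hd (contDiff_ofReal_comp hΦ)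
  have h : dirDeriv v (wderiv Φ w f) x = _ :=
    (dirDeriv_add v (hd hf) (hΦ'.fun_mul hf')).trans (congrArg _ (dirDeriv_mul v hΦ' hf'))
  simp only [wderiv] at h ⊢
  rw [h, ← add_assoc]

lemma wderiv_wderiv_comm (hΦ : ContDiff ℝ 2 Φ) (v w : E × E) (hf : ContDiff ℝ 2 f) (x : E) :
    wderiv Φ v (wderiv Φ w f) x = wderiv Φ w (wderiv Φ v f) x := by
  rw [wderiv_wderiv hΦ v w hf, wderiv_wderiv hΦ w v hf, dirDeriv_comm v w hf,
    dirDeriv_comm v w (contDiff_ofReal_comp hΦ)]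
  ring

lemma wderiv_wderiv_neg (hΦ : ContDiff ℝ 2 Φ) (v w : E × E) (hf : ContDiff ℝ 2 f) (x : E) :
    wderiv Φ v (wderiv (-Φ) w f) x = wderiv (-Φ) w (wderiv Φ v f) x -
      2 * dirDeriv v (dirDeriv w fun y => (Φ y : ℂ)) x * f x := by
  have hneg : dirDeriv v (dirDeriv w fun y => ((-Φ) y : ℂ)) x =
      -dirDeriv v (dirDeriv w fun y => (Φ y : ℂ)) x := by
    rw [funext (dirDeriv_neg_ofReal w Φ)]
    exact dirDeriv_neg v _ x
  rw [wderiv_wderiv (Φ := -Φ) hΦ.neg v w hf, wderiv_wderiv hΦ w v hf, hneg, dirDeriv_neg_ofReal,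
    dirDeriv_comm v w hf, dirDeriv_comm w v (contDiff_ofReal_comp hΦ)]
  ring

lemma re_leviForm_eq_fderiv_fderiv (hΦ : ContDiff ℝ 2 Φ) (v : ι → E × E) (x : E) (ξ : ι → ℂ) :
    (leviForm Φ v x ξ).re =
      fderiv ℝ (fderiv ℝ Φ) x (dirComb (conj ξ) v).1 (dirComb (conj ξ) v).1 +
        fderiv ℝ (fderiv ℝ Φ) x (dirComb (conj ξ) v).2 (dirComb (conj ξ) v).2 := by
  simp only [leviForm, dirComb, re_sum, map_sum, sum_apply, ← Finset.sum_add_distrib]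
  refine Finset.sum_comm.trans
    (Finset.sum_congr rfl fun k _ => Finset.sum_congr rfl fun j _ => ?_)
  rw [dirDeriv_dirDeriv_ofReal _ _ hΦ]
  simp [conjDir]
  ring

variable [FiniteDimensional ℝ E] [MeasurableSpace E] [BorelSpace E] {μ : Measure E}
  [μ.IsAddHaarMeasure]

theorem integral_mul_wderiv_eq_neg (hΦ : ContDiff ℝ 1 Φ) (v : E × E) (hf : ContDiff ℝ 1 f)
    (hg : ContDiff ℝ 1 g) (hgc : HasCompactSupport g) :
    ∫ x, f x * wderiv Φ v g x ∂μ = -∫ x, wderiv (-Φ) v f x * g x ∂μ := by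
  have hint {h k : E → ℂ} (hh : Continuous h) (hk : Continuous k) (hkc : HasCompactSupport k) :
      Integrable (fun x => h x * k x) μ :=
    (hh.mul hk).integrable_of_hasCompactSupport hkc.mul_left
  have hw {Ψ : E → ℝ} {h : E → ℂ} (hΨ : ContDiff ℝ 1 Ψ) (hh : ContDiff ℝ 1 h) :
      Continuous (wderiv Ψ v h) :=
    (contDiff_wderiv hΨ v hh (k := 0) (by norm_num)).continuous
  rw [eq_neg_iff_add_eq_zero, ← integral_add (hint hf.continuous (hw hΦ hg)
      (hasCompactSupport_wderiv Φ v hgc)) (hint (hw (Ψ := -Φ) hΦ.neg hf) hg.continuous hgc)]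
  calc ∫ x, (f x * wderiv Φ v g x + wderiv (-Φ) v f x * g x) ∂μ
      = ∫ x, (f x * dirDeriv v g x + dirDeriv v f x * g x) ∂μ := by
        refine integral_congr_ae (.of_forall fun x => ?_)
        simp only [wderiv, dirDeriv_neg_ofReal]
        ring
    _ = 0 := by
        rw [integral_add (hint hf.continuous (continuous_dirDeriv v hg)
            (hasCompactSupport_dirDeriv v hgc)) (hint (continuous_dirDeriv v hf) hg.continuous hgc),
          integral_mul_dirDeriv_eq_neg_dirDeriv_mul v hf hg hgc, neg_add_cancel]

lemma integral_conj_mul_wderiv_eq_neg (hΦ : ContDiff ℝ ∞ Φ) (v : E × E) (hf : IsCcSmooth f)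
    (hg : IsCcSmooth g) :
    ∫ x, conj (f x) * wderiv Φ v g x ∂μ =
      -∫ x, conj (wderiv (-Φ) (conjDir v) f x) * g x ∂μ := by
  simp only [conj_wderiv, conjDir_conjDir]
  exact integral_mul_wderiv_eq_neg (hΦ.of_le (by simp)) v (hf.star.contDiff.of_le (by simp))
    (hg.contDiff.of_le (by simp)) hg.hasCompactSupport

end WeightedDerivatives

section SmoothEstimate

variable {E : Type*} [NormedAddCommGroup E] [NormedSpace ℝ E]
  {ι : Type*} [Fintype ι] {Φ : E → ℝ} {χ : ι → E → ℂ}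

lemma isCcSmooth_hessian_mul (hΦ : ContDiff ℝ ∞ Φ) (v w : E × E) {f : E → ℂ}
    (hf : IsCcSmooth f) :
    IsCcSmooth fun x => dirDeriv v (dirDeriv w fun y => (Φ y : ℂ)) x * f x :=
  hf.mul_left (contDiff_dirDeriv v (m := ∞)
    (contDiff_dirDeriv w (m := ∞) (contDiff_ofReal_comp hΦ) (by simp)) (by simp))

lemma isCcSmooth_cross_add_leviForm (v : ι → E × E) (hΦ : ContDiff ℝ ∞ Φ)
    (hχ : ∀ j, IsCcSmooth (χ j)) :
    IsCcSmooth fun x => ∑ j, ∑ k, conj (wderiv Φ (v k) (χ j) x) * wderiv Φ (v j) (χ k) x +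
      2 * leviForm Φ v x fun j => χ j x :=
  .add (.sum _ fun j _ => .sum _ fun k _ =>
      ((hχ k).wderiv hΦ _).mul_left ((hχ j).wderiv hΦ _).star.contDiff)
    (.mul_left (.sum _ fun j _ => .sum _ fun k _ =>
      isCcSmooth_hessian_mul hΦ _ _ ((hχ j).star.mul_left (hχ k).contDiff)) contDiff_const)

variable [FiniteDimensional ℝ E] [MeasurableSpace E] [BorelSpace E] {μ : Measure E}
  [μ.IsAddHaarMeasure]

/-- Moving both operators across and exchanging them produces the commutator `2 ∂_v ∂_w̄ Φ`. -/
lemma integral_conj_wderiv_neg_mul_wderiv_neg (hΦ : ContDiff ℝ ∞ Φ) (v w : E × E) {f g : E → ℂ}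
    (hf : IsCcSmooth f) (hg : IsCcSmooth g) :
    ∫ x, conj (wderiv (-Φ) (conjDir v) f x) * wderiv (-Φ) (conjDir w) g x ∂μ =
      ∫ x, (conj (wderiv Φ w f x) * wderiv Φ v g x +
        2 * (dirDeriv v (dirDeriv (conjDir w) fun y => (Φ y : ℂ)) x * (g x * conj (f x)))) ∂μ := by
  have hΦ' : ContDiff ℝ ∞ (-Φ) := hΦ.neg
  have hgv := hg.wderiv hΦ v
  have hH : IsCcSmooth fun x => 2 *
      (dirDeriv v (dirDeriv (conjDir w) fun y => (Φ y : ℂ)) x * (g x * conj (f x))) :=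
    (isCcSmooth_hessian_mul hΦ v _ (hf.star.mul_left hg.contDiff)).mul_left contDiff_const
  have hδ : Integrable (fun x => conj (f x) * wderiv (-Φ) (conjDir w) (wderiv Φ v g) x) μ :=
    ((hgv.wderiv hΦ' (conjDir w)).mul_left hf.star.contDiff).integrable
  have hadj := integral_conj_mul_wderiv_eq_neg (μ := μ) hΦ' (conjDir w) hf hgv
  rw [neg_neg, conjDir_conjDir] at hadj
  calc ∫ x, conj (wderiv (-Φ) (conjDir v) f x) * wderiv (-Φ) (conjDir w) g x ∂μ
      = -∫ x, conj (f x) * wderiv Φ v (wderiv (-Φ) (conjDir w) g) x ∂μ := by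
        rw [integral_conj_mul_wderiv_eq_neg hΦ v hf (hg.wderiv hΦ' _), neg_neg]
    _ = -∫ x, (conj (f x) * wderiv (-Φ) (conjDir w) (wderiv Φ v g) x - 2 *
          (dirDeriv v (dirDeriv (conjDir w) fun y => (Φ y : ℂ)) x * (g x * conj (f x)))) ∂μ := by
        refine congrArg Neg.neg (integral_congr_ae (.of_forall fun x => ?_))
        dsimp only
        rw [wderiv_wderiv_neg (contDiff_infty.mp hΦ 2) v _ (contDiff_infty.mp hg.contDiff 2)]
        ring
    _ = _ := by
        rw [integral_sub hδ hH.integrable, hadj, sub_eq_add_neg, neg_add, neg_neg, neg_neg,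
          integral_add ((hgv.mul_left (hf.wderiv hΦ w).star.contDiff).integrable) hH.integrable]

/-- The Bochner–Kodaira identity. -/
lemma integral_norm_sq_sum_wderiv_neg (v : ι → E × E) (hΦ : ContDiff ℝ ∞ Φ)
    (hχ : ∀ j, IsCcSmooth (χ j)) :
    ((∫ x, ‖∑ j, wderiv (-Φ) (conjDir (v j)) (χ j) x‖ ^ 2 ∂μ : ℝ) : ℂ) =
      ∫ x, (∑ j, ∑ k, conj (wderiv Φ (v k) (χ j) x) * wderiv Φ (v j) (χ k) x +
        2 * leviForm Φ v x fun j => χ j x) ∂μ := by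
  have hΦ' : ContDiff ℝ ∞ (-Φ) := hΦ.neg
  have hδ (j k) : IsCcSmooth fun x => conj (wderiv (-Φ) (conjDir (v j)) (χ j) x) *
      wderiv (-Φ) (conjDir (v k)) (χ k) x :=
    ((hχ k).wderiv hΦ' _).mul_left ((hχ j).wderiv hΦ' _).star.contDiff
  have hterm (j k) : IsCcSmooth fun x => conj (wderiv Φ (v k) (χ j) x) * wderiv Φ (v j) (χ k) x +
      2 * (dirDeriv (v j) (dirDeriv (conjDir (v k)) fun y => (Φ y : ℂ)) x *
        (χ k x * conj (χ j x))) :=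
    (((hχ k).wderiv hΦ _).mul_left ((hχ j).wderiv hΦ _).star.contDiff).add
      ((isCcSmooth_hessian_mul hΦ _ _ ((hχ j).star.mul_left (hχ k).contDiff)).mul_left
        contDiff_const)
  have hsum {T : ι → ι → E → ℂ} (hT : ∀ j k, IsCcSmooth (T j k)) :
      ∫ x, ∑ j, ∑ k, T j k x ∂μ = ∑ j, ∑ k, ∫ x, T j k x ∂μ := by
    rw [integral_finsetSum _ fun j _ => (IsCcSmooth.sum _ fun k _ => hT j k).integrable]
    exact Finset.sum_congr rfl fun j _ => integral_finsetSum _ fun k _ => (hT j k).integrable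
  simp only [leviForm, Finset.mul_sum, ← Finset.sum_add_distrib]
  rw [← integral_complex_ofReal, hsum hterm]
  simp only [ofReal_pow, ← conj_mul', map_sum, Finset.sum_mul_sum]
  rw [hsum hδ]
  exact Finset.sum_congr rfl fun j _ => Finset.sum_congr rfl fun k _ =>
    integral_conj_wderiv_neg_mul_wderiv_neg hΦ (v j) (v k) (hχ j) (hχ k)

lemma half_sum_norm_sub_sq (a : ι → ι → ℂ) :
    1 / 2 * ∑ j, ∑ k, ‖a j k - a k j‖ ^ 2 =
      ∑ j, ∑ k, ‖a j k‖ ^ 2 - ∑ j, ∑ k, (conj (a k j) * a j k).re := by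
  have hexp (z w : ℂ) : ‖z - w‖ ^ 2 = ‖z‖ ^ 2 + ‖w‖ ^ 2 - 2 * (conj w * z).re := by
    simp only [← normSq_eq_norm_sq, normSq_sub, mul_comm (conj w)]
  have hswap : ∑ j, ∑ k, ‖a k j‖ ^ 2 = ∑ j, ∑ k, ‖a j k‖ ^ 2 := Finset.sum_comm
  simp only [hexp, Finset.sum_add_distrib, Finset.sum_sub_distrib, ← Finset.mul_sum, hswap]
  ring

theorem integral_norm_sq_le_of_smooth {v : ι → E × E} (hΦ : ContDiff ℝ ∞ Φ)
    (hχ : ∀ j, IsCcSmooth (χ j)) (hlevi : ∀ x ξ, ∑ j, ‖ξ j‖ ^ 2 ≤ 2 * (leviForm Φ v x ξ).re) :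
    ∫ x, ∑ j, ‖χ j x‖ ^ 2 ∂μ ≤
      ∫ x, ‖∑ j, wderiv (-Φ) (conjDir (v j)) (χ j) x‖ ^ 2 ∂μ +
        1 / 2 * ∫ x, ∑ j, ∑ k, ‖wderiv Φ (v j) (χ k) x - wderiv Φ (v k) (χ j) x‖ ^ 2 ∂μ := by
  have hcurl : Integrable (fun x => ∑ j, ∑ k,
      ‖wderiv Φ (v j) (χ k) x - wderiv Φ (v k) (χ j) x‖ ^ 2) μ :=
    integrable_finsetSum _ fun j _ => integrable_finsetSum _ fun k _ =>
      (((hχ k).wderiv hΦ _).sub ((hχ j).wderiv hΦ _)).memLp_two.integrable_norm_pow two_ne_zero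
  have hint := (isCcSmooth_cross_add_leviForm v hΦ hχ).integrable (μ := μ)
  rw [← ofReal_re (∫ x, ‖∑ j, wderiv (-Φ) (conjDir (v j)) (χ j) x‖ ^ 2 ∂μ),
    integral_norm_sq_sum_wderiv_neg v hΦ hχ, ← reCLM_apply, ← reCLM.integral_comp_comm hint,
    ← integral_const_mul, ← integral_add (reCLM.integrable_comp hint) (hcurl.const_mul _)]
  refine integral_mono (integrable_finsetSum _ fun j _ =>
    (hχ j).memLp_two.integrable_norm_pow two_ne_zero)
    ((reCLM.integrable_comp hint).add (hcurl.const_mul _)) fun x => ?_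
  have hsq : 0 ≤ ∑ j, ∑ k, ‖wderiv Φ (v j) (χ k) x‖ ^ 2 := by positivity
  have hhalf := half_sum_norm_sub_sq fun j k => wderiv Φ (v j) (χ k) x
  have hre : (2 * leviForm Φ v x fun j => χ j x).re = 2 * (leviForm Φ v x fun j => χ j x).re :=
    re_ofReal_mul 2 _
  simp only [reCLM_apply, add_re, re_sum, hre, hhalf]
  linarith [hlevi x fun j => χ j x]

end SmoothEstimate

section Mollification

open scoped Convolution

variable {E : Type*} [NormedAddCommGroup E] [NormedSpace ℝ E] [HasContDiffBump E]
  [MeasurableSpace E]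

/-- The convolution of `g` with the normalised bump function `φ`. -/
noncomputable def mollify (μ : Measure E) (φ : ContDiffBump (0 : E)) (g : E → ℂ) : E → ℂ :=
  g ⋆[(ContinuousLinearMap.lsmul ℝ ℝ).flip, μ] φ.normed μ

/-- The mollifier `φ` recentred at `x` and reflected, as a complex-valued test function. -/
noncomputable def bumpAt (μ : Measure E) (φ : ContDiffBump (0 : E)) (x y : E) : ℂ :=
  (φ.normed μ (x - y) : ℂ)

variable {μ : Measure E} {φ : ContDiffBump (0 : E)} {g : E → ℂ} {x : E}

lemma mollify_apply (μ : Measure E) (φ : ContDiffBump (0 : E)) (g : E → ℂ) (x : E) :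
    mollify μ φ g x = ∫ y, g y * bumpAt μ φ x y ∂μ :=
  integral_congr_ae (.of_forall fun y => by
    simp [bumpAt, mul_comm])

lemma mollify_neg (μ : Measure E) (φ : ContDiffBump (0 : E)) (g : E → ℂ) :
    mollify μ φ (fun x => -g x) = fun x => -mollify μ φ g x :=
  funext fun x => by simp only [mollify_apply, neg_mul, integral_neg]

lemma contDiff_bumpAt (μ : Measure E) (φ : ContDiffBump (0 : E)) (x : E) :
    ContDiff ℝ ∞ (bumpAt μ φ x) :=
  contDiff_ofReal_comp (φ.contDiff_normed.comp (contDiff_const.sub contDiff_id))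

lemma dirDeriv_bumpAt (v : E × E) (x y : E) :
    dirDeriv v (bumpAt μ φ x) y =
      -(fderiv ℝ (φ.normed μ) (x - y) v.1 + I * fderiv ℝ (φ.normed μ) (x - y) v.2) := by
  have hd : HasFDerivAt (fun y => φ.normed μ (x - y))
      (fderiv ℝ (φ.normed μ) (x - y) ∘L (-ContinuousLinearMap.id ℝ E)) y :=
    ((φ.contDiff_normed (n := 1)).differentiable (by simp) (x - y)).hasFDerivAt.comp y
      ((hasFDerivAt_id y).const_sub x)
  refine (dirDeriv_ofReal v hd.differentiableAt).trans ?_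
  simp only [hd.fderiv, ContinuousLinearMap.comp_apply, neg_apply, ContinuousLinearMap.id_apply,
    map_neg, ofReal_neg]
  ring

variable [BorelSpace E] [FiniteDimensional ℝ E] [μ.IsAddHaarMeasure]

lemma tsupport_bumpAt_subset (μ : Measure E) [μ.IsAddHaarMeasure] (φ : ContDiffBump (0 : E))
    (x : E) : tsupport (bumpAt μ φ x) ⊆ Metric.closedBall x φ.rOut := by
  refine closure_minimal (fun y hy => ?_) Metric.isClosed_closedBall
  have : x - y ∈ Metric.ball 0 φ.rOut := by
    rw [← φ.support_normed_eq (μ := μ)]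
    simpa [bumpAt] using hy
  rw [mem_ball_zero_iff] at this
  exact Metric.mem_closedBall'.mpr (dist_eq_norm x y ▸ this.le)

lemma isCcSmooth_bumpAt (μ : Measure E) [μ.IsAddHaarMeasure] (φ : ContDiffBump (0 : E)) (x : E) :
    IsCcSmooth (bumpAt μ φ x) :=
  ⟨contDiff_bumpAt μ φ x, .of_support_subset_isCompact (isCompact_closedBall x φ.rOut)
    ((subset_tsupport _).trans (tsupport_bumpAt_subset μ φ x))⟩

lemma contDiff_mollify (φ : ContDiffBump (0 : E)) (hg : LocallyIntegrable g μ) :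
    ContDiff ℝ ∞ (mollify μ φ g) :=
  φ.hasCompactSupport_normed.contDiff_convolution_right _ hg φ.contDiff_normed

lemma mollify_eq_zero {K : Set E} (hg : ∀ y ∉ K, g y = 0) (hx : x ∉ Metric.cthickening φ.rOut K) :
    mollify μ φ g x = 0 := by
  rw [mollify_apply]
  refine integral_eq_zero_of_ae (.of_forall fun y => ?_)
  by_cases hy : y ∈ K
  · have : bumpAt μ φ x y = 0 := by
      by_contra h
      exact hx (Metric.mem_cthickening_of_dist_le x y _ _ hy
        (Metric.mem_closedBall'.mp (tsupport_bumpAt_subset μ φ x (subset_tsupport _ h))))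
    simp [this]
  · simp [hg y hy]

lemma fderiv_mollify_apply (φ : ContDiffBump (0 : E)) (hg : LocallyIntegrable g μ) (x a : E) :
    fderiv ℝ (mollify μ φ g) x a = ∫ y, g y * fderiv ℝ (φ.normed μ) (x - y) a ∂μ := by
  rw [mollify, (φ.hasCompactSupport_normed.hasFDerivAt_convolution_right _ hg
      φ.contDiff_normed x).fderiv, convolution_precompR_apply _ hg
      (φ.hasCompactSupport_normed.fderiv (𝕜 := ℝ))
      (φ.contDiff_normed.continuous_fderiv (n := 1) one_ne_zero)]
  refine integral_congr_ae (.of_forall fun y => ?_)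
  simp [mul_comm]

theorem dirDeriv_mollify (v : E × E) (φ : ContDiffBump (0 : E)) (hg : LocallyIntegrable g μ)
    (x : E) : dirDeriv v (mollify μ φ g) x = -∫ y, g y * dirDeriv v (bumpAt μ φ x) y ∂μ := by
  have hint (a : E) : Integrable (fun y => g y * fderiv ℝ (φ.normed μ) (x - y) a) μ := by
    have hcont : Continuous fun y => (fderiv ℝ (φ.normed μ) y a : ℂ) := continuous_ofReal.comp
      ((φ.contDiff_normed.continuous_fderiv (n := 1) one_ne_zero).clm_apply continuous_const)
    exact ((φ.hasCompactSupport_normed.fderiv_apply (𝕜 := ℝ) a).comp_left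
      (g := ((↑) : ℝ → ℂ)) ofReal_zero).convolutionExists_right
        (ContinuousLinearMap.mul ℝ ℂ) hg hcont x
  rw [dirDeriv, fderiv_mollify_apply φ hg, fderiv_mollify_apply φ hg, ← integral_const_mul,
    ← integral_add (hint _) ((hint _).const_mul I), ← integral_neg]
  refine integral_congr_ae (.of_forall fun y => ?_)
  simp only [dirDeriv_bumpAt]
  ring

end Mollification

section MollificationLp

variable {α F : Type*} [MeasurableSpace α] [NormedAddCommGroup F] [NormedSpace ℝ F]

lemma enorm_integral_rpow_le_lintegral {ν : Measure α} [IsProbabilityMeasure ν] {f : α → F}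
    (hf : AEStronglyMeasurable f ν) {r : ℝ} (hr : 1 ≤ r) :
    ‖∫ t, f t ∂ν‖ₑ ^ r ≤ ∫⁻ t, ‖f t‖ₑ ^ r ∂ν := by
  have hr0 : 0 < r := zero_lt_one.trans_le hr
  have h := (enorm_integral_le_lintegral_enorm f).trans (eLpNorm_one_eq_lintegral_enorm.ge.trans
    (eLpNorm_le_eLpNorm_of_exponent_le (q := ENNReal.ofReal r) (by simpa using hr) hf))
  rw [eLpNorm_eq_lintegral_rpow_enorm_toReal (by simpa using hr0) ENNReal.ofReal_ne_top,
    ENNReal.toReal_ofReal hr0.le, one_div] at h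
  exact (ENNReal.le_rpow_inv_iff hr0).mp h

variable {E : Type*} [NormedAddCommGroup E] [NormedSpace ℝ E] [FiniteDimensional ℝ E]
  [MeasurableSpace E] [BorelSpace E] {μ : Measure E} [μ.IsAddHaarMeasure]
  {p : ℝ≥0∞}

theorem tendsto_eLpNorm_comp_sub_sub {F : Type*} [NormedAddCommGroup F] {g : E → F} (hp : 1 ≤ p)
    (hp' : p ≠ ⊤) (hg : MemLp g p μ) :
    Filter.Tendsto (fun t => eLpNorm (fun x => g (x - t) - g x) p μ) (nhds 0) (nhds 0) := by
  have : Fact (1 ≤ p) := ⟨hp⟩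
  let τ (t : E) : C(E, E) := ⟨fun x => x - t, continuous_id.sub continuous_const⟩
  have hτ (t : E) : MeasurePreserving (τ t) μ μ := measurePreserving_sub_right μ t
  have hcont : Continuous τ := ContinuousMap.continuous_of_continuous_uncurry _
    (continuous_snd.sub continuous_fst)
  have h := (tendsto_const_nhds (x := hg.toLp g)).compMeasurePreservingLp (hcont.tendsto 0) hτ
    (hτ 0) hp'
  have h0 : Lp.compMeasurePreserving (τ 0) (hτ 0) (hg.toLp g) = hg.toLp g :=
    MemLp.toLp_congr (hg.comp_measurePreserving (hτ 0)) hg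
      (.of_forall fun x => congrArg g (sub_zero x))
  rw [h0] at h
  exact (Lp.tendsto_Lp_iff_tendsto_eLpNorm'' _ (fun t => hg.comp_measurePreserving (hτ t)) g hg).mp
    h

/-- The probability measure with density `φ.normed μ`. -/
noncomputable def bumpMeasure (μ : Measure E) (φ : ContDiffBump (0 : E)) : Measure E :=
  μ.withDensity fun t => .ofReal (φ.normed μ t)

instance (φ : ContDiffBump (0 : E)) : IsProbabilityMeasure (bumpMeasure μ φ) :=
  ⟨by rw [bumpMeasure, withDensity_apply _ .univ, setLIntegral_univ,
    ← ofReal_integral_eq_lintegral_ofReal φ.integrable_normed (.of_forall φ.nonneg_normed),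
    φ.integral_normed, ENNReal.ofReal_one]⟩

lemma bumpMeasure_compl_ball (φ : ContDiffBump (0 : E)) :
    bumpMeasure μ φ (Metric.ball 0 φ.rOut)ᶜ = 0 := by
  rw [bumpMeasure, withDensity_apply _ Metric.isOpen_ball.measurableSet.compl,
    setLIntegral_congr_fun Metric.isOpen_ball.measurableSet.compl (g := 0) fun t ht => ?_,
    Pi.zero_def, lintegral_zero]
  rw [← φ.support_normed_eq (μ := μ)] at ht
  simp [Function.notMem_support.mp ht]

lemma integrable_comp_sub_bumpMeasure (φ : ContDiffBump (0 : E)) {g : E → ℂ}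
    (hg : LocallyIntegrable g μ) (x : E) :
    Integrable (fun t => g (x - t)) (bumpMeasure μ φ) := by
  rw [bumpMeasure, integrable_withDensity_iff_integrable_smul₀'
    φ.continuous_normed.measurable.ennreal_ofReal.aemeasurable (by simp)]
  have hconv : ConvolutionExistsAt (φ.normed μ) g x (.lsmul ℝ ℝ) μ :=
    φ.hasCompactSupport_normed.convolutionExists_left _ φ.continuous_normed hg x
  simpa [ConvolutionExistsAt, ENNReal.toReal_ofReal, φ.nonneg_normed] using hconv

lemma mollify_eq_integral_bumpMeasure (φ : ContDiffBump (0 : E)) (g : E → ℂ) (x : E) :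
    mollify μ φ g x = ∫ t, g (x - t) ∂bumpMeasure μ φ := by
  rw [bumpMeasure, integral_withDensity_eq_integral_toReal_smul
    φ.continuous_normed.measurable.ennreal_ofReal (by simp), mollify_apply,
    ← integral_sub_left_eq_self _ μ x]
  refine integral_congr_ae (.of_forall fun t => ?_)
  simp [bumpAt, ENNReal.toReal_ofReal, φ.nonneg_normed, mul_comm]

theorem eLpNorm_mollify_sub_le (hp : 1 ≤ p) (hp' : p ≠ ⊤) {g : E → ℂ} (hg : LocallyIntegrable g μ)
    (φ : ContDiffBump (0 : E)) {C : ℝ≥0∞}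
    (hC : ∀ t ∈ Metric.ball 0 φ.rOut, eLpNorm (fun x => g (x - t) - g x) p μ ≤ C) :
    eLpNorm (fun x => mollify μ φ g x - g x) p μ ≤ C := by
  have hp0 : p ≠ 0 := (zero_lt_one.trans_le hp).ne'
  have hr : 1 ≤ p.toReal := by simpa using ENNReal.toReal_mono hp' hp
  have hr0 : 0 < p.toReal := zero_lt_one.trans_le hr
  let ν := bumpMeasure μ φ
  have hν : ν ≪ μ := withDensity_absolutelyContinuous μ _
  have hball : ∀ᵐ t ∂ν, t ∈ Metric.ball 0 φ.rOut :=
    mem_ae_iff.mpr (bumpMeasure_compl_ball φ)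
  have hjensen (x : E) :
      ‖mollify μ φ g x - g x‖ₑ ^ p.toReal ≤ ∫⁻ t, ‖g (x - t) - g x‖ₑ ^ p.toReal ∂ν := by
    have hint := integrable_comp_sub_bumpMeasure φ hg x
    have hsub : mollify μ φ g x - g x = ∫ t, (g (x - t) - g x) ∂ν := by
      rw [integral_sub hint (integrable_const _), integral_const, probReal_univ, one_smul,
        mollify_eq_integral_bumpMeasure]
    exact hsub ▸ enorm_integral_rpow_le_lintegral
      (hint.sub (integrable_const (g x))).aestronglyMeasurable hr
  have hmeas : AEMeasurable (fun q : E × E => ‖g (q.1 - q.2) - g q.1‖ₑ ^ p.toReal) (μ.prod ν) := by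
    have hg' := hg.aestronglyMeasurable
    have hsub : AEStronglyMeasurable (fun q : E × E => g (q.1 - q.2) - g q.1) (μ.prod μ) :=
      (hg'.comp_quasiMeasurePreserving (quasiMeasurePreserving_sub_of_right_invariant μ μ)).sub
        hg'.comp_fst
    exact ((hsub.mono_ac (.prod .rfl hν)).enorm).pow_const _
  rw [← ENNReal.rpow_le_rpow_iff hr0]
  simp only [eLpNorm_eq_lintegral_rpow_enorm_toReal hp0 hp', one_div,
    ENNReal.rpow_inv_rpow hr0.ne'] at hC ⊢
  calc ∫⁻ x, ‖mollify μ φ g x - g x‖ₑ ^ p.toReal ∂μ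
      ≤ ∫⁻ x, ∫⁻ t, ‖g (x - t) - g x‖ₑ ^ p.toReal ∂ν ∂μ := lintegral_mono hjensen
    _ = ∫⁻ t, ∫⁻ x, ‖g (x - t) - g x‖ₑ ^ p.toReal ∂μ ∂ν := lintegral_lintegral_swap hmeas
    _ ≤ ∫⁻ _, C ^ p.toReal ∂ν := lintegral_mono_ae <| hball.mono fun t ht =>
        (ENNReal.rpow_inv_le_iff hr0).mp (hC t ht)
    _ = C ^ p.toReal := by simp

theorem tendsto_eLpNorm_mollify_sub {ι : Type*} {l : Filter ι} {φ : ι → ContDiffBump (0 : E)}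
    (hφ : Filter.Tendsto (fun i => (φ i).rOut) l (nhds 0)) (hp : 1 ≤ p) (hp' : p ≠ ⊤)
    {g : E → ℂ} (hg : MemLp g p μ) :
    Filter.Tendsto (fun i => eLpNorm (fun x => mollify μ (φ i) g x - g x) p μ) l (nhds 0) := by
  refine ENNReal.tendsto_nhds_zero.mpr fun ε hε => ?_
  obtain ⟨δ, hδ, hball⟩ := Metric.eventually_nhds_iff_ball.mp
    (ENNReal.tendsto_nhds_zero.mp (tendsto_eLpNorm_comp_sub_sub hp hp' hg) ε hε)
  filter_upwards [hφ.eventually_lt_const hδ] with i hi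
  exact eLpNorm_mollify_sub_le hp hp' (hg.locallyIntegrable hp) (φ i) fun t ht =>
    hball t (Metric.ball_subset_ball hi.le ht)

end MollificationLp

section LTwoConvergence

variable {α : Type*} [MeasurableSpace α] {μ : Measure α}

lemma integral_norm_sq_eq_norm_toLp_sq {f : α → ℂ} (hf : MemLp f 2 μ) :
    ∫ x, ‖f x‖ ^ 2 ∂μ = ‖hf.toLp f‖ ^ 2 := by
  have hnn : 0 ≤ ∫ x, ‖f x‖ ^ 2 ∂μ := integral_nonneg fun x => by positivity
  rw [Lp.norm_toLp, hf.eLpNorm_eq_integral_rpow_norm two_ne_zero ENNReal.ofNat_ne_top]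
  simp only [ENNReal.toReal_ofNat, Real.rpow_ofNat]
  rw [ENNReal.toReal_ofReal (by positivity), ← Real.rpow_mul_natCast hnn]
  norm_num

/-- Convergence of a sequence in `L²(μ)`, on the level of functions. -/
structure TendstoL2 (μ : Measure α) (F : ℕ → α → ℂ) (f : α → ℂ) : Prop where
  memLp : ∀ m, MemLp (F m) 2 μ
  memLp_lim : MemLp f 2 μ
  tendsto : Filter.Tendsto (fun m => eLpNorm (fun x => F m x - f x) 2 μ) Filter.atTop (nhds 0)

namespace TendstoL2

variable {F G : ℕ → α → ℂ} {f g : α → ℂ}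

lemma tendsto_toLp (h : TendstoL2 μ F f) :
    Filter.Tendsto (fun m => (h.memLp m).toLp (F m)) Filter.atTop (nhds (h.memLp_lim.toLp f)) :=
  (Lp.tendsto_Lp_iff_tendsto_eLpNorm'' _ h.memLp f h.memLp_lim).mpr h.tendsto

lemma integral_norm_sq (h : TendstoL2 μ F f) :
    Filter.Tendsto (fun m => ∫ x, ‖F m x‖ ^ 2 ∂μ) Filter.atTop (nhds (∫ x, ‖f x‖ ^ 2 ∂μ)) := by
  simp only [integral_norm_sq_eq_norm_toLp_sq h.memLp_lim,
    integral_norm_sq_eq_norm_toLp_sq (h.memLp _)]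
  exact h.tendsto_toLp.norm.pow 2

lemma of_memLp (hf : MemLp f 2 μ) : TendstoL2 μ (fun _ => f) f :=
  ⟨fun _ => hf, hf, by simp⟩

lemma add (hF : TendstoL2 μ F f) (hG : TendstoL2 μ G g) :
    TendstoL2 μ (fun m x => F m x + G m x) (fun x => f x + g x) :=
  ⟨fun m => (hF.memLp m).add (hG.memLp m), hF.memLp_lim.add hG.memLp_lim,
    (Lp.tendsto_Lp_iff_tendsto_eLpNorm'' _ (fun m => (hF.memLp m).add (hG.memLp m)) _
      (hF.memLp_lim.add hG.memLp_lim)).mp (hF.tendsto_toLp.add hG.tendsto_toLp)⟩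

lemma sum {ι : Type*} (s : Finset ι) {F : ι → ℕ → α → ℂ} {f : ι → α → ℂ}
    (h : ∀ i ∈ s, TendstoL2 μ (F i) (f i)) :
    TendstoL2 μ (fun m x => ∑ i ∈ s, F i m x) (fun x => ∑ i ∈ s, f i x) := by
  classical
  induction s using Finset.induction_on with
  | empty => exact of_memLp MemLp.zero
  | insert i s hi ih =>
    simp only [Finset.sum_insert hi]
    exact (h i (Finset.mem_insert_self i s)).add
      (ih fun j hj => h j (Finset.mem_insert_of_mem hj))

lemma mul_left {b : α → ℂ} {C : ℝ} (hF : TendstoL2 μ F f) (hb : AEStronglyMeasurable b μ)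
    (hF0 : ∀ m x, C < ‖b x‖ → F m x = 0) (hf0 : ∀ x, C < ‖b x‖ → f x = 0) :
    TendstoL2 μ (fun m x => b x * F m x) (fun x => b x * f x) := by
  have hle {h : α → ℂ} (hh : ∀ x, C < ‖b x‖ → h x = 0) (x : α) : ‖b x * h x‖ ≤ C * ‖h x‖ := by
    rcases le_or_gt ‖b x‖ C with hx | hx
    · simpa using mul_le_mul_of_nonneg_right hx (norm_nonneg _)
    · simp [hh x hx]
  have hmem {h : α → ℂ} (hL : MemLp h 2 μ) (hh : ∀ x, C < ‖b x‖ → h x = 0) :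
      MemLp (fun x => b x * h x) 2 μ :=
    hL.of_le_mul (hb.mul hL.1) (.of_forall (hle hh))
  have hlim := ENNReal.Tendsto.const_mul (a := .ofReal C) hF.tendsto (.inr ENNReal.ofReal_ne_top)
  rw [mul_zero] at hlim
  refine ⟨fun m => hmem (hF.memLp m) (hF0 m), hmem hF.memLp_lim hf0,
    tendsto_of_tendsto_of_tendsto_of_le_of_le tendsto_const_nhds hlim (fun _ => zero_le) fun m =>
      eLpNorm_le_mul_eLpNorm_of_ae_le_mul (.of_forall fun x => ?_) 2⟩
  rw [← mul_sub]
  exact hle (h := fun x => F m x - f x) (fun x hx => by simp [hF0 m x hx, hf0 x hx]) x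

lemma of_dominated {B : α → ℝ} (hF : ∀ m, AEStronglyMeasurable (F m) μ) (hB : MemLp B 2 μ)
    (hFB : ∀ m x, ‖F m x‖ ≤ B x)
    (hlim : ∀ x, Filter.Tendsto (fun m => F m x) Filter.atTop (nhds (f x))) :
    TendstoL2 μ F f := by
  have hfB (x : α) : ‖f x‖ ≤ B x := le_of_tendsto (hlim x).norm (.of_forall fun m => hFB m x)
  have hmemF (m : ℕ) : MemLp (F m) 2 μ := hB.mono' (hF m) (.of_forall (hFB m))
  have hmemf : MemLp f 2 μ :=
    hB.mono' (aestronglyMeasurable_of_tendsto_ae _ hF (.of_forall hlim)) (.of_forall hfB)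
  have hint : Filter.Tendsto (fun m => ∫ x, ‖F m x - f x‖ ^ 2 ∂μ) Filter.atTop (nhds 0) := by
    rw [← integral_zero α ℝ (μ := μ)]
    refine tendsto_integral_of_dominated_convergence (fun x => (2 * B x) ^ 2)
      (fun m => ((hF m).sub hmemf.1).norm.pow 2) ((hB.const_mul 2).integrable_sq)
      (fun m => .of_forall fun x => ?_) (.of_forall fun x => ?_)
    · rw [Real.norm_of_nonneg (by positivity), two_mul]
      exact pow_le_pow_left₀ (norm_nonneg _)
        ((norm_sub_le _ _).trans (add_le_add (hFB m x) (hfB x))) 2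
    · simpa using ((hlim x).sub_const (f x)).norm.pow 2
  have hsqrt := ENNReal.tendsto_ofReal
    (hint.rpow_const (p := (2 : ℝ)⁻¹) (.inr (by norm_num)))
  rw [Real.zero_rpow (by norm_num), ENNReal.ofReal_zero] at hsqrt
  refine ⟨hmemF, hmemf, hsqrt.congr fun m => ?_⟩
  have h := ((hmemF m).sub hmemf).eLpNorm_eq_integral_rpow_norm two_ne_zero ENNReal.ofNat_ne_top
  simp only [ENNReal.toReal_ofNat, Real.rpow_ofNat] at h
  exact h.symm

end TendstoL2

end LTwoConvergence

section WeakDivergence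

variable {E : Type*} [NormedAddCommGroup E] [NormedSpace ℝ E]
  {ι : Type*} [Fintype ι]

/-- `∑ i, wderiv Φ (v i) (g i) = p` on `U` in the sense of distributions. The divergence of a tuple,
and each component `wderiv Φ (v j) (g k) - wderiv Φ (v k) (g j)` of its curl, are of this form. -/
def HasWeakDivOn [MeasurableSpace E] (μ : Measure E) (U : Set E) (Φ : E → ℝ) (v : ι → E × E)
    (g : ι → E → ℂ) (p : E → ℂ) : Prop :=
  ∀ χ, IsCcSmooth χ → tsupport χ ⊆ U →
    ∑ i, ∫ x, g i x * wderiv (-Φ) (v i) χ x ∂μ = -∫ x, p x * χ x ∂μ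

variable {Φ Ψ : E → ℝ} {v : ι → E × E} {g : ι → E → ℂ}

lemma wderiv_neg_exp_mul (hΦ : Differentiable ℝ Φ) (hΨ : Differentiable ℝ Ψ) (w : E × E)
    {f : E → ℂ} {x : E} (hf : DifferentiableAt ℝ f x) :
    wderiv (-Φ) w (fun y => cexp (-Ψ y) * f y) x = cexp (-Ψ x) * wderiv (-(Φ + Ψ)) w f x := by
  have hexp : HasFDerivAt (fun y => cexp (-Ψ y))
      (cexp (-Ψ x) • -(ofRealCLM ∘L fderiv ℝ Ψ x)) x :=
    ((ofRealCLM.hasFDerivAt.comp x (hΨ x).hasFDerivAt).neg).cexp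
  rw [wderiv, wderiv, dirDeriv_mul w hexp.differentiableAt hf, dirDeriv_eq_of_hasFDerivAt w hexp,
    dirDeriv_neg_ofReal, dirDeriv_neg_ofReal, dirDeriv_ofReal w (hΦ x),
    dirDeriv_ofReal w ((hΦ.add hΨ) x), fderiv_add (hΦ x) (hΨ x)]
  simp
  ring

namespace HasWeakDivOn

variable [MeasurableSpace E] {μ : Measure E} {U : Set E} {p η : E → ℂ}

lemma exp_neg_mul (h : HasWeakDivOn μ U Φ v g p) (hΦ : Differentiable ℝ Φ)
    (hΨ : ContDiff ℝ ∞ Ψ) :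
    HasWeakDivOn μ U (Φ + Ψ) v (fun i x => cexp (-Ψ x) * g i x) (fun x => cexp (-Ψ x) * p x) := by
  intro χ hχ hχU
  have hexp : ContDiff ℝ ∞ fun x => cexp (-Ψ x) := (contDiff_ofReal_comp hΨ).neg.cexp
  have htest := h _ (hχ.mul_left hexp) ((tsupport_mul_subset_right).trans hχU)
  simpa only [wderiv_neg_exp_mul hΦ (hΨ.differentiable (by simp)) _ (hχ.differentiableAt _),
    mul_assoc, mul_left_comm] using htest

variable [OpensMeasurableSpace E]

lemma mul_left (h : HasWeakDivOn μ U Φ v g p) (hη : ContDiff ℝ ∞ η) (hηV : tsupport η ∩ V ⊆ U)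
    (hΦ : ContDiff ℝ ∞ Φ) (hg : ∀ i, LocallyIntegrable (g i) μ) (hp : LocallyIntegrable p μ) :
    HasWeakDivOn μ V Φ v (fun i x => η x * g i x)
      (fun x => η x * p x + ∑ i, dirDeriv (v i) η x * g i x) := by
  intro χ hχ hχV
  have hηχ := hχ.mul_left hη
  have htest := h _ hηχ fun x hx =>
    hηV ⟨tsupport_mul_subset_left hx, hχV (tsupport_mul_subset_right hx)⟩
  have hleibniz (i : ι) (x : E) : wderiv (-Φ) (v i) (fun y => η y * χ y) x =
      dirDeriv (v i) η x * χ x + η x * wderiv (-Φ) (v i) χ x := by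
    rw [wderiv, wderiv, dirDeriv_mul _ (hη.differentiable (by simp) x) (hχ.differentiableAt x)]
    ring
  have hint₁ (i : ι) : Integrable (fun x => g i x * (dirDeriv (v i) η x * χ x)) μ :=
    (hχ.mul_left (contDiff_dirDeriv (v i) hη (m := ∞) (by simp))).integrable_mul (hg i)
  have hint₂ (i : ι) : Integrable (fun x => g i x * (η x * wderiv (-Φ) (v i) χ x)) μ :=
    ((hχ.wderiv (Φ := -Φ) hΦ.neg (v i)).mul_left hη).integrable_mul (hg i)
  have hsum : ∫ x, (η x * p x + ∑ i, dirDeriv (v i) η x * g i x) * χ x ∂μ =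
      ∫ x, p x * (η x * χ x) ∂μ + ∑ i, ∫ x, g i x * (dirDeriv (v i) η x * χ x) ∂μ := by
    rw [← integral_finsetSum _ fun i _ => hint₁ i,
      ← integral_add (hηχ.integrable_mul hp) (integrable_finsetSum _ fun i _ => hint₁ i)]
    refine integral_congr_ae (.of_forall fun x => ?_)
    simp only [add_mul, Finset.sum_mul]
    exact congrArg₂ _ (by ring) (Finset.sum_congr rfl fun i _ => by ring)
  simp only [hleibniz, mul_add, fun i => integral_add (hint₁ i) (hint₂ i),
    Finset.sum_add_distrib] at htest
  rw [hsum]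
  simp only [mul_assoc, mul_left_comm (η _)]
  linear_combination htest

lemma unweighted (h : HasWeakDivOn μ U Φ v g p) (hΦ : ContDiff ℝ ∞ Φ)
    (hg : ∀ i, LocallyIntegrable (g i) μ) (hp : LocallyIntegrable p μ) :
    HasWeakDivOn μ U 0 v g
      (fun x => p x - ∑ i, dirDeriv (v i) (fun y => (Φ y : ℂ)) x * g i x) := by
  intro χ hχ hχU
  have hdΦ (i : ι) := contDiff_dirDeriv (v i) (m := ∞) (k := ∞) (contDiff_ofReal_comp hΦ) (by simp)
  have hint (i : ι) :
      Integrable (fun x => g i x * (dirDeriv (v i) (fun y => (Φ y : ℂ)) x * χ x)) μ :=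
    (hχ.mul_left (hdΦ i)).integrable_mul (hg i)
  have hwderiv (i : ι) (x : E) : g i x * dirDeriv (v i) χ x = g i x * wderiv (-Φ) (v i) χ x +
      g i x * (dirDeriv (v i) (fun y => (Φ y : ℂ)) x * χ x) := by
    rw [wderiv, dirDeriv_neg_ofReal]
    ring
  have hsum : ∫ x, (p x - ∑ i, dirDeriv (v i) (fun y => (Φ y : ℂ)) x * g i x) * χ x ∂μ =
      ∫ x, p x * χ x ∂μ - ∑ i, ∫ x, g i x * (dirDeriv (v i) (fun y => (Φ y : ℂ)) x * χ x) ∂μ := by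
    rw [← integral_finsetSum _ fun i _ => hint i,
      ← integral_sub (hχ.integrable_mul hp) (integrable_finsetSum _ fun i _ => hint i)]
    refine integral_congr_ae (.of_forall fun x => ?_)
    simp only [sub_mul, Finset.sum_mul]
    exact congrArg₂ _ rfl (Finset.sum_congr rfl fun i _ => by ring)
  simp only [neg_zero, wderiv_zero, hwderiv, hsum, fun i => integral_add
    ((hχ.wderiv (Φ := -Φ) hΦ.neg (v i)).integrable_mul (hg i)) (hint i), Finset.sum_add_distrib,
    h χ hχ hχU]
  ring

end HasWeakDivOn

variable [FiniteDimensional ℝ E] [MeasurableSpace E] [BorelSpace E] {μ : Measure E}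
  [μ.IsAddHaarMeasure]

theorem HasWeakDivOn.sum_dirDeriv_mollify {U : Set E} {p : E → ℂ}
    (h : HasWeakDivOn μ U 0 v g p) (hg : ∀ i, LocallyIntegrable (g i) μ)
    (φ : ContDiffBump (0 : E)) {x : E} (hx : Metric.closedBall x φ.rOut ⊆ U) :
    ∑ i, dirDeriv (v i) (mollify μ φ (g i)) x = mollify μ φ p x := by
  have hweak := h (bumpAt μ φ x) (isCcSmooth_bumpAt μ φ x)
    ((tsupport_bumpAt_subset μ φ x).trans hx)
  simp only [neg_zero, wderiv_zero] at hweak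
  simp only [fun i => dirDeriv_mollify (v i) φ (hg i) x, Finset.sum_neg_distrib, hweak, neg_neg,
    mollify_apply]

end WeakDivergence

section WeakEstimate

variable {E : Type*} [NormedAddCommGroup E]

lemma exists_contDiffBump_tendsto_rOut : ∃ φ : ℕ → ContDiffBump (0 : E),
    Filter.Tendsto (fun m => (φ m).rOut) Filter.atTop (nhds 0) ∧ ∀ m, (φ m).rOut ≤ 1 := by
  refine ⟨fun m => ⟨1 / (m + 2), 1 / (m + 1), by positivity,
    one_div_lt_one_div_of_lt (by positivity) (by linarith)⟩,
    tendsto_one_div_add_atTop_nhds_zero_nat, fun m => ?_⟩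
  simpa using inv_le_one_of_one_le₀ (le_add_of_nonneg_left m.cast_nonneg)

variable [NormedSpace ℝ E] [FiniteDimensional ℝ E] [MeasurableSpace E] [BorelSpace E]
  {μ : Measure E} [μ.IsAddHaarMeasure] {ι : Type*} [Fintype ι] {Φ : E → ℝ} {K : Set E}

lemma isCcSmooth_mollify {g : E → ℂ} (φ : ContDiffBump (0 : E)) (hg : LocallyIntegrable g μ)
    (hK : IsCompact K) (hgK : ∀ y ∉ K, g y = 0) : IsCcSmooth (mollify μ φ g) :=
  ⟨contDiff_mollify φ hg, .intro hK.cthickening fun _ => mollify_eq_zero hgK⟩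

section Convergence

variable {φ : ℕ → ContDiffBump (0 : E)}
  (hφ : Filter.Tendsto (fun m => (φ m).rOut) Filter.atTop (nhds 0))

include hφ

lemma tendstoL2_mollify {g : E → ℂ} (hg : MemLp g 2 μ)
    (hgφ : ∀ m, MemLp (mollify μ (φ m) g) 2 μ) :
    TendstoL2 μ (fun m => mollify μ (φ m) g) g :=
  ⟨hgφ, hg, tendsto_eLpNorm_mollify_sub hφ one_le_two ENNReal.ofNat_ne_top hg⟩

/-- Friedrichs' lemma: mollification is compatible with a first-order weak equation. -/
lemma tendstoL2_sum_wderiv_mollify (hφ1 : ∀ m, (φ m).rOut ≤ 1) (hΦ : ContDiff ℝ ∞ Φ)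
    {v : ι → E × E} {g : ι → E → ℂ} {p : E → ℂ} (hg : ∀ i, MemLp (g i) 2 μ)
    (hK : IsCompact K) (hgK : ∀ i, ∀ y ∉ K, g i y = 0) (hp : MemLp p 2 μ)
    (h : HasWeakDivOn μ Set.univ Φ v g p) :
    TendstoL2 μ (fun m x => ∑ i, wderiv Φ (v i) (mollify μ (φ m) (g i)) x) p := by
  have hloc (i : ι) := (hg i).locallyIntegrable one_le_two
  have hcc (i : ι) (m : ℕ) := isCcSmooth_mollify (φ m) (hloc i) hK (hgK i)
  let b (i : ι) := dirDeriv (v i) fun y => (Φ y : ℂ)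
  have hb (i : ι) : Continuous (b i) :=
    continuous_dirDeriv (v i) (contDiff_ofReal_comp (hΦ.of_le (by simp)))
  have hlow : TendstoL2 μ (fun m x => ∑ i, b i x * mollify μ (φ m) (g i) x)
      fun x => ∑ i, b i x * g i x := by
    refine .sum _ fun i _ => ?_
    obtain ⟨C, hC⟩ := (hK.cthickening (r := 1)).exists_bound_of_continuousOn (hb i).continuousOn
    exact (tendstoL2_mollify hφ (hg i) fun m => (hcc i m).memLp_two).mul_left (C := C)
      (hb i).aestronglyMeasurable
      (fun m x hx => mollify_eq_zero (hgK i) fun hxK =>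
        hx.not_ge (hC x (Metric.cthickening_mono (hφ1 m) K hxK)))
      fun x hx => hgK i x fun hxK => hx.not_ge (hC x (Metric.self_subset_cthickening K hxK))
  have hdiv (m : ℕ) := funext fun x =>
    ((h.unweighted hΦ hloc (hp.locallyIntegrable one_le_two)).sum_dirDeriv_mollify hloc (φ m)
      (Set.subset_univ (Metric.closedBall x _))).symm
  have htop := tendstoL2_mollify hφ (hp.sub hlow.memLp_lim) fun m => by
    change MemLp (mollify μ (φ m) fun x => p x - ∑ i, b i x * g i x) 2 μ
    rw [hdiv m]
    exact (IsCcSmooth.sum _ fun i _ => (hcc i m).dirDeriv (v i)).memLp_two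
  convert htop.add hlow using 3 with m x
  · simp only [wderiv, Finset.sum_add_distrib]
    exact congrArg (· + _) (congrFun (hdiv m) x).symm
  · simp

end Convergence

/-- `wderiv Φ (v j) (g k) - wderiv Φ (v k) (g j) = q j k` on `U` in the sense of distributions. -/
def HasWeakCurlOn (μ : Measure E) (U : Set E) (Φ : E → ℝ) (v : ι → E × E) (g : ι → E → ℂ)
    (q : ι → ι → E → ℂ) : Prop :=
  ∀ j k, HasWeakDivOn μ U Φ ![v j, v k] ![g k, fun x => -g j x] (q j k)

variable {v : ι → E × E} {g : ι → E → ℂ} {p : E → ℂ} {q : ι → ι → E → ℂ}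

lemma sum_integral_norm_sq_le_of_isCompact (hΦ : ContDiff ℝ ∞ Φ)
    (hlevi : ∀ x ξ, ∑ j, ‖ξ j‖ ^ 2 ≤ 2 * (leviForm Φ v x ξ).re)
    (hK : IsCompact K) (hgK : ∀ j, ∀ y ∉ K, g j y = 0)
    (hg : ∀ j, MemLp (g j) 2 μ) (hp : MemLp p 2 μ) (hq : ∀ j k, MemLp (q j k) 2 μ)
    (hdiv : HasWeakDivOn μ Set.univ (-Φ) (fun j => conjDir (v j)) g p)
    (hcurl : HasWeakCurlOn μ Set.univ Φ v g q) :
    ∑ j, ∫ x, ‖g j x‖ ^ 2 ∂μ ≤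
      ∫ x, ‖p x‖ ^ 2 ∂μ + 1 / 2 * ∑ j, ∑ k, ∫ x, ‖q j k x‖ ^ 2 ∂μ := by
  obtain ⟨φ, hφ, hφ1⟩ := exists_contDiffBump_tendsto_rOut (E := E)
  have hcc (j : ι) (m : ℕ) :=
    isCcSmooth_mollify (φ m) ((hg j).locallyIntegrable one_le_two) hK (hgK j)
  have hG (j : ι) := tendstoL2_mollify hφ (hg j) fun m => (hcc j m).memLp_two
  have hP := tendstoL2_sum_wderiv_mollify hφ hφ1 hΦ.neg hg hK hgK hp hdiv
  have hQ (j k : ι) : TendstoL2 μ (fun m x => wderiv Φ (v j) (mollify μ (φ m) (g k)) x -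
      wderiv Φ (v k) (mollify μ (φ m) (g j)) x) (q j k) := by
    have hlim := tendstoL2_sum_wderiv_mollify hφ hφ1 hΦ (K := K) (p := q j k)
      (Fin.forall_fin_two.mpr ⟨hg k, (hg j).neg⟩) hK
      (Fin.forall_fin_two.mpr ⟨hgK k, fun y hy => by simp [hgK j y hy]⟩) (hq j k) (hcurl j k)
    simpa only [Fin.sum_univ_two, Matrix.cons_val_zero, Matrix.cons_val_one, mollify_neg, wderiv,
      dirDeriv_neg, mul_neg, sub_eq_add_neg, neg_add] using hlim
  refine le_of_tendsto_of_tendsto' (tendsto_finsetSum _ fun j _ => (hG j).integral_norm_sq)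
    (hP.integral_norm_sq.add ((tendsto_finsetSum _ fun j _ => tendsto_finsetSum _ fun k _ =>
      (hQ j k).integral_norm_sq).const_mul (1 / 2))) fun m => ?_
  have hsmooth := integral_norm_sq_le_of_smooth (μ := μ) hΦ (fun j => hcc j m) hlevi
  rwa [integral_finsetSum _ fun j _ => ((hG j).memLp m).integrable_norm_pow two_ne_zero,
    integral_finsetSum _ fun j _ => integrable_finsetSum _ fun k _ =>
      ((hQ j k).memLp m).integrable_norm_pow two_ne_zero, Finset.sum_congr rfl fun j _ =>
    integral_finsetSum _ fun k _ => ((hQ j k).memLp m).integrable_norm_pow two_ne_zero] at hsmooth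

end WeakEstimate

section WeakEstimateOnSpace

variable {E : Type*} [NormedAddCommGroup E] [NormedSpace ℝ E]

lemma dirDeriv_comp_smul (v : E × E) (c : ℝ) (f : E → ℂ) (x : E) :
    dirDeriv v (fun y => f (c • y)) x = c * dirDeriv v f (c • x) := by
  simp only [dirDeriv, fderiv_comp_smul, smul_apply, real_smul]
  ring

/-- A sequence of smooth compactly supported functions exhausting the space, with derivatives
tending boundedly to zero. -/
structure IsCutoffSeq (η : ℕ → E → ℂ) : Prop where
  isCcSmooth : ∀ m, IsCcSmooth (η m)
  norm_le_one : ∀ m x, ‖η m x‖ ≤ 1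
  tendsto : ∀ x, Filter.Tendsto (fun m => η m x) Filter.atTop (nhds 1)
  exists_norm_dirDeriv_le : ∀ v, ∃ C, ∀ m x, ‖dirDeriv v (η m) x‖ ≤ C
  tendsto_dirDeriv : ∀ v x, Filter.Tendsto (fun m => dirDeriv v (η m) x) Filter.atTop (nhds 0)

lemma exists_isCutoffSeq [FiniteDimensional ℝ E] : ∃ η : ℕ → E → ℂ, IsCutoffSeq η := by
  let β : ContDiffBump (0 : E) := ⟨1, 2, one_pos, one_lt_two⟩
  let c (m : ℕ) : ℝ := 1 / (m + 1)
  have hc (m : ℕ) : 0 < c m := by positivity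
  have hc1 (m : ℕ) : c m ≤ 1 := by
    simpa [c] using inv_le_one_of_one_le₀ (le_add_of_nonneg_left m.cast_nonneg)
  have hc0 : Filter.Tendsto c Filter.atTop (nhds 0) := tendsto_one_div_add_atTop_nhds_zero_nat
  let f (x : E) : ℂ := β x
  have hf : IsCcSmooth f := ⟨contDiff_ofReal_comp β.contDiff,
    β.hasCompactSupport.comp_left (g := ofReal) ofReal_zero⟩
  have hbound (v : E × E) : ∃ C, ∀ m x, ‖dirDeriv v (fun y => f (c m • y)) x‖ ≤ c m * C := by
    obtain ⟨C, hC⟩ := (hf.dirDeriv v).continuous.bounded_above_of_compact_support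
      (hf.dirDeriv v).hasCompactSupport
    refine ⟨C, fun m x => ?_⟩
    rw [dirDeriv_comp_smul, norm_mul, norm_real, Real.norm_of_nonneg (hc m).le]
    exact mul_le_mul_of_nonneg_left (hC _) (hc m).le
  refine ⟨fun m x => f (c m • x), fun m => ⟨?_, ?_⟩, fun m x => ?_, fun x => ?_, fun v => ?_,
    fun v x => ?_⟩
  · exact hf.contDiff.comp (contDiff_const_smul (c m))
  · exact hf.hasCompactSupport.comp_smul (hc m).ne'
  · simpa [f, abs_of_nonneg β.nonneg] using β.le_one
  · have hball : ∀ᶠ m in Filter.atTop, c m • x ∈ Metric.ball 0 1 := by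
      have := hc0.smul_const x
      rw [zero_smul] at this
      exact this (Metric.ball_mem_nhds 0 one_pos)
    refine tendsto_const_nhds.congr' ?_
    filter_upwards [hball] with m hm
    simp [f, β.one_of_mem_closedBall (Metric.ball_subset_closedBall hm)]
  · obtain ⟨C, hC⟩ := hbound v
    exact ⟨C, fun m x => (hC m x).trans (mul_le_of_le_one_left
      ((norm_nonneg _).trans (by simpa [c] using hC 0 x)) (hc1 m))⟩
  · obtain ⟨C, hC⟩ := hbound v
    exact squeeze_zero_norm (hC · x) (by simpa using hc0.mul_const C)

variable [MeasurableSpace E] [BorelSpace E] {μ : Measure E} {ι : Type*} [Fintype ι]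
  {v : ι → E × E} {g : ι → E → ℂ} {p : E → ℂ} {η : ℕ → E → ℂ}

namespace IsCutoffSeq

lemma tendstoL2_mul (hη : IsCutoffSeq η) (hp : MemLp p 2 μ) :
    TendstoL2 μ (fun m x => η m x * p x) p := by
  refine .of_dominated (fun m => (hη.isCcSmooth m).continuous.aestronglyMeasurable.mul hp.1)
    hp.norm (fun m x => ?_) fun x => by simpa using (hη.tendsto x).mul_const (p x)
  rw [norm_mul]
  exact mul_le_of_le_one_left (norm_nonneg _) (hη.norm_le_one m x)

lemma tendstoL2_dirDeriv_mul (hη : IsCutoffSeq η) (w : E × E) (hp : MemLp p 2 μ) :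
    TendstoL2 μ (fun m x => dirDeriv w (η m) x * p x) 0 := by
  obtain ⟨C, hC⟩ := hη.exists_norm_dirDeriv_le w
  refine .of_dominated (B := fun x => C * ‖p x‖)
    (fun m => ((hη.isCcSmooth m).dirDeriv w).continuous.aestronglyMeasurable.mul hp.1)
    (hp.norm.const_mul C) (fun m x => ?_) fun x => by
      simpa using (hη.tendsto_dirDeriv w x).mul_const (p x)
  rw [norm_mul]
  exact mul_le_mul_of_nonneg_right (hC m x) (norm_nonneg _)

lemma tendstoL2_leibniz (hη : IsCutoffSeq η) (v : ι → E × E) (hg : ∀ i, MemLp (g i) 2 μ)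
    (hp : MemLp p 2 μ) :
    TendstoL2 μ (fun m x => η m x * p x + ∑ i, dirDeriv (v i) (η m) x * g i x) p := by
  simpa using (hη.tendstoL2_mul hp).add
    (.sum Finset.univ fun i _ => hη.tendstoL2_dirDeriv_mul (v i) (hg i))

end IsCutoffSeq

variable [FiniteDimensional ℝ E] [μ.IsAddHaarMeasure]

/-- Hörmander's `L²` estimate. There is no boundary term because the weight is smooth on the whole
space, and smooth compactly supported tuples are dense in the graph norm. -/
theorem sum_integral_norm_sq_le {Φ : E → ℝ} {q : ι → ι → E → ℂ} (hΦ : ContDiff ℝ ∞ Φ)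
    (hlevi : ∀ x ξ, ∑ j, ‖ξ j‖ ^ 2 ≤ 2 * (leviForm Φ v x ξ).re)
    (hg : ∀ j, MemLp (g j) 2 μ) (hp : MemLp p 2 μ) (hq : ∀ j k, MemLp (q j k) 2 μ)
    (hdiv : HasWeakDivOn μ Set.univ (-Φ) (fun j => conjDir (v j)) g p)
    (hcurl : HasWeakCurlOn μ Set.univ Φ v g q) :
    ∑ j, ∫ x, ‖g j x‖ ^ 2 ∂μ ≤
      ∫ x, ‖p x‖ ^ 2 ∂μ + 1 / 2 * ∑ j, ∑ k, ∫ x, ‖q j k x‖ ^ 2 ∂μ := by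
  obtain ⟨η, hη⟩ := exists_isCutoffSeq (E := E)
  have hloc {f : E → ℂ} (hf : MemLp f 2 μ) := hf.locallyIntegrable one_le_two
  have hηc (m : ℕ) := (hη.isCcSmooth m).contDiff
  have hgη (j : ι) := hη.tendstoL2_mul (hg j)
  have hpη := hη.tendstoL2_leibniz (fun j => conjDir (v j)) hg hp
  have hcons (j k : ι) : ∀ i, MemLp ((![g k, fun x => -g j x] : Fin 2 → E → ℂ) i) 2 μ :=
    Fin.forall_fin_two.mpr ⟨hg k, (hg j).neg⟩
  have hqη (j k : ι) := hη.tendstoL2_leibniz ![v j, v k] (hcons j k) (hq j k)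
  refine le_of_tendsto_of_tendsto' (tendsto_finsetSum _ fun j _ => (hgη j).integral_norm_sq)
    (hpη.integral_norm_sq.add ((tendsto_finsetSum _ fun j _ => tendsto_finsetSum _ fun k _ =>
      (hqη j k).integral_norm_sq).const_mul (1 / 2))) fun m => ?_
  refine sum_integral_norm_sq_le_of_isCompact hΦ hlevi (hη.isCcSmooth m).hasCompactSupport
    (fun j y hy => by simp [image_eq_zero_of_notMem_tsupport hy]) (fun j => (hgη j).memLp m)
    (hpη.memLp m) (fun j k => (hqη j k).memLp m)
    (hdiv.mul_left (hηc m) (Set.subset_univ _) hΦ.neg (fun j => hloc (hg j)) (hloc hp))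
    fun j k => ?_
  convert (hcurl j k).mul_left (hηc m) (Set.subset_univ _) hΦ (fun i => hloc (hcons j k i))
    (hloc (hq j k)) using 1
  funext i x
  fin_cases i <;> simp

end WeakEstimateOnSpace

section WeakFormCalculus

variable {E : Type*} [NormedAddCommGroup E] [NormedSpace ℝ E] [MeasurableSpace E]
  {μ : Measure E} {ι : Type*} {U : Set E} {Φ : E → ℝ} {v : ι → E × E} {g h : ι → E → ℂ}

lemma HasWeakDivOn.congr_ae [Fintype ι] {p : E → ℂ} (hdiv : HasWeakDivOn μ U Φ v g p)
    (hgh : ∀ i, g i =ᵐ[μ] h i) : HasWeakDivOn μ U Φ v h p := fun χ hχ hχU => by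
  rw [← hdiv χ hχ hχU]
  exact Finset.sum_congr rfl fun i _ =>
    integral_congr_ae ((hgh i).symm.mul (.of_forall fun _ => rfl))

lemma HasWeakCurlOn.congr_ae {q : ι → ι → E → ℂ} (hcurl : HasWeakCurlOn μ U Φ v g q)
    (hgh : ∀ i, g i =ᵐ[μ] h i) : HasWeakCurlOn μ U Φ v h q := fun j k =>
  (hcurl j k).congr_ae (Fin.forall_fin_two.mpr ⟨hgh k, (hgh j).neg⟩)

variable [OpensMeasurableSpace E]

lemma HasWeakDivOn.sub [Fintype ι] {p r : E → ℂ} (hΦ : ContDiff ℝ ∞ Φ)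
    (hg : ∀ i, LocallyIntegrable (g i) μ) (hh : ∀ i, LocallyIntegrable (h i) μ)
    (hp : LocallyIntegrable p μ) (hr : LocallyIntegrable r μ)
    (hdivg : HasWeakDivOn μ U Φ v g p) (hdivh : HasWeakDivOn μ U Φ v h r) :
    HasWeakDivOn μ U Φ v (fun i => g i - h i) (p - r) := by
  intro χ hχ hχU
  have hwχ (i : ι) := hχ.wderiv (Φ := -Φ) hΦ.neg (v i)
  simp only [Pi.sub_apply, sub_mul, integral_sub (hχ.integrable_mul hp) (hχ.integrable_mul hr),
    fun i => integral_sub ((hwχ i).integrable_mul (hg i)) ((hwχ i).integrable_mul (hh i)),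
    Finset.sum_sub_distrib, hdivg χ hχ hχU, hdivh χ hχ hχU]
  ring

lemma HasWeakCurlOn.sub {q r : ι → ι → E → ℂ} (hΦ : ContDiff ℝ ∞ Φ)
    (hg : ∀ i, LocallyIntegrable (g i) μ) (hh : ∀ i, LocallyIntegrable (h i) μ)
    (hq : ∀ j k, LocallyIntegrable (q j k) μ) (hr : ∀ j k, LocallyIntegrable (r j k) μ)
    (hcurlg : HasWeakCurlOn μ U Φ v g q) (hcurlh : HasWeakCurlOn μ U Φ v h r) :
    HasWeakCurlOn μ U Φ v (fun i => g i - h i) (fun j k => q j k - r j k) := fun j k => by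
  convert (hcurlg j k).sub hΦ (Fin.forall_fin_two.mpr ⟨hg k, (hg j).neg⟩)
    (Fin.forall_fin_two.mpr ⟨hh k, (hh j).neg⟩) (hq j k) (hr j k) (hcurlh j k) using 1
  funext i x
  fin_cases i
  · rfl
  · simp [neg_add_eq_sub]

end WeakFormCalculus

section Duality

/-- The Hilbert space of square integrable tuples. -/
abbrev L2Tuple {α : Type*} [MeasurableSpace α] (ι : Type*) (μ : Measure α) :=
  PiLp 2 fun _ : ι => Lp ℂ 2 μ

section L2Tuple

variable {α : Type*} [MeasurableSpace α] {μ : Measure α}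

lemma integral_mul_conj_eq_inner {f : α → ℂ} (hf : MemLp f 2 μ) (h : Lp ℂ 2 μ) :
    ∫ x, h x * conj (f x) ∂μ = inner ℂ (hf.toLp f) h := by
  rw [L2.inner_def]
  refine integral_congr_ae (hf.coeFn_toLp.mono fun x hx => ?_)
  simp only [hx]
  rfl

lemma exists_clm_eq_integral_mul {f : α → ℂ} (hf : MemLp f 2 μ) :
    ∃ ℓ : Lp ℂ 2 μ →L[ℂ] ℂ, ∀ h, ℓ h = ∫ x, h x * f x ∂μ :=
  ⟨innerSL ℂ (hf.star.toLp _), fun h => by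
    simpa using (integral_mul_conj_eq_inner hf.star h).symm⟩

variable {ι : Type*}

/-- The element of `L2Tuple` defined by square integrable functions. -/
noncomputable def toL2Tuple {g : ι → α → ℂ} (hg : ∀ j, MemLp (g j) 2 μ) : L2Tuple ι μ :=
  WithLp.toLp 2 fun j => (hg j).toLp (g j)

lemma toL2Tuple_ae_eq {g : ι → α → ℂ} (hg : ∀ j, MemLp (g j) 2 μ) (j : ι) :
    toL2Tuple hg j =ᵐ[μ] g j :=
  (hg j).coeFn_toLp

lemma sub_ae_eq_of_add_eq_toL2Tuple {g : ι → α → ℂ} (hg : ∀ j, MemLp (g j) 2 μ)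
    {x y : L2Tuple ι μ} (hxy : x + y = toL2Tuple hg) (j : ι) : g j - ⇑(y j) =ᵐ[μ] x j := by
  rw [eq_sub_of_add_eq hxy, PiLp.sub_apply]
  exact ((toL2Tuple_ae_eq hg j).symm.sub .rfl).trans (Lp.coeFn_sub _ _).symm

variable [Fintype ι]

lemma L2Tuple.norm_sq (h : L2Tuple ι μ) : ‖h‖ ^ 2 = ∑ j, ∫ x, ‖h j x‖ ^ 2 ∂μ := by
  rw [PiLp.norm_sq_eq_of_L2]
  refine Finset.sum_congr rfl fun j _ => ?_
  rw [integral_norm_sq_eq_norm_toLp_sq (Lp.memLp (h j)), Lp.toLp_coeFn]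

lemma norm_toL2Tuple {g : ι → α → ℂ} (hg : ∀ j, MemLp (g j) 2 μ) :
    ‖toL2Tuple hg‖ = √(∑ j, ∫ x, ‖g j x‖ ^ 2 ∂μ) := by
  rw [← Real.sqrt_sq (norm_nonneg _), L2Tuple.norm_sq]
  refine congrArg _ (Finset.sum_congr rfl fun j _ =>
    integral_congr_ae ((toL2Tuple_ae_eq hg j).mono fun x hx => ?_))
  simp only [hx]

lemma inner_toL2Tuple {g : ι → α → ℂ} (hg : ∀ j, MemLp (g j) 2 μ) (h : L2Tuple ι μ) :
    inner ℂ (toL2Tuple hg) h = ∑ j, ∫ x, h j x * conj (g j x) ∂μ := by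
  rw [PiLp.inner_apply]
  exact Finset.sum_congr rfl fun j _ => (integral_mul_conj_eq_inner (hg j) (h j)).symm

lemma inner_toL2Tuple_toL2Tuple {f g : ι → α → ℂ} (hf : ∀ j, MemLp (f j) 2 μ)
    (hg : ∀ j, MemLp (g j) 2 μ) :
    inner ℂ (toL2Tuple hf) (toL2Tuple hg) = ∑ j, ∫ x, g j x * conj (f j x) ∂μ := by
  rw [inner_toL2Tuple]
  exact Finset.sum_congr rfl fun j _ => integral_congr_ae ((toL2Tuple_ae_eq hg j).mul .rfl)

end L2Tuple

lemma norm_inner_le_starProjection {H : Type*} [NormedAddCommGroup H] [InnerProductSpace ℂ H]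
    (K : Submodule ℂ H) [K.HasOrthogonalProjection] (a b : H) :
    ‖inner ℂ b a‖ ≤ ‖a‖ * ‖K.starProjection b‖ + ‖Kᗮ.starProjection a‖ * ‖b‖ := by
  have hsplit :
      inner ℂ b a = inner ℂ (K.starProjection b) a + inner ℂ b (Kᗮ.starProjection a) := by
    rw [← Kᗮ.inner_starProjection_left_eq_right, ← inner_add_left,
      K.starProjection_add_starProjection_orthogonal]
  rw [hsplit]
  refine (norm_add_le _ _).trans (add_le_add ?_ ?_)
  · exact (norm_inner_le_norm _ _).trans_eq (mul_comm _ _)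
  · exact (norm_inner_le_norm _ _).trans_eq (mul_comm _ _)

variable {E : Type*} [NormedAddCommGroup E] [NormedSpace ℝ E]
  [MeasurableSpace E] [BorelSpace E] {μ : Measure E}
  {ι : Type*} {U : Set E} {Φ : E → ℝ} {v : ι → E × E}

lemma exists_isClosed_mem_iff_hasWeakCurlOn [IsFiniteMeasureOnCompacts μ]
    (hΦ : ContDiff ℝ ∞ Φ) (v : ι → E × E) :
    ∃ K : Submodule ℂ (L2Tuple ι μ), IsClosed (K : Set (L2Tuple ι μ)) ∧
      ∀ h : L2Tuple ι μ,
        h ∈ K ↔ HasWeakCurlOn μ Set.univ Φ v (fun j => h j) fun _ _ => 0 := by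
  choose! ℓ hℓ using fun (w : E × E) (χ : E → ℂ) (hχ : IsCcSmooth χ) =>
    exists_clm_eq_integral_mul (μ := μ) (hχ.wderiv (Φ := -Φ) hΦ.neg w).memLp_two
  let T (j k : ι) (χ : E → ℂ) : L2Tuple ι μ →L[ℂ] ℂ :=
    ℓ (v j) χ ∘L PiLp.proj 2 _ k - ℓ (v k) χ ∘L PiLp.proj 2 _ j
  refine ⟨⨅ (j) (k) (χ) (_ : IsCcSmooth χ), (T j k χ).ker, ?_, fun h => ?_⟩
  · simp only [Submodule.coe_iInf]
    exact isClosed_iInter fun j => isClosed_iInter fun k => isClosed_iInter fun χ =>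
      isClosed_iInter fun _ => (T j k χ).isClosed_ker
  · simp only [Submodule.mem_iInf, HasWeakCurlOn, HasWeakDivOn]
    refine forall₂_congr fun j k => forall₂_congr fun χ hχ => ?_
    simp [T, hℓ _ _ hχ, integral_neg, sub_eq_add_neg]

variable [FiniteDimensional ℝ E] [μ.IsAddHaarMeasure]

lemma hasWeakCurlOn_wderiv (hΦ : ContDiff ℝ ∞ Φ) (v : ι → E × E) {u : E → ℂ}
    (hu : IsCcSmooth u) :
    HasWeakCurlOn μ U Φ v (fun j => wderiv Φ (v j) u) fun _ _ => 0 := by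
  intro j k χ hχ _
  have hparts (j k) : ∫ x, wderiv Φ (v k) u x * wderiv (-Φ) (v j) χ x ∂μ =
      -∫ x, wderiv Φ (v j) (wderiv Φ (v k) u) x * χ x ∂μ := by
    simpa using integral_mul_wderiv_eq_neg (μ := μ) (Φ := -Φ) (hΦ.neg.of_le (by simp)) (v j)
      ((hu.wderiv hΦ (v k)).contDiff.of_le (by simp)) (hχ.contDiff.of_le (by simp))
      hχ.hasCompactSupport
  simp [integral_neg, hparts, wderiv_wderiv_comm (contDiff_infty.mp hΦ 2) (v j) (v k)
    (contDiff_infty.mp hu.contDiff 2)]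

variable [Fintype ι]

lemma hasWeakDivOn_of_mem_orthogonal (hΦ : ContDiff ℝ ∞ Φ) {K : Submodule ℂ (L2Tuple ι μ)}
    (hK : ∀ h : L2Tuple ι μ, HasWeakCurlOn μ Set.univ Φ v (fun j => h j) (fun _ _ => 0) → h ∈ K)
    {h : L2Tuple ι μ} (hh : h ∈ Kᗮ) :
    HasWeakDivOn μ Set.univ (-Φ) (fun j => conjDir (v j)) (fun j => h j) 0 := by
  intro χ hχ _
  have hmem (j : ι) := (hχ.star.wderiv hΦ (v j)).memLp_two (μ := μ)
  have horth := Submodule.inner_right_of_mem_orthogonal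
    (hK (toL2Tuple hmem) ((hasWeakCurlOn_wderiv hΦ v hχ.star).congr_ae fun j =>
      (toL2Tuple_ae_eq hmem j).symm)) hh
  simpa [inner_toL2Tuple, conj_wderiv] using horth

variable {g ψ : ι → E → ℂ} {p : E → ℂ} {q : ι → ι → E → ℂ}

theorem norm_sum_integral_mul_conj_le (hΦ : ContDiff ℝ ∞ Φ)
    (hlevi : ∀ x ξ, ∑ j, ‖ξ j‖ ^ 2 ≤ 2 * (leviForm Φ v x ξ).re)
    (hg : ∀ j, MemLp (g j) 2 μ) (hψ : ∀ j, MemLp (ψ j) 2 μ) (hp : MemLp p 2 μ)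
    (hq : ∀ j k, MemLp (q j k) 2 μ)
    (hdiv : HasWeakDivOn μ Set.univ (-Φ) (fun j => conjDir (v j)) ψ p)
    (hcurl : HasWeakCurlOn μ Set.univ Φ v g q) :
    ‖∑ j, ∫ x, g j x * conj (ψ j x) ∂μ‖ ≤
      √(∑ j, ∫ x, ‖g j x‖ ^ 2 ∂μ) * √(∫ x, ‖p x‖ ^ 2 ∂μ) +
        √(1 / 2 * ∑ j, ∑ k, ∫ x, ‖q j k x‖ ^ 2 ∂μ) * √(∑ j, ∫ x, ‖ψ j x‖ ^ 2 ∂μ) := by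
  obtain ⟨K, hK, hmem⟩ := exists_isClosed_mem_iff_hasWeakCurlOn (μ := μ) hΦ v
  have : CompleteSpace K := hK.completeSpace_coe
  let a := toL2Tuple hg
  let b := toL2Tuple hψ
  have hloc (h : L2Tuple ι μ) (j : ι) : LocallyIntegrable (h j) μ :=
    (Lp.memLp (h j)).locallyIntegrable one_le_two
  have hzero : LocallyIntegrable (0 : E → ℂ) μ := locallyIntegrable_zero
  have hdivb : HasWeakDivOn μ Set.univ (-Φ) (fun j => conjDir (v j))
      (fun j => K.starProjection b j) p := by
    simpa using (hdiv.sub (Φ := -Φ) hΦ.neg (fun j => (hψ j).locallyIntegrable one_le_two) (hloc _)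
      (hp.locallyIntegrable one_le_two) hzero (hasWeakDivOn_of_mem_orthogonal hΦ
        (fun h => (hmem h).mpr) (Submodule.starProjection_apply_mem _ b))).congr_ae
      (sub_ae_eq_of_add_eq_toL2Tuple hψ (K.starProjection_add_starProjection_orthogonal b))
  have hcurla : HasWeakCurlOn μ Set.univ Φ v (fun j => Kᗮ.starProjection a j) q := by
    simpa using (hcurl.sub hΦ (fun j => (hg j).locallyIntegrable one_le_two) (hloc _)
      (fun j k => (hq j k).locallyIntegrable one_le_two) (fun _ _ => hzero)
      ((hmem _).mp (K.starProjection_apply_mem a))).congr_ae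
      (sub_ae_eq_of_add_eq_toL2Tuple hg
        ((add_comm _ _).trans (K.starProjection_add_starProjection_orthogonal a)))
  have hb : ‖K.starProjection b‖ ^ 2 ≤ ∫ x, ‖p x‖ ^ 2 ∂μ := by
    simpa [L2Tuple.norm_sq] using sum_integral_norm_sq_le hΦ hlevi (fun j => Lp.memLp _) hp
      (fun _ _ => MemLp.zero') hdivb ((hmem _).mp (K.starProjection_apply_mem b))
  have ha : ‖Kᗮ.starProjection a‖ ^ 2 ≤ 1 / 2 * ∑ j, ∑ k, ∫ x, ‖q j k x‖ ^ 2 ∂μ := by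
    simpa [L2Tuple.norm_sq] using sum_integral_norm_sq_le hΦ hlevi (fun j => Lp.memLp _)
      MemLp.zero' hq (hasWeakDivOn_of_mem_orthogonal hΦ (fun h => (hmem h).mpr)
        (Submodule.starProjection_apply_mem _ a)) hcurla
  rw [← inner_toL2Tuple_toL2Tuple hψ hg, ← norm_toL2Tuple hg, ← norm_toL2Tuple hψ]
  exact (norm_inner_le_starProjection K a b).trans (add_le_add
    (mul_le_mul_of_nonneg_left (Real.le_sqrt_of_sq_le hb) (norm_nonneg _))
    (mul_le_mul_of_nonneg_right (Real.le_sqrt_of_sq_le ha) (norm_nonneg _)))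

end Duality

section ConjugatedEstimate

variable {E : Type*} [NormedAddCommGroup E] [NormedSpace ℝ E] [MeasurableSpace E]
  {μ : Measure E} {ι : Type*} {U V : Set E} {Φ Ψ : E → ℝ} {v : ι → E × E}

namespace HasWeakCurlOn

variable {g : ι → E → ℂ} {q : ι → ι → E → ℂ} {η : E → ℂ}

lemma exp_neg_mul (h : HasWeakCurlOn μ U Φ v g q) (hΦ : Differentiable ℝ Φ)
    (hΨ : ContDiff ℝ ∞ Ψ) :
    HasWeakCurlOn μ U (Φ + Ψ) v (fun j x => cexp (-Ψ x) * g j x)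
      fun j k x => cexp (-Ψ x) * q j k x := fun j k => by
  convert (h j k).exp_neg_mul hΦ hΨ using 1
  funext i x
  fin_cases i
  · rfl
  · simp

lemma mul_left [OpensMeasurableSpace E] (h : HasWeakCurlOn μ U Φ v g q) (hη : ContDiff ℝ ∞ η)
    (hηV : tsupport η ∩ V ⊆ U) (hΦ : ContDiff ℝ ∞ Φ) (hg : ∀ i, LocallyIntegrable (g i) μ)
    (hq : ∀ j k, LocallyIntegrable (q j k) μ) :
    HasWeakCurlOn μ V Φ v (fun j x => η x * g j x) fun j k x =>
      η x * q j k x + (dirDeriv (v j) η x * g k x - dirDeriv (v k) η x * g j x) := fun j k => by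
  convert (h j k).mul_left hη hηV hΦ (Fin.forall_fin_two.mpr ⟨hg k, (hg j).neg⟩) (hq j k) using 1
  · funext i x
    fin_cases i
    · rfl
    · simp
  · simp [sub_eq_add_neg]

end HasWeakCurlOn

variable [FiniteDimensional ℝ E] [BorelSpace E] [μ.IsAddHaarMeasure] [Fintype ι]
  {a χ : ι → E → ℂ} {θ : E → ℂ}

lemma hasWeakDivOn_exp_mul_conj (hΦ : ContDiff ℝ ∞ Φ) (hχ : ∀ j, IsCcSmooth (χ j)) :
    HasWeakDivOn μ U (-Φ) (fun j => conjDir (v j)) (fun j x => cexp (Φ x) * conj (χ j x))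
      fun x => cexp (Φ x) * conj (∑ j, dirDeriv (v j) (χ j) x) := by
  have hdiv : HasWeakDivOn μ U 0 (fun j => conjDir (v j)) (fun j x => conj (χ j x))
      fun x => conj (∑ j, dirDeriv (v j) (χ j) x) := by
    intro τ hτ _
    have hint (j : ι) : Integrable
        (fun x => dirDeriv (conjDir (v j)) (fun x => conj (χ j x)) x * τ x) μ :=
      (hτ.mul_left ((hχ j).star.dirDeriv (conjDir (v j))).contDiff).integrable
    have hparts (j : ι) := integral_mul_dirDeriv_eq_neg_dirDeriv_mul (μ := μ) (conjDir (v j))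
      ((hχ j).star.contDiff.of_le (by simp)) (hτ.contDiff.of_le (by simp)) hτ.hasCompactSupport
    simp only [map_sum, conj_dirDeriv, Finset.sum_mul, neg_zero, wderiv_zero, hparts,
      integral_finsetSum _ fun j _ => hint j, Finset.sum_neg_distrib]
  simpa using hdiv.exp_neg_mul (Ψ := -Φ) (differentiable_const 0) hΦ.neg

theorem norm_sum_integral_mul_le_of_weight (hΦ : ContDiff ℝ ∞ Φ)
    (hlevi : ∀ x ξ, ∑ j, ‖ξ j‖ ^ 2 ≤ 2 * (leviForm Φ v x ξ).re)
    (ha : ∀ j, MemLp (a j) 2 μ) (hcurl : HasWeakCurlOn μ U 0 v a fun _ _ => 0)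
    (hθ : IsCcSmooth θ) (hθU : tsupport θ ⊆ U) (hχ : ∀ j, IsCcSmooth (χ j)) :
    ‖∑ j, ∫ x, θ x * a j x * χ j x ∂μ‖ ≤
      √(∑ j, ∫ x, ‖cexp (-Φ x) * (θ x * a j x)‖ ^ 2 ∂μ) *
          √(∫ x, ‖cexp (Φ x) * conj (∑ j, dirDeriv (v j) (χ j) x)‖ ^ 2 ∂μ) +
        √(1 / 2 * ∑ j, ∑ k, ∫ x,
            ‖cexp (-Φ x) * (dirDeriv (v j) θ x * a k x - dirDeriv (v k) θ x * a j x)‖ ^ 2 ∂μ) *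
          √(∑ j, ∫ x, ‖cexp (Φ x) * conj (χ j x)‖ ^ 2 ∂μ) := by
  have hexp : ContDiff ℝ ∞ fun x => cexp (Φ x) := (contDiff_ofReal_comp hΦ).cexp
  have hexp_neg : ContDiff ℝ ∞ fun x => cexp (-Φ x) := (contDiff_ofReal_comp hΦ).neg.cexp
  have hmul {η : E → ℂ} (hη : IsCcSmooth η) (j : ι) :
      MemLp (fun x => cexp (-Φ x) * (η x * a j x)) 2 μ := by
    simpa only [mul_assoc] using (hη.mul_left hexp_neg).memLp_mul (ha j)
  have hcurl' : HasWeakCurlOn μ Set.univ Φ v (fun j x => cexp (-Φ x) * (θ x * a j x))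
      fun j k x => cexp (-Φ x) * (dirDeriv (v j) θ x * a k x - dirDeriv (v k) θ x * a j x) := by
    simpa using (hcurl.mul_left (V := Set.univ) hθ.contDiff (by simpa using hθU) contDiff_const
      (fun j => (ha j).locallyIntegrable one_le_two) fun _ _ => locallyIntegrable_zero).exp_neg_mul
      (differentiable_const 0) hΦ
  have hbound := norm_sum_integral_mul_conj_le hΦ hlevi (hmul hθ)
    (fun j => ((hχ j).star.mul_left hexp).memLp_two)
    ((IsCcSmooth.sum _ fun j _ => (hχ j).dirDeriv (v j)).star.mul_left hexp).memLp_two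
    (fun j k => ?_) (hasWeakDivOn_exp_mul_conj hΦ hχ) hcurl'
  · refine le_of_eq_of_le ?_ hbound
    refine congrArg _ (Finset.sum_congr rfl fun j _ => integral_congr_ae (.of_forall fun x => ?_))
    have hcancel : cexp (-Φ x) * cexp (Φ x) = 1 := by
      rw [← Complex.exp_add, neg_add_cancel, exp_zero]
    simp only [map_mul, conj_conj, ← exp_conj, conj_ofReal]
    linear_combination (-θ x * a j x * χ j x) * hcancel
  · convert (hmul (hθ.dirDeriv (v j)) k).sub (hmul (hθ.dirDeriv (v k)) j) using 1
    funext x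
    simp [mul_sub]

end ConjugatedEstimate

section ConvexWeight

section Separation

variable {E : Type*} [TopologicalSpace E] [AddCommGroup E] [Module ℝ E] [IsTopologicalAddGroup E]
  [ContinuousSMul ℝ E] [LocallyConvexSpace ℝ E] {C N : Set E}

lemma exists_finset_separating (hC : IsClosed C) (hCc : Convex ℝ C) (hN : IsCompact N)
    (hd : Disjoint C N) :
    ∃ (s : Finset E) (l : E → StrongDual ℝ E) (c : E → ℝ),
      (∀ p ∈ s, ∀ x ∈ C, l p x - c p < -1) ∧ ∀ y ∈ N, ∃ p ∈ s, 1 < l p y - c p := by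
  have hsep (y : E) : ∃ (l : StrongDual ℝ E) (c : ℝ), y ∈ N →
      (∀ x ∈ C, l x - c < -1) ∧ 1 < l y - c := by
    by_cases hy : y ∈ N
    swap
    · exact ⟨0, 0, fun h => absurd h hy⟩
    obtain ⟨l, u, hlu, huy⟩ := geometric_hahn_banach_closed_point hCc hC
      (hd.notMem_of_mem_right hy)
    have hpos : 0 < (l y - u) / 4 := by linarith
    refine ⟨((l y - u) / 4)⁻¹ • l, ((l y - u) / 4)⁻¹ * ((l y + u) / 2),
      fun _ => ⟨fun x hx => ?_, ?_⟩⟩ <;>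
      simp only [smul_apply, smul_eq_mul, ← mul_sub]
    · rw [inv_mul_lt_iff₀ hpos]
      linarith [hlu x hx]
    · rw [lt_inv_mul_iff₀ hpos]
      linarith
  choose l c hlc using hsep
  obtain ⟨s, hsN, hcover⟩ := hN.elim_nhds_subcover (fun y => {z | 1 < l y z - c y}) fun y hy =>
    (isOpen_lt continuous_const ((l y).continuous.sub continuous_const)).mem_nhds (hlc y hy).2
  exact ⟨s, l, c, fun p hp => (hlc p (hsN p hp)).1, fun y hy => by simpa using hcover hy⟩

end Separation

section CompactHull

variable {E : Type*} [NormedAddCommGroup E] [NormedSpace ℝ E] {K U : Set E}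

lemma thickening_convexHull_subset {δ : ℝ} (hUc : Convex ℝ U)
    (hKU : Metric.thickening δ K ⊆ U) : Metric.thickening δ (convexHull ℝ K) ⊆ U := by
  rw [← add_ball_zero, ← (convex_ball (0 : E) δ).convexHull_eq, ← convexHull_add, add_ball_zero]
  exact convexHull_min hKU hUc

lemma closure_convexHull_subset_of_isCompact (hK : IsCompact K) (hU : IsOpen U)
    (hUc : Convex ℝ U) (hKU : K ⊆ U) : closure (convexHull ℝ K) ⊆ U := by
  obtain ⟨δ, hδ, hδU⟩ := hK.exists_thickening_subset_open hU hKU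
  exact (Metric.closure_subset_thickening hδ _).trans (thickening_convexHull_subset hUc hδU)

lemma exists_convex_isOpen_superset_closedBall_subset (hK : IsCompact K) (hU : IsOpen U)
    (hUc : Convex ℝ U) (hKU : K ⊆ U) :
    ∃ V, IsOpen V ∧ Convex ℝ V ∧ K ⊆ V ∧ ∃ δ > 0, ∀ x ∈ V, Metric.closedBall x δ ⊆ U := by
  obtain ⟨δ, hδ, hδU⟩ := hK.exists_thickening_subset_open hU hKU
  refine ⟨Metric.thickening (δ / 2) (convexHull ℝ K), Metric.isOpen_thickening,
    (convex_convexHull ℝ K).thickening _,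
    (subset_convexHull ℝ K).trans (Metric.self_subset_thickening (half_pos hδ) _), δ / 3,
    by positivity, fun x hx y hy => thickening_convexHull_subset hUc hδU ?_⟩
  obtain ⟨z, hz, hxz⟩ := Metric.mem_thickening_iff.mp hx
  refine Metric.mem_thickening_iff.mpr ⟨z, hz, (dist_triangle y x z).trans_lt ?_⟩
  linarith [Metric.mem_closedBall.mp hy]

lemma exists_isCcSmooth_eq_one_near [FiniteDimensional ℝ E] (hK : IsCompact K) (hU : IsOpen U)
    (hKU : K ⊆ U) :
    ∃ θ : E → ℂ, IsCcSmooth θ ∧ tsupport θ ⊆ U ∧ (∀ x, ‖θ x‖ ≤ 1) ∧ θ =ᶠ[nhdsSet K] 1 := by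
  obtain ⟨δ, hδ, hδU⟩ := hK.exists_cthickening_subset_open hU hKU
  obtain ⟨θ, hθ1, hθ0, hθI⟩ := exists_contMDiffMap_one_nhds_of_subset_interior (n := ⊤)
    (modelWithCornersSelf ℝ E) hK.isClosed
    ((Metric.self_subset_thickening hδ K).trans (Metric.thickening_subset_interior_cthickening δ K))
  have hsupp : tsupport (fun x => (θ x : ℂ)) ⊆ Metric.cthickening δ K :=
    closure_minimal (fun x hx => by_contra fun h => hx (by simp [hθ0 x h]))
      Metric.isClosed_cthickening
  have hnorm (x : E) : ‖(θ x : ℂ)‖ ≤ 1 := by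
    rw [norm_real, Real.norm_of_nonneg (hθI x).1]
    exact (hθI x).2
  refine ⟨fun x => θ x, ⟨contDiff_ofReal_comp θ.contMDiff.contDiff,
    hK.cthickening.of_isClosed_subset (isClosed_tsupport _) hsupp⟩, hsupp.trans hδU, hnorm,
    hθ1.mono fun x hx => by simp [hx]⟩

end CompactHull

variable {E ι : Type*} [NormedAddCommGroup E] [InnerProductSpace ℝ E] {C N : Set E}

lemma fderiv_fderiv_half_norm_sub_sq_add_sum_exp (x₀ : E) (s : Finset ι) (l : ι → StrongDual ℝ E)
    (c : ι → ℝ) (x a : E) :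
    fderiv ℝ (fderiv ℝ fun y => 1 / 2 * ‖y - x₀‖ ^ 2 + ∑ p ∈ s, Real.exp (l p y - c p)) x a a =
      ‖a‖ ^ 2 + ∑ p ∈ s, Real.exp (l p x - c p) * l p a ^ 2 := by
  have hexp (p : ι) (y : E) : HasFDerivAt (fun y => Real.exp (l p y - c p))
      (Real.exp (l p y - c p) • l p) y := ((l p).hasFDerivAt.sub_const (c p)).exp
  have hsub (y : E) : HasFDerivAt (fun y : E => y - x₀) (.id ℝ E) y :=
    (hasFDerivAt_id y).sub_const x₀
  have h₁ : fderiv ℝ (fun y => 1 / 2 * ‖y - x₀‖ ^ 2 + ∑ p ∈ s, Real.exp (l p y - c p)) =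
      fun y => innerSL ℝ (y - x₀) + ∑ p ∈ s, Real.exp (l p y - c p) • l p := by
    funext y
    refine (((hsub y).norm_sq.const_mul (1 / 2)).add
      (HasFDerivAt.fun_sum fun p _ => hexp p y)).fderiv.trans ?_
    ext b
    simp
  have h₂ := ((innerSL ℝ (E := E)).hasFDerivAt.comp x (hsub x)).add
    (HasFDerivAt.fun_sum (u := s) fun p _ => (hexp p x).smul_const (l p))
  rw [h₁]
  refine (congrArg (fun L => L a a) h₂.fderiv).trans ?_
  have hself : innerSL ℝ a a = ‖a‖ ^ 2 := real_inner_self_eq_norm_sq a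
  simp [hself, pow_two, mul_assoc]

/-- Where the weight must be large, a large multiple of separating affine functions is
exponentiated, which keeps the weight convex. -/
lemma exists_convex_weight (hC : IsClosed C) (hCc : Convex ℝ C) (hN : IsCompact N)
    (hd : Disjoint C N) (x₀ : E) {ε : ℝ} (hε : 0 < ε) (R : ℝ) :
    ∃ Φ : E → ℝ, ContDiff ℝ ∞ Φ ∧ (∀ x a, ‖a‖ ^ 2 ≤ fderiv ℝ (fderiv ℝ Φ) x a a) ∧
      (∀ x, 0 ≤ Φ x) ∧ (∀ x ∈ C, Φ x ≤ 1 / 2 * ‖x - x₀‖ ^ 2 + ε) ∧ ∀ x ∈ N, R ≤ Φ x := by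
  obtain ⟨s, l, c, hlC, hlN⟩ := exists_finset_separating hC hCc hN hd
  have hdecay : Filter.Tendsto (fun m : ℝ => s.card * Real.exp (-m)) Filter.atTop (nhds 0) := by
    simpa using Real.tendsto_exp_neg_atTop_nhds_zero.const_mul (s.card : ℝ)
  obtain ⟨m, hmε, hm0, hmR⟩ := ((hdecay.eventually (ge_mem_nhds hε)).and
    ((Filter.eventually_ge_atTop 0).and (Filter.eventually_ge_atTop R))).exists
  have hΦ := fderiv_fderiv_half_norm_sub_sq_add_sum_exp x₀ s (fun p => m • l p) fun p => m * c p
  refine ⟨fun x => 1 / 2 * ‖x - x₀‖ ^ 2 + ∑ p ∈ s, Real.exp ((m • l p) x - m * c p), ?_,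
    fun x a => ?_, fun x => by positivity, fun x hx => ?_, fun x hx => ?_⟩
  · exact (contDiff_const.mul ((contDiff_id.sub contDiff_const).norm_sq ℝ)).add
      (ContDiff.sum fun p _ => ((m • l p).contDiff.sub contDiff_const).exp)
  · rw [hΦ]
    exact le_add_of_nonneg_right (Finset.sum_nonneg fun p _ => by positivity)
  · refine add_le_add le_rfl (le_trans (Finset.sum_le_card_nsmul s _ (Real.exp (-m)) fun p hp => ?_)
      (by simpa using hmε))
    rw [Real.exp_le_exp, smul_apply, smul_eq_mul, ← mul_sub]
    nlinarith [hlC p hp x hx]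
  · obtain ⟨p, hp, hpx⟩ := hlN x hx
    calc R ≤ m := hmR
      _ ≤ m * (l p x - c p) := le_mul_of_one_le_right hm0 hpx.le
      _ ≤ Real.exp ((m • l p) x - m * c p) := by
          rw [smul_apply, smul_eq_mul, ← mul_sub]
          linarith [Real.add_one_le_exp (m * (l p x - c p))]
      _ ≤ ∑ p ∈ s, Real.exp ((m • l p) x - m * c p) :=
          Finset.single_le_sum (f := fun p => Real.exp ((m • l p) x - m * c p))
            (fun p _ => (Real.exp_pos _).le) hp
      _ ≤ _ := le_add_of_nonneg_left (by positivity)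

end ConvexWeight

section ConvexEstimate

lemma integral_norm_cexp_mul_sq_le {α : Type*} [MeasurableSpace α] {μ : Measure α} {Ψ : α → ℝ}
    {f : α → ℂ} {M : ℝ} (hf : MemLp f 2 μ) (hΨ : ∀ x, f x ≠ 0 → Ψ x ≤ M) :
    ∫ x, ‖cexp (Ψ x) * f x‖ ^ 2 ∂μ ≤ Real.exp (2 * M) * ∫ x, ‖f x‖ ^ 2 ∂μ := by
  rw [← integral_const_mul]
  refine integral_mono_of_nonneg (.of_forall fun x => sq_nonneg _)
    (hf.norm.integrable_sq.const_mul _) (.of_forall fun x => ?_)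
  by_cases hx : f x = 0
  · simp [hx]
  · simp only [norm_mul, mul_pow, ← ofReal_exp, norm_real, Real.norm_eq_abs, Real.abs_exp,
      ← Real.exp_nat_mul, Nat.cast_ofNat]
    gcongr
    exact hΨ x hx

lemma integral_norm_cexp_mul_conj_sq_le {α : Type*} [MeasurableSpace α] {μ : Measure α}
    {Ψ : α → ℝ} {f : α → ℂ} {M : ℝ} (hf : MemLp f 2 μ) (hΨ : ∀ x, f x ≠ 0 → Ψ x ≤ M) :
    ∫ x, ‖cexp (Ψ x) * conj (f x)‖ ^ 2 ∂μ ≤ Real.exp (2 * M) * ∫ x, ‖f x‖ ^ 2 ∂μ := by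
  simpa only [norm_mul, RCLike.norm_conj] using integral_norm_cexp_mul_sq_le hf hΨ

lemma integral_norm_cexp_neg_mul_sq_le {α : Type*} [MeasurableSpace α] {μ : Measure α}
    {Φ : α → ℝ} {f : α → ℂ} {R : ℝ} (hf : MemLp f 2 μ) (hΦ : ∀ x, f x ≠ 0 → R ≤ Φ x) :
    ∫ x, ‖cexp (-Φ x) * f x‖ ^ 2 ∂μ ≤ Real.exp (-(2 * R)) * ∫ x, ‖f x‖ ^ 2 ∂μ := by
  simpa using integral_norm_cexp_mul_sq_le (Ψ := -Φ) hf fun x hx => neg_le_neg (hΦ x hx)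

lemma integral_norm_cexp_neg_mul_mul_sq_le {α : Type*} [MeasurableSpace α] {μ : Measure α}
    {Φ : α → ℝ} {θ f : α → ℂ} (hf : MemLp f 2 μ) (hθ : ∀ x, ‖θ x‖ ≤ 1) (hΦ : ∀ x, 0 ≤ Φ x) :
    ∫ x, ‖cexp (-Φ x) * (θ x * f x)‖ ^ 2 ∂μ ≤ ∫ x, ‖f x‖ ^ 2 ∂μ := by
  refine integral_mono_of_nonneg (.of_forall fun x => sq_nonneg _) hf.norm.integrable_sq
    (.of_forall fun x => pow_le_pow_left₀ (norm_nonneg _) ?_ 2)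
  rw [← mul_assoc, norm_mul, norm_mul, ← ofReal_neg, norm_exp_ofReal]
  exact mul_le_of_le_one_left (norm_nonneg _)
    (mul_le_one₀ (Real.exp_le_one_iff.mpr (neg_nonpos.mpr (hΦ x))) (norm_nonneg _) (hθ x))

section Weight

variable {E : Type*} [NormedAddCommGroup E] [NormedSpace ℝ E] [FiniteDimensional ℝ E]
  [MeasurableSpace E] [BorelSpace E] {μ : Measure E} [μ.IsAddHaarMeasure] {ι : Type*} [Fintype ι]
  {v : ι → E × E} {U : Set E} {a χ : ι → E → ℂ} {θ : E → ℂ} {Φ : E → ℝ}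

lemma norm_sum_integral_mul_le_of_weight_le (hΦ : ContDiff ℝ ∞ Φ)
    (hlevi : ∀ x ξ, ∑ j, ‖ξ j‖ ^ 2 ≤ 2 * (leviForm Φ v x ξ).re)
    (ha : ∀ j, MemLp (a j) 2 μ) (hcurl : HasWeakCurlOn μ U 0 v a fun _ _ => 0)
    (hθ : IsCcSmooth θ) (hθU : tsupport θ ⊆ U) (hθ_le : ∀ x, ‖θ x‖ ≤ 1)
    (hχ : ∀ j, IsCcSmooth (χ j)) (hθχ : ∀ j, ∀ x ∈ tsupport (χ j), θ x = 1)
    (hΦ0 : ∀ x, 0 ≤ Φ x) {M R : ℝ} (hM : ∀ j, ∀ x ∈ tsupport (χ j), Φ x ≤ M)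
    (hR : ∀ j x, dirDeriv (v j) θ x ≠ 0 → R ≤ Φ x) :
    ‖∑ j, ∫ x, a j x * χ j x ∂μ‖ ≤
      √(∑ j, ∫ x, ‖a j x‖ ^ 2 ∂μ) *
          √(Real.exp (2 * M) * ∫ x, ‖∑ j, dirDeriv (v j) (χ j) x‖ ^ 2 ∂μ) +
        √(Real.exp (-(2 * R)) * (1 / 2 * ∑ j, ∑ k, ∫ x,
            ‖dirDeriv (v j) θ x * a k x - dirDeriv (v k) θ x * a j x‖ ^ 2 ∂μ)) *
          √(Real.exp (2 * M) * ∑ j, ∫ x, ‖χ j x‖ ^ 2 ∂μ) := by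
  have hdiv : ∫ x, ‖cexp (Φ x) * conj (∑ j, dirDeriv (v j) (χ j) x)‖ ^ 2 ∂μ ≤
      Real.exp (2 * M) * ∫ x, ‖∑ j, dirDeriv (v j) (χ j) x‖ ^ 2 ∂μ := by
    refine integral_norm_cexp_mul_conj_sq_le (IsCcSmooth.sum _ fun j _ =>
      (hχ j).dirDeriv (v j)).memLp_two fun x hx => ?_
    obtain ⟨j, -, hj⟩ := Finset.exists_ne_zero_of_sum_ne_zero hx
    exact hM j x (by_contra fun h => hj (dirDeriv_eq_zero_of_notMem_tsupport _ h))
  have hcurl' (j k : ι) : ∫ x, ‖cexp (-Φ x) *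
        (dirDeriv (v j) θ x * a k x - dirDeriv (v k) θ x * a j x)‖ ^ 2 ∂μ ≤ Real.exp (-(2 * R)) *
      ∫ x, ‖dirDeriv (v j) θ x * a k x - dirDeriv (v k) θ x * a j x‖ ^ 2 ∂μ := by
    refine integral_norm_cexp_neg_mul_sq_le (((hθ.dirDeriv (v j)).memLp_mul (ha k)).sub
      ((hθ.dirDeriv (v k)).memLp_mul (ha j))) fun x hx => ?_
    by_contra h
    have hj (j : ι) : dirDeriv (v j) θ x = 0 := by_contra fun hj => h (hR j x hj)
    exact hx (by simp [hj])
  have htest (j : ι) : ∫ x, ‖cexp (Φ x) * conj (χ j x)‖ ^ 2 ∂μ ≤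
      Real.exp (2 * M) * ∫ x, ‖χ j x‖ ^ 2 ∂μ :=
    integral_norm_cexp_mul_conj_sq_le (hχ j).memLp_two fun x hx => hM j x (subset_tsupport _ hx)
  have hθa (j : ι) : ∫ x, a j x * χ j x ∂μ = ∫ x, θ x * a j x * χ j x ∂μ := by
    refine integral_congr_ae (.of_forall fun x => ?_)
    by_cases hx : x ∈ tsupport (χ j)
    · simp [hθχ j x hx]
    · simp [image_eq_zero_of_notMem_tsupport hx]
  simp only [hθa]
  refine (norm_sum_integral_mul_le_of_weight hΦ hlevi ha hcurl hθ hθU hχ).trans ?_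
  rw [mul_left_comm]
  simp only [Finset.mul_sum _ _ (Real.exp _)]
  have h₁ := Finset.sum_le_sum fun j (_ : j ∈ Finset.univ) =>
    integral_norm_cexp_neg_mul_mul_sq_le (ha j) hθ_le hΦ0
  have h₂ := Finset.sum_le_sum fun j (_ : j ∈ Finset.univ) =>
    Finset.sum_le_sum fun k (_ : k ∈ Finset.univ) => hcurl' j k
  have h₃ := Finset.sum_le_sum fun j (_ : j ∈ Finset.univ) => htest j
  gcongr

end Weight

lemma le_sqrt_mul_sqrt_of_forall_pos {L A B Q X s : ℝ}
    (h : ∀ ε > 0, ∀ R, L ≤ √A * √(Real.exp (2 * (s + ε)) * B) +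
      √(Real.exp (-(2 * R)) * Q) * √(Real.exp (2 * (s + ε)) * X)) :
    L ≤ √A * √(Real.exp (2 * s) * B) := by
  have hdecay : Filter.Tendsto (fun m : ℕ => Real.exp (-(2 * m))) Filter.atTop (nhds 0) :=
    Real.tendsto_exp_neg_atTop_nhds_zero.comp
      (tendsto_natCast_atTop_atTop.const_mul_atTop two_pos)
  have hF : Continuous fun z : ℝ × ℝ => √A * √(Real.exp (2 * (s + z.1)) * B) +
      √(z.2 * Q) * √(Real.exp (2 * (s + z.1)) * X) := by fun_prop
  have hlim := (hF.tendsto (0, 0)).comp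
    (tendsto_one_div_add_atTop_nhds_zero_nat.prodMk_nhds hdecay)
  simp only [add_zero, zero_mul, Real.sqrt_zero] at hlim
  exact ge_of_tendsto' hlim fun m => h _ (by positivity) m

variable {E : Type*} [NormedAddCommGroup E] [InnerProductSpace ℝ E] {ι : Type*} [Fintype ι]
  {v : ι → E × E}

lemma sum_norm_sq_le_leviForm_of_convex
    (hv : ∀ ξ, ∑ j, ‖ξ j‖ ^ 2 ≤ 2 * (‖(dirComb ξ v).1‖ ^ 2 + ‖(dirComb ξ v).2‖ ^ 2))
    {Φ : E → ℝ} (hΦ : ContDiff ℝ 2 Φ) (hΦ₂ : ∀ x a, ‖a‖ ^ 2 ≤ fderiv ℝ (fderiv ℝ Φ) x a a)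
    (x : E) (ξ : ι → ℂ) : ∑ j, ‖ξ j‖ ^ 2 ≤ 2 * (leviForm Φ v x ξ).re := by
  rw [re_leviForm_eq_fderiv_fderiv hΦ]
  calc ∑ j, ‖ξ j‖ ^ 2 = ∑ j, ‖conj ξ j‖ ^ 2 := by simp
    _ ≤ _ := hv (conj ξ)
    _ ≤ _ := by gcongr <;> apply hΦ₂

variable [FiniteDimensional ℝ E] [MeasurableSpace E] [BorelSpace E] {μ : Measure E}
  [μ.IsAddHaarMeasure] {U : Set E} {a χ : ι → E → ℂ}

/-- The cutoff error lives on a compact set away from the convex hull of the supports, where the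
weight can be made arbitrarily large. -/
theorem norm_sum_integral_mul_le_of_convex
    (hv : ∀ ξ, ∑ j, ‖ξ j‖ ^ 2 ≤ 2 * (‖(dirComb ξ v).1‖ ^ 2 + ‖(dirComb ξ v).2‖ ^ 2))
    (hU : IsOpen U) (hUc : Convex ℝ U) {x₀ : E} {r : ℝ} (hr : ∀ x ∈ U, ‖x - x₀‖ ≤ r)
    (ha : ∀ j, MemLp (a j) 2 μ) (hcurl : HasWeakCurlOn μ U 0 v a fun _ _ => 0)
    (hχ : ∀ j, IsCcSmooth (χ j)) (hχU : ∀ j, tsupport (χ j) ⊆ U) :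
    ‖∑ j, ∫ x, a j x * χ j x ∂μ‖ ≤ √(∑ j, ∫ x, ‖a j x‖ ^ 2 ∂μ) *
      √(Real.exp (r ^ 2) * ∫ x, ‖∑ j, dirDeriv (v j) (χ j) x‖ ^ 2 ∂μ) := by
  have hK : IsCompact (⋃ j, tsupport (χ j)) := isCompact_iUnion fun j => (hχ j).hasCompactSupport
  have hCU : closure (convexHull ℝ (⋃ j, tsupport (χ j))) ⊆ U :=
    closure_convexHull_subset_of_isCompact hK hU hUc (Set.iUnion_subset hχU)
  set C := closure (convexHull ℝ (⋃ j, tsupport (χ j)))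
  have hC : IsCompact C := (isBounded_convexHull.mpr hK.isBounded).isCompact_closure
  have hχC (j : ι) : tsupport (χ j) ⊆ C :=
    (Set.subset_iUnion (fun j => tsupport (χ j)) j).trans
      ((subset_convexHull ℝ _).trans subset_closure)
  obtain ⟨θ, hθ, hθU, hθ_le, hθC⟩ := exists_isCcSmooth_eq_one_near hC hU hCU
  have hd : Disjoint C (tsupport (fderiv ℝ θ)) := by
    refine Set.disjoint_left.mpr fun x hx => notMem_tsupport_iff_eventuallyEq.mpr ?_
    have : θ =ᶠ[nhds x] fun _ => 1 := hθC.filter_mono (nhds_le_nhdsSet hx)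
    exact (this.fderiv (𝕜 := ℝ)).trans (.of_eq (by funext; simp))
  have hlim : ‖∑ j, ∫ x, a j x * χ j x ∂μ‖ ≤ √(∑ j, ∫ x, ‖a j x‖ ^ 2 ∂μ) *
      √(Real.exp (2 * (1 / 2 * r ^ 2)) * ∫ x, ‖∑ j, dirDeriv (v j) (χ j) x‖ ^ 2 ∂μ) := by
    refine le_sqrt_mul_sqrt_of_forall_pos (X := ∑ j, ∫ x, ‖χ j x‖ ^ 2 ∂μ)
      (Q := 1 / 2 * ∑ j, ∑ k, ∫ x,
        ‖dirDeriv (v j) θ x * a k x - dirDeriv (v k) θ x * a j x‖ ^ 2 ∂μ) fun ε hε R => ?_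
    obtain ⟨Φ, hΦ, hΦ₂, hΦ0, hΦC, hΦN⟩ := exists_convex_weight hC.isClosed
      (convex_convexHull ℝ _).closure (hθ.hasCompactSupport.fderiv (𝕜 := ℝ)) hd x₀ hε R
    refine norm_sum_integral_mul_le_of_weight_le hΦ
      (sum_norm_sq_le_leviForm_of_convex hv (contDiff_infty.mp hΦ 2) hΦ₂) ha hcurl hθ hθU hθ_le hχ
      (fun j x hx => hθC.self_of_nhdsSet (hχC j hx)) hΦ0
      (fun j x hx => (hΦC x (hχC j hx)).trans ?_) fun j x hx =>
        hΦN x (subset_tsupport _ fun h => ?_)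
    · gcongr
      exact hr x (hCU (hχC j hx))
    · simp [dirDeriv, h] at hx
  simpa [← mul_assoc] using hlim

end ConvexEstimate

section WirtingerFrame

/-- Complex coordinates `z i` on `E` together with the Wirtinger fields `v i = ∂/∂zᵢ`:
the `v i` are dual to the `z i`, their conjugates annihilate the `z i`, and `z` is isometric. -/
structure IsWirtingerFrame {E : Type*} [NormedAddCommGroup E] [NormedSpace ℝ E] {ι : Type*}
    [Fintype ι] [DecidableEq ι] (v : ι → E × E) (z : ι → E →L[ℝ] ℂ) : Prop where
  dirDeriv_apply (i k : ι) (x : E) : dirDeriv (v k) (z i) x = if i = k then 1 else 0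
  dirDeriv_conjDir_apply (i k : ι) (x : E) : dirDeriv (conjDir (v k)) (z i) x = 0
  sum_norm_sq (w : E) : ∑ i, ‖z i w‖ ^ 2 = ‖w‖ ^ 2

namespace IsWirtingerFrame

variable {E : Type*} [NormedAddCommGroup E] [NormedSpace ℝ E] {ι : Type*}
  [Fintype ι] [DecidableEq ι] {v : ι → E × E} {z : ι → E →L[ℝ] ℂ}

lemma apply_fst (h : IsWirtingerFrame v z) (i k : ι) :
    z i (v k).1 = if i = k then 1 / 2 else 0 := by
  have h₁ := h.dirDeriv_apply i k 0
  have h₂ := h.dirDeriv_conjDir_apply i k 0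
  simp only [dirDeriv, conjDir, ContinuousLinearMap.fderiv, map_neg] at h₁ h₂
  split_ifs at h₁ ⊢ <;> linear_combination (h₁ + h₂) / 2

lemma apply_snd (h : IsWirtingerFrame v z) (i k : ι) :
    z i (v k).2 = if i = k then -I / 2 else 0 := by
  have h₁ := h.dirDeriv_apply i k 0
  have h₂ := h.dirDeriv_conjDir_apply i k 0
  simp only [dirDeriv, conjDir, ContinuousLinearMap.fderiv, map_neg] at h₁ h₂
  split_ifs at h₁ ⊢ <;> linear_combination -I * (h₁ - h₂) / 2 + z i (v k).2 * I_sq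

lemma star (h : IsWirtingerFrame v z) :
    IsWirtingerFrame (fun i => conjDir (v i)) (fun i => (conjCLE : ℂ →L[ℝ] ℂ) ∘L z i) where
  dirDeriv_apply i k x := by
    have := congrArg conj (h.dirDeriv_apply i k x)
    rw [conj_dirDeriv, apply_ite conj, map_one, map_zero] at this
    exact this
  dirDeriv_conjDir_apply i k x := by
    have := congrArg conj (h.dirDeriv_conjDir_apply i k x)
    rw [conj_dirDeriv, map_zero] at this
    exact this
  sum_norm_sq w := by simpa using h.sum_norm_sq w

lemma apply_dirComb_fst (h : IsWirtingerFrame v z) (ξ : ι → ℂ) (k : ι) :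
    z k (dirComb ξ v).1 = ξ k / 2 := by
  simp only [dirComb, map_sum, map_sub, map_smul, h.apply_fst, h.apply_snd, real_smul, mul_ite,
    mul_zero, Finset.sum_sub_distrib, Finset.sum_ite_eq, Finset.mem_univ, if_true]
  linear_combination re_add_im (ξ k) / 2

lemma apply_dirComb_snd (h : IsWirtingerFrame v z) (ξ : ι → ℂ) (k : ι) :
    z k (dirComb ξ v).2 = -I * (ξ k / 2) := by
  simp only [dirComb, map_sum, map_add, map_smul, h.apply_fst, h.apply_snd, real_smul, mul_ite,
    mul_zero, Finset.sum_add_distrib, Finset.sum_ite_eq, Finset.mem_univ, if_true]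
  linear_combination -I * re_add_im (ξ k) / 2 + (ξ k).im / 2 * I_sq

lemma sum_norm_sq_eq_dirComb (h : IsWirtingerFrame v z) (ξ : ι → ℂ) :
    ∑ j, ‖ξ j‖ ^ 2 = 2 * (‖(dirComb ξ v).1‖ ^ 2 + ‖(dirComb ξ v).2‖ ^ 2) := by
  simp only [← h.sum_norm_sq, h.apply_dirComb_fst, h.apply_dirComb_snd, norm_mul, norm_neg, norm_I,
    one_mul, norm_div, div_pow, ← Finset.sum_div, norm_ofNat]
  ring

lemma two_smul_dirComb_fst (h : IsWirtingerFrame v z) (w : E) :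
    (2 : ℝ) • (dirComb (fun i => z i w) v).1 = w := by
  have hz (k : ι) : z k ((2 : ℝ) • (dirComb (fun i => z i w) v).1 - w) = 0 := by
    rw [map_sub, map_smul, h.apply_dirComb_fst, real_smul, ofReal_ofNat]
    ring
  rw [← sub_eq_zero, ← norm_eq_zero, ← sq_eq_zero_iff, ← h.sum_norm_sq]
  simp [hz]

lemma fderiv_apply (h : IsWirtingerFrame v z) (g : E → ℂ) (x w : E) :
    fderiv ℝ g x w = ∑ i, z i w * dirDeriv (v i) g x +
      ∑ i, conj (z i w) * dirDeriv (conjDir (v i)) g x := by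
  conv_lhs => rw [← h.two_smul_dirComb_fst w]
  rw [← Finset.sum_add_distrib, dirComb, map_smul, map_sum, real_smul, Finset.mul_sum]
  refine Finset.sum_congr rfl fun i _ => ?_
  simp only [dirDeriv, conjDir, map_sub, map_smul, map_neg, real_smul, ofReal_ofNat]
  have hre := add_conj (z i w)
  have him := sub_conj (z i w)
  push_cast at hre him
  linear_combination -fderiv ℝ g x (v i).1 * hre - I * fderiv ℝ g x (v i).2 * him -
    2 * (z i w).im * fderiv ℝ g x (v i).2 * I_sq

end IsWirtingerFrame

end WirtingerFrame

section ConeIntegral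

variable {E : Type*} [NormedAddCommGroup E] [NormedSpace ℝ E]

/-- The weighted average `∫₀¹ t^r g(y + t(x - y)) dt` of `g` over the segment from `y` to `x`, the
integral operator in the homotopy formula with pole `y`. -/
noncomputable def coneIntegral (y : E) (r : ℕ) (g : E → ℂ) (x : E) : ℂ :=
  ∫ t in (0 : ℝ)..1, (t : ℂ) ^ r * g (y + t • (x - y))

variable {g h : E → ℂ} {x y : E}

lemma coneIntegral_congr {U : Set E} (hU : Convex ℝ U) (hy : y ∈ U) (hx : x ∈ U) (r : ℕ)
    (hgh : ∀ w ∈ U, g w = h w) : coneIntegral y r g x = coneIntegral y r h x := by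
  refine intervalIntegral.integral_congr fun t ht => ?_
  rw [Set.uIcc_of_le zero_le_one] at ht
  simp only [hgh _ (hU.add_smul_sub_mem hy hx ht)]

lemma continuous_pow_smul_comp_cone {F : Type*} [NormedAddCommGroup F] [NormedSpace ℂ F]
    {φ : E → F} (hφ : Continuous φ) (y : E) (r : ℕ) :
    Continuous fun p : E × ℝ => (p.2 : ℂ) ^ r • φ (y + p.2 • (p.1 - y)) :=
  (by fun_prop : Continuous fun p : E × ℝ => (p.2 : ℂ) ^ r).smul (hφ.comp (by fun_prop))

lemma continuous_pow_smul_comp_segment {F : Type*} [NormedAddCommGroup F] [NormedSpace ℂ F]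
    {φ : E → F} (hφ : Continuous φ) (y : E) (r : ℕ) (x : E) :
    Continuous fun t : ℝ => (t : ℂ) ^ r • φ (y + t • (x - y)) :=
  (continuous_pow_smul_comp_cone hφ y r).comp (by fun_prop : Continuous fun t : ℝ => (x, t))

lemma exists_bound_norm_comp_segment [FiniteDimensional ℝ E] {F : Type*} [NormedAddCommGroup F]
    {φ : E → F} (hφ : Continuous φ) (y x : E) :
    ∃ M, ∀ t ∈ Set.Icc (0 : ℝ) 1, ∀ x' ∈ Metric.closedBall x 1, ‖φ (y + t • (x' - y))‖ ≤ M := by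
  obtain ⟨M, hM⟩ := (isCompact_Icc.prod (isCompact_closedBall x 1)).exists_bound_of_continuousOn
    (f := fun p : ℝ × E => φ (y + p.1 • (p.2 - y))) (hφ.comp (by fun_prop)).continuousOn
  exact ⟨M, fun t ht x' hx' => hM (t, x') ⟨ht, hx'⟩⟩

lemma eq_two_mul_coneIntegral_add (y : E) (hg : ContDiff ℝ 1 g) (x : E) :
    g x = 2 * coneIntegral y 1 g x +
      ∫ t in (0 : ℝ)..1, (t : ℂ) ^ 2 * fderiv ℝ g (y + t • (x - y)) (x - y) := by
  have hderiv (t : ℝ) : HasDerivAt (fun t : ℝ => (t : ℂ) ^ 2 * g (y + t • (x - y)))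
      (2 * ((t : ℂ) ^ 1 * g (y + t • (x - y))) +
        (t : ℂ) ^ 2 * fderiv ℝ g (y + t • (x - y)) (x - y)) t := by
    have hsq : HasDerivAt (fun t : ℝ => (t : ℂ) ^ 2) (2 * (t : ℂ)) t := by
      simpa using (hasDerivAt_id t).ofReal_comp.fun_pow 2
    have hseg : HasDerivAt (fun t : ℝ => y + t • (x - y)) (x - y) t := by
      simpa using ((hasDerivAt_id t).smul_const (x - y)).const_add y
    refine (hsq.mul ((hg.differentiable one_ne_zero _).hasFDerivAt.comp_hasDerivAt t
      hseg)).congr_deriv ?_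
    rw [pow_one, mul_assoc]
    rfl
  have hint₁ : IntervalIntegrable (fun t : ℝ => 2 * ((t : ℂ) ^ 1 * g (y + t • (x - y))))
      volume 0 1 :=
    ((continuous_pow_smul_comp_segment hg.continuous y 1 x).const_mul
      2).intervalIntegrable _ _
  have hint₂ : IntervalIntegrable
      (fun t : ℝ => (t : ℂ) ^ 2 * fderiv ℝ g (y + t • (x - y)) (x - y)) volume 0 1 :=
    (continuous_pow_smul_comp_segment ((hg.continuous_fderiv one_ne_zero).clm_apply
      continuous_const) y 2 x).intervalIntegrable _ _
  have hftc := intervalIntegral.integral_eq_sub_of_hasDerivAt (fun t _ => hderiv t)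
    (hint₁.add hint₂)
  rw [intervalIntegral.integral_add hint₁ hint₂, intervalIntegral.integral_const_mul] at hftc
  simpa [coneIntegral] using hftc.symm

variable [FiniteDimensional ℝ E]

lemma hasFDerivAt_coneIntegral (y : E) (r : ℕ) (hg : ContDiff ℝ 1 g) (x : E) :
    HasFDerivAt (coneIntegral y r g)
      (∫ t in (0 : ℝ)..1, (t : ℂ) ^ (r + 1) • fderiv ℝ g (y + t • (x - y))) x := by
  have hg' : Continuous (fderiv ℝ g) := hg.continuous_fderiv one_ne_zero
  obtain ⟨M, hM⟩ := exists_bound_norm_comp_segment hg' y x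
  refine intervalIntegral.hasFDerivAt_integral_of_dominated_of_fderiv_le (bound := fun _ => M)
    (F' := fun x t => (t : ℂ) ^ (r + 1) • fderiv ℝ g (y + t • (x - y)))
    (Metric.closedBall_mem_nhds x one_pos)
    (.of_forall fun x =>
      (continuous_pow_smul_comp_segment hg.continuous y r x).aestronglyMeasurable)
    ((continuous_pow_smul_comp_segment hg.continuous y r x).intervalIntegrable _ _)
    (continuous_pow_smul_comp_segment hg' y (r + 1) x).aestronglyMeasurable
    (.of_forall fun t ht x' hx' => ?_) intervalIntegrable_const (.of_forall fun t _ x' _ => ?_)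
  · rw [Set.uIoc_of_le zero_le_one] at ht
    rw [norm_smul, norm_pow, norm_real, Real.norm_of_nonneg ht.1.le]
    exact (mul_le_of_le_one_left (norm_nonneg _) (pow_le_one₀ ht.1.le ht.2)).trans
      (hM t ⟨ht.1.le, ht.2⟩ x' hx')
  · have hseg : HasFDerivAt (fun x' : E => y + t • (x' - y)) (t • ContinuousLinearMap.id ℝ E) x' :=
      (((hasFDerivAt_id x').sub_const y).const_smul t).const_add y
    refine (((hg.differentiable one_ne_zero _).hasFDerivAt.comp x' hseg).const_mul
      ((t : ℂ) ^ r)).congr_fderiv ?_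
    ext w
    simp [pow_succ, mul_assoc]

lemma contDiff_coneIntegral (y : E) (r : ℕ) (hg : ContDiff ℝ 1 g) :
    ContDiff ℝ 1 (coneIntegral y r g) := by
  refine contDiff_one_iff_hasFDerivAt.mpr ⟨_, ?_, hasFDerivAt_coneIntegral y r hg⟩
  exact intervalIntegral.continuous_parametric_intervalIntegral_of_continuous'
    (continuous_pow_smul_comp_cone (hg.continuous_fderiv one_ne_zero) y (r + 1)) 0 1

lemma dirDeriv_coneIntegral (v : E × E) (y : E) (r : ℕ) (hg : ContDiff ℝ 1 g) (x : E) :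
    dirDeriv v (coneIntegral y r g) x = coneIntegral y (r + 1) (dirDeriv v g) x := by
  let ev : (E →L[ℝ] ℂ) →L[ℝ] ℂ :=
    ContinuousLinearMap.apply ℝ ℂ v.1 + I • ContinuousLinearMap.apply ℝ ℂ v.2
  have hint := (continuous_pow_smul_comp_segment (hg.continuous_fderiv one_ne_zero) y (r + 1)
    x).intervalIntegrable (μ := volume) 0 1
  rw [dirDeriv_eq_of_hasFDerivAt v (hasFDerivAt_coneIntegral y r hg x)]
  refine (ev.intervalIntegral_comp_comm hint).symm.trans
    (intervalIntegral.integral_congr fun t _ => ?_)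
  simp only [ev, dirDeriv, add_apply, smul_apply, ContinuousLinearMap.apply_apply, smul_eq_mul]
  ring

end ConeIntegral

section ConePrimitive

variable {E : Type*} [NormedAddCommGroup E] [NormedSpace ℝ E] {ι : Type*} [Fintype ι]
  {v : ι → E × E} {z : ι → E →L[ℝ] ℂ}

lemma IsWirtingerFrame.eq_two_mul_coneIntegral_add_sum_add_sum [DecidableEq ι]
    (h : IsWirtingerFrame v z) (y : E) {g : E → ℂ} (hg : ContDiff ℝ 1 g) (x : E) :
    g x = 2 * coneIntegral y 1 g x +
      (∑ i, z i (x - y) * coneIntegral y 2 (dirDeriv (v i) g) x +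
        ∑ i, conj (z i (x - y)) * coneIntegral y 2 (dirDeriv (conjDir (v i)) g) x) := by
  have hint (c : ℂ) (w : E × E) : IntervalIntegrable
      (fun t : ℝ => c * ((t : ℂ) ^ 2 * dirDeriv w g (y + t • (x - y)))) volume 0 1 :=
    ((continuous_pow_smul_comp_segment (continuous_dirDeriv w hg) y 2 x).const_mul
      c).intervalIntegrable _ _
  rw [eq_two_mul_coneIntegral_add y hg x, ← Finset.sum_add_distrib]
  congr 1
  simp only [coneIntegral, ← intervalIntegral.integral_const_mul,
    ← intervalIntegral.integral_add (hint _ _) (hint _ _)]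
  rw [← intervalIntegral.integral_finsetSum fun i _ => (hint _ _).add (hint _ _)]
  simp only [h.fderiv_apply, ← Finset.sum_add_distrib, Finset.mul_sum, mul_add, mul_left_comm]

/-- The contraction `∑ i, (zᵢ(x) - zᵢ(y)) ∫₀¹ t F i j (y + t(x - y)) dt` of the matrix of functions
`F` along the cone with pole `y`: the component `a j` of the `(0,1)`-part of the primitive which
the homotopy formula gives for the closed form `∑ F i j dzᵢ ∧ dz̄ⱼ`. -/
noncomputable def conePrimitive (z : ι → E →L[ℝ] ℂ) (y : E) (F : ι → ι → E → ℂ) (j : ι)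
    (x : E) : ℂ :=
  ∑ i, z i (x - y) * coneIntegral y 1 (F i j) x

variable [FiniteDimensional ℝ E] {F : ι → ι → E → ℂ} {U : Set E} {x y : E}

lemma contDiff_conePrimitive (z : ι → E →L[ℝ] ℂ) (y : E) (hF : ∀ i j, ContDiff ℝ 1 (F i j))
    (j : ι) : ContDiff ℝ 1 (conePrimitive z y F j) :=
  ContDiff.sum fun i _ => ((z i).contDiff.comp (contDiff_id.sub contDiff_const)).mul
    (contDiff_coneIntegral y 1 (hF i j))

lemma dirDeriv_conePrimitive (z : ι → E →L[ℝ] ℂ) (v : E × E) (y : E)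
    (hF : ∀ i j, ContDiff ℝ 1 (F i j)) (j : ι) (x : E) :
    dirDeriv v (conePrimitive z y F j) x =
      ∑ i, dirDeriv v (z i) x * coneIntegral y 1 (F i j) x +
        ∑ i, z i (x - y) * coneIntegral y 2 (dirDeriv v (F i j)) x := by
  have hz (i : ι) : HasFDerivAt (fun x => z i (x - y)) (z i) x :=
    (z i).hasFDerivAt.comp x ((hasFDerivAt_id x).sub_const y)
  have hc (i : ι) : DifferentiableAt ℝ (coneIntegral y 1 (F i j)) x :=
    (contDiff_coneIntegral y 1 (hF i j)).differentiable one_ne_zero x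
  rw [← Finset.sum_add_distrib]
  refine (dirDeriv_sum _ v fun i _ => (hz i).differentiableAt.fun_mul (hc i)).trans
    (Finset.sum_congr rfl fun i _ => ?_)
  rw [dirDeriv_mul v (hz i).differentiableAt (hc i), dirDeriv_coneIntegral v y 1 (hF i j),
    dirDeriv_eq_of_hasFDerivAt v (hz i), dirDeriv_eq_of_hasFDerivAt v (z i).hasFDerivAt]

variable [DecidableEq ι]

namespace IsWirtingerFrame

lemma dirDeriv_conjDir_conePrimitive_comm (h : IsWirtingerFrame v z) (hU : Convex ℝ U)
    (hy : y ∈ U) (hx : x ∈ U) (hF : ∀ i j, ContDiff ℝ 1 (F i j))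
    (hclosed : ∀ i j k, ∀ w ∈ U, dirDeriv (conjDir (v k)) (F i j) w =
      dirDeriv (conjDir (v j)) (F i k) w) (j k : ι) :
    dirDeriv (conjDir (v k)) (conePrimitive z y F j) x =
      dirDeriv (conjDir (v j)) (conePrimitive z y F k) x := by
  simp only [dirDeriv_conePrimitive z _ y hF, h.dirDeriv_conjDir_apply, zero_mul,
    coneIntegral_congr hU hy hx 2 (hclosed _ j k)]

lemma dirDeriv_conePrimitive_add (h : IsWirtingerFrame v z) (hU : Convex ℝ U)
    (hy : y ∈ U) (hx : x ∈ U) (hF : ∀ i j, ContDiff ℝ 1 (F i j))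
    (hclosed₁ : ∀ i j k, ∀ w ∈ U, dirDeriv (v k) (F i j) w = dirDeriv (v i) (F k j) w)
    (hclosed₂ : ∀ i j k, ∀ w ∈ U, dirDeriv (conjDir (v k)) (F i j) w =
      dirDeriv (conjDir (v j)) (F i k) w) (i j : ι) :
    dirDeriv (v i) (conePrimitive z y F j) x + dirDeriv (conjDir (v j))
      (conePrimitive (fun k => (conjCLE : ℂ →L[ℝ] ℂ) ∘L z k) y (fun k l => F l k) i) x =
        F i j x := by
  rw [h.eq_two_mul_coneIntegral_add_sum_add_sum y (hF i j) x, dirDeriv_conePrimitive z _ y hF,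
    dirDeriv_conePrimitive _ _ y fun k l => hF l k]
  simp only [h.dirDeriv_apply, h.star.dirDeriv_apply, ite_mul, one_mul, zero_mul,
    Finset.sum_ite_eq', Finset.mem_univ, if_true,
    coneIntegral_congr hU hy hx 2 (hclosed₁ _ j i),
    coneIntegral_congr hU hy hx 2 (hclosed₂ i _ j)]
  simp only [ContinuousLinearMap.comp_apply, ContinuousLinearEquiv.coe_coe, conjCLE_apply]
  ring

end IsWirtingerFrame

end ConePrimitive

section PoleAveraging

variable {E : Type*} [NormedAddCommGroup E] [NormedSpace ℝ E] [FiniteDimensional ℝ E]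
  [MeasurableSpace E] [BorelSpace E] {μ : Measure E} [μ.IsAddHaarMeasure] {U : Set E}
  {h : E → ℝ≥0∞}

lemma setLIntegral_comp_smul_add_le (hU : MeasurableSet U) (hh : Measurable h) {c : ℝ}
    (hc : 1 / 2 ≤ c) (w : E) (hmem : ∀ x ∈ U, c • x + w ∈ U) :
    ∫⁻ x in U, h (c • x + w) ∂μ ≤ 2 ^ Module.finrank ℝ E * ∫⁻ x in U, h x ∂μ := by
  have hc0 : 0 < c := one_half_pos.trans_le hc
  have hscale : ENNReal.ofReal |(c ^ Module.finrank ℝ E)⁻¹| ≤ 2 ^ Module.finrank ℝ E := by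
    rw [← inv_pow, abs_of_pos (by positivity), ENNReal.ofReal_pow (by positivity)]
    refine pow_le_pow_left' ?_ _
    rw [ENNReal.ofReal_le_ofNat, inv_le_comm₀ hc0 two_pos]
    simpa using hc
  calc ∫⁻ x in U, h (c • x + w) ∂μ
      ≤ ∫⁻ x, U.indicator h (c • x + w) ∂μ := by
        rw [← lintegral_indicator hU]
        refine lintegral_mono fun x => ?_
        by_cases hx : x ∈ U
        · rw [Set.indicator_of_mem hx, Set.indicator_of_mem (hmem x hx)]
        · simp [Set.indicator_of_notMem hx]
    _ = ∫⁻ x, U.indicator h (x + w) ∂(μ.map fun x => c • x) := by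
        have hmeas : Measurable fun x => U.indicator h (x + w) :=
          (hh.indicator hU).comp (measurable_id.add_const w)
        rw [lintegral_map hmeas (measurable_const_smul c)]
    _ = ENNReal.ofReal |(c ^ Module.finrank ℝ E)⁻¹| * ∫⁻ x in U, h x ∂μ := by
        rw [Measure.map_addHaar_smul _ hc0.ne', lintegral_smul_measure,
          lintegral_add_right_eq_self (fun x => U.indicator h x) w, lintegral_indicator hU,
          smul_eq_mul]
    _ ≤ 2 ^ Module.finrank ℝ E * ∫⁻ x in U, h x ∂μ := by gcongr

lemma setLIntegral_setLIntegral_comp_segment_le (hU : MeasurableSet U) (hUc : Convex ℝ U)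
    (hh : Measurable h) {t : ℝ} (ht : t ∈ Set.Icc (0 : ℝ) 1) :
    ∫⁻ y in U, ∫⁻ x in U, h (y + t • (x - y)) ∂μ ∂μ ≤
      2 ^ Module.finrank ℝ E * (∫⁻ x in U, h x ∂μ) * μ U := by
  rw [← setLIntegral_const]
  rcases le_total (1 / 2) t with ht' | ht'
  · refine setLIntegral_mono measurable_const fun y hy => ?_
    have hseg (x : E) : y + t • (x - y) = t • x + (y - t • y) := by module
    simp only [hseg]
    exact setLIntegral_comp_smul_add_le hU hh ht' _
      fun x hx => hseg x ▸ hUc.add_smul_sub_mem hy hx ht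
  · have hmeas : Measurable fun p : E × E => h (p.1 + t • (p.2 - p.1)) :=
      hh.comp (by fun_prop : Continuous fun p : E × E => p.1 + t • (p.2 - p.1)).measurable
    rw [lintegral_lintegral_swap hmeas.aemeasurable]
    refine setLIntegral_mono measurable_const fun x hx => ?_
    have hseg (y : E) : y + t • (x - y) = (1 - t) • y + t • x := by module
    simp only [hseg]
    exact setLIntegral_comp_smul_add_le hU hh (by linarith) _
      fun y hy => hseg y ▸ hUc.add_smul_sub_mem hy hx ht

theorem exists_mem_setLIntegral_segment_le (hU : MeasurableSet U) (hUc : Convex ℝ U)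
    (hU0 : μ U ≠ 0) (hUtop : μ U ≠ ⊤) (hh : Measurable h) :
    ∃ y ∈ U, ∫⁻ x in U, (∫⁻ t in Set.Icc (0 : ℝ) 1, h (y + t • (x - y))) ∂μ ≤
      2 ^ Module.finrank ℝ E * ∫⁻ x in U, h x ∂μ := by
  have hmeas : Measurable fun p : (E × ℝ) × E => h (p.1.1 + p.1.2 • (p.2 - p.1.1)) :=
    hh.comp (by fun_prop : Continuous fun p : (E × ℝ) × E =>
      p.1.1 + p.1.2 • (p.2 - p.1.1)).measurable
  have hmeas_avg : Measurable fun p : E × ℝ => ∫⁻ x in U, h (p.1 + p.2 • (x - p.1)) ∂μ :=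
    hmeas.lintegral_prod_right'
  have hswap (y : E) : ∫⁻ x in U, (∫⁻ t in Set.Icc (0 : ℝ) 1, h (y + t • (x - y))) ∂μ =
      ∫⁻ t in Set.Icc (0 : ℝ) 1, ∫⁻ x in U, h (y + t • (x - y)) ∂μ :=
    lintegral_lintegral_swap (hmeas.comp (by fun_prop :
      Measurable fun p : E × ℝ => ((y, p.2), p.1))).aemeasurable
  simp only [hswap]
  obtain ⟨y, hy, hle⟩ := exists_le_setLAverage hU0 hUtop
    (hmeas_avg.lintegral_prod_right' (ν := volume.restrict (Set.Icc 0 1))).aemeasurable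
  refine ⟨y, hy, hle.trans ?_⟩
  rw [setLAverage_eq, ENNReal.div_le_iff hU0 hUtop,
    lintegral_lintegral_swap hmeas_avg.aemeasurable]
  calc ∫⁻ t in Set.Icc (0 : ℝ) 1, (∫⁻ y in U, ∫⁻ x in U, h (y + t • (x - y)) ∂μ ∂μ)
      ≤ ∫⁻ _ in Set.Icc (0 : ℝ) 1, 2 ^ Module.finrank ℝ E * (∫⁻ x in U, h x ∂μ) * μ U :=
        setLIntegral_mono measurable_const
          fun t ht => setLIntegral_setLIntegral_comp_segment_le hU hUc hh ht
    _ = 2 ^ Module.finrank ℝ E * (∫⁻ x in U, h x ∂μ) * μ U := by simp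

end PoleAveraging

section ConeEstimate

variable {E : Type*} [NormedAddCommGroup E] [NormedSpace ℝ E] {ι : Type*} [Fintype ι]

lemma norm_coneIntegral_sq_le {g : E → ℂ} (hg : Continuous g) (y : E) (r : ℕ) (x : E) :
    ‖coneIntegral y r g x‖ ^ 2 ≤ ∫ t in (0 : ℝ)..1, ‖g (y + t • (x - y))‖ ^ 2 := by
  have hcont := continuous_pow_smul_comp_segment hg y r x
  have hprob : IsProbabilityMeasure (volume.restrict (Set.Ioc (0 : ℝ) 1)) := ⟨by simp⟩
  have hjensen := (convexOn_univ_norm (E := ℂ)).pow (fun _ _ => norm_nonneg _) 2 |>.map_integral_le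
    (continuous_norm.pow 2).continuousOn isClosed_univ (.of_forall fun _ => Set.mem_univ _)
    (hcont.integrableOn_Ioc (μ := volume) (a := 0) (b := 1)) (hcont.norm.pow 2).integrableOn_Ioc
  simp only [Pi.pow_apply, ← intervalIntegral.integral_of_le zero_le_one] at hjensen
  refine hjensen.trans (intervalIntegral.integral_mono_on zero_le_one
    ((hcont.norm.pow 2).intervalIntegrable _ _)
    (Continuous.intervalIntegrable (by fun_prop) _ _) fun t ht => ?_)
  rw [norm_smul, norm_pow, norm_real, Real.norm_of_nonneg ht.1]
  exact pow_le_pow_left₀ (mul_nonneg (pow_nonneg ht.1 r) (norm_nonneg _))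
    (mul_le_of_le_one_left (norm_nonneg _) (pow_le_one₀ ht.1 ht.2)) 2

lemma sum_norm_conePrimitive_sq_le {z : ι → E →L[ℝ] ℂ} (hz : ∀ w, ∑ i, ‖z i w‖ ^ 2 = ‖w‖ ^ 2)
    {F : ι → ι → E → ℂ} (hF : ∀ i j, Continuous (F i j)) (y x : E) :
    ∑ j, ‖conePrimitive z y F j x‖ ^ 2 ≤
      ‖x - y‖ ^ 2 * ∫ t in (0 : ℝ)..1, ∑ j, ∑ i, ‖F i j (y + t • (x - y))‖ ^ 2 := by
  rw [intervalIntegral.integral_finsetSum fun j _ =>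
    Continuous.intervalIntegrable (by fun_prop) _ _, Finset.mul_sum]
  refine Finset.sum_le_sum fun j _ => ?_
  rw [intervalIntegral.integral_finsetSum fun i _ =>
    Continuous.intervalIntegrable (by fun_prop) _ _, ← hz]
  calc ‖conePrimitive z y F j x‖ ^ 2
      ≤ (∑ i, ‖z i (x - y)‖ * ‖coneIntegral y 1 (F i j) x‖) ^ 2 := by
        simp only [← norm_mul]
        gcongr
        exact norm_sum_le _ _
    _ ≤ (∑ i, ‖z i (x - y)‖ ^ 2) * ∑ i, ‖coneIntegral y 1 (F i j) x‖ ^ 2 :=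
        Finset.sum_mul_sq_le_sq_mul_sq _ _ _
    _ ≤ (∑ i, ‖z i (x - y)‖ ^ 2) * ∑ i, ∫ t in (0 : ℝ)..1, ‖F i j (y + t • (x - y))‖ ^ 2 := by
        have (i : ι) := norm_coneIntegral_sq_le (hF i j) y 1 x
        gcongr with i
        exact this i

variable [FiniteDimensional ℝ E] [MeasurableSpace E] [BorelSpace E] {μ : Measure E} {U : Set E}

lemma integrableOn_of_continuous_of_isBounded [IsFiniteMeasureOnCompacts μ] {F : Type*}
    [NormedAddCommGroup F] {g : E → F} (hg : Continuous g) (hU : Bornology.IsBounded U) :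
    IntegrableOn g U μ :=
  (hg.continuousOn.integrableOn_compact hU.isCompact_closure).mono_set subset_closure

variable [μ.IsAddHaarMeasure]

lemma exists_mem_setIntegral_segment_le (hU : IsOpen U) (hUc : Convex ℝ U) (hne : U.Nonempty)
    (hUb : Bornology.IsBounded U) {h : E → ℝ} (hh : Continuous h) (h0 : ∀ x, 0 ≤ h x) :
    ∃ y ∈ U, ∫ x in U, (∫ t in (0 : ℝ)..1, h (y + t • (x - y))) ∂μ ≤
      2 ^ Module.finrank ℝ E * ∫ x in U, h x ∂μ := by
  obtain ⟨y, hy, hle⟩ := exists_mem_setLIntegral_segment_le hU.measurableSet hUc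
    (hU.measure_pos μ hne).ne' hUb.measure_lt_top.ne hh.measurable.ennreal_ofReal
  have hseg (x : E) : Continuous fun t : ℝ => h (y + t • (x - y)) := by fun_prop
  have havg : Continuous fun x => ∫ t in (0 : ℝ)..1, h (y + t • (x - y)) :=
    intervalIntegral.continuous_parametric_intervalIntegral_of_continuous' (by fun_prop) _ _
  have havg0 (x : E) : 0 ≤ ∫ t in (0 : ℝ)..1, h (y + t • (x - y)) :=
    intervalIntegral.integral_nonneg zero_le_one fun t _ => h0 _
  have hofReal (x : E) : ENNReal.ofReal (∫ t in (0 : ℝ)..1, h (y + t • (x - y))) =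
      ∫⁻ t in Set.Icc (0 : ℝ) 1, ENNReal.ofReal (h (y + t • (x - y))) := by
    rw [intervalIntegral.integral_of_le zero_le_one, ← integral_Icc_eq_integral_Ioc]
    exact ofReal_integral_eq_lintegral_ofReal (hseg x).integrableOn_Icc (.of_forall fun t => h0 _)
  refine ⟨y, hy, ?_⟩
  rw [← ENNReal.ofReal_le_ofReal_iff (mul_nonneg (by positivity) (integral_nonneg h0)),
    ENNReal.ofReal_mul (by positivity), ENNReal.ofReal_pow zero_le_two, ENNReal.ofReal_ofNat,
    ofReal_integral_eq_lintegral_ofReal (integrableOn_of_continuous_of_isBounded havg hUb)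
      (.of_forall havg0),
    ofReal_integral_eq_lintegral_ofReal (integrableOn_of_continuous_of_isBounded hh hUb)
      (.of_forall h0)]
  simpa only [hofReal] using hle

lemma sum_setIntegral_norm_conePrimitive_sq_le (hU : MeasurableSet U)
    (hUb : Bornology.IsBounded U) {D : ℝ} {y : E} (hD : ∀ x ∈ U, ‖x - y‖ ≤ D)
    {z : ι → E →L[ℝ] ℂ} (hz : ∀ w, ∑ i, ‖z i w‖ ^ 2 = ‖w‖ ^ 2) {F : ι → ι → E → ℂ}
    (hF : ∀ i j, ContDiff ℝ 1 (F i j)) :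
    ∑ j, ∫ x in U, ‖conePrimitive z y F j x‖ ^ 2 ∂μ ≤
      D ^ 2 * ∫ x in U, (∫ t in (0 : ℝ)..1, ∑ j, ∑ i, ‖F i j (y + t • (x - y))‖ ^ 2) ∂μ := by
  have hFc (i j : ι) := (hF i j).continuous
  have hint (j : ι) : IntegrableOn (fun x => ‖conePrimitive z y F j x‖ ^ 2) U μ :=
    integrableOn_of_continuous_of_isBounded
      ((contDiff_conePrimitive z y hF j).continuous.norm.pow 2) hUb
  have havg : Continuous fun x => ∫ t in (0 : ℝ)..1, ∑ j, ∑ i, ‖F i j (y + t • (x - y))‖ ^ 2 :=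
    intervalIntegral.continuous_parametric_intervalIntegral_of_continuous' (by fun_prop) _ _
  rw [← integral_finsetSum _ fun j _ => hint j, ← integral_const_mul]
  refine setIntegral_mono_on (integrable_finsetSum _ fun j _ => hint j)
    ((integrableOn_of_continuous_of_isBounded havg hUb).const_mul _) hU fun x hx =>
      (sum_norm_conePrimitive_sq_le hz hFc y x).trans ?_
  gcongr
  · exact intervalIntegral.integral_nonneg zero_le_one fun t _ => by positivity
  · exact hD x hx

end ConeEstimate

section Indicator

variable {α : Type*} [MeasurableSpace α] {μ : Measure α} {s : Set α}

lemma integral_indicator_mul (hs : MeasurableSet s) (f g : α → ℂ) :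
    ∫ x, s.indicator f x * g x ∂μ = ∫ x in s, f x * g x ∂μ := by
  simp only [← Set.indicator_mul_left, integral_indicator hs]

lemma integral_norm_sq_indicator (hs : MeasurableSet s) (f : α → ℂ) :
    ∫ x, ‖s.indicator f x‖ ^ 2 ∂μ = ∫ x in s, ‖f x‖ ^ 2 ∂μ := by
  rw [← integral_indicator hs]
  refine integral_congr_ae (.of_forall fun x => ?_)
  by_cases hx : x ∈ s <;> simp [hx]

end Indicator

section WeakCurl

variable {E : Type*} [NormedAddCommGroup E] [NormedSpace ℝ E] [MeasurableSpace E] {μ : Measure E}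
  {ι : Type*} {U : Set E} {v : ι → E × E} {a : ι → E → ℂ}

lemma hasWeakCurlOn_zero_of_forall_integral_mul_eq
    (h : ∀ j k χ, IsCcSmooth χ → tsupport χ ⊆ U →
      ∫ x, a j x * dirDeriv (v k) χ x ∂μ = ∫ x, a k x * dirDeriv (v j) χ x ∂μ) :
    HasWeakCurlOn μ U 0 v a fun _ _ => 0 := by
  intro j k χ hχ hχU
  simp [wderiv_zero, Fin.sum_univ_two, integral_neg, h j k χ hχ hχU]

variable [FiniteDimensional ℝ E] [BorelSpace E] [μ.IsAddHaarMeasure]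

lemma hasWeakCurlOn_indicator (ha : ∀ j, ContDiff ℝ 1 (a j))
    (hcomm : ∀ x ∈ U, ∀ j k, dirDeriv (v k) (a j) x = dirDeriv (v j) (a k) x) :
    HasWeakCurlOn μ U 0 v (fun j => U.indicator (a j)) fun _ _ => 0 := by
  refine hasWeakCurlOn_zero_of_forall_integral_mul_eq fun j k χ hχ hχU => ?_
  have hparts (j k : ι) : ∫ x, U.indicator (a j) x * dirDeriv (v k) χ x ∂μ =
      -∫ x, dirDeriv (v k) (a j) x * χ x ∂μ := by
    rw [← integral_mul_dirDeriv_eq_neg_dirDeriv_mul _ (ha j)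
      (hχ.contDiff.of_le (by simp)) hχ.hasCompactSupport]
    refine integral_congr_ae (.of_forall fun x => ?_)
    by_cases hx : x ∈ U
    · simp only [Set.indicator_of_mem hx]
    · simp only [dirDeriv_eq_zero_of_notMem_tsupport _ fun h => hx (hχU h), mul_zero]
  have hswap : ∫ x, dirDeriv (v j) (a k) x * χ x ∂μ = ∫ x, dirDeriv (v k) (a j) x * χ x ∂μ := by
    refine integral_congr_ae (.of_forall fun x => ?_)
    by_cases hx : x ∈ U
    · simp only [hcomm x hx j k]
    · simp only [image_eq_zero_of_notMem_tsupport fun h => hx (hχU h), mul_zero]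
  rw [hparts, hparts, hswap]

end WeakCurl

section DdbarTranspose

variable {E : Type*} [NormedAddCommGroup E] [NormedSpace ℝ E] {ι : Type*} [Fintype ι]

/-- The formal transpose `χ ↦ ∑ ∂ᵢ ∂̄ⱼ χᵢⱼ` of the operator `u ↦ (∂ᵢ ∂̄ⱼ u)ᵢⱼ`, where `∂ᵢ` is the
derivative along `v i`. -/
noncomputable def ddbarTranspose (v : ι → E × E) (χ : ι → ι → E → ℂ) (x : E) : ℂ :=
  ∑ i, ∑ j, dirDeriv (v i) (dirDeriv (conjDir (v j)) (χ i j)) x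

lemma tsupport_sum_dirDeriv_subset {U : Set E} {χ : ι → E → ℂ} (v : ι → E × E)
    (hχ : ∀ i, tsupport (χ i) ⊆ U) :
    tsupport (fun x => ∑ i, dirDeriv (v i) (χ i) x) ⊆ U := by
  refine (closure_minimal (t := ⋃ i, tsupport (χ i)) (fun x hx => ?_)
    (isClosed_iUnion_of_finite fun i => isClosed_tsupport (χ i))).trans (Set.iUnion_subset hχ)
  obtain ⟨i, -, hi⟩ := Finset.exists_ne_zero_of_sum_ne_zero hx
  exact Set.mem_iUnion.mpr ⟨i, tsupport_dirDeriv_subset (v i) _ (subset_tsupport _ hi)⟩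

lemma sum_dirDeriv_sum_dirDeriv_eq_ddbarTranspose (v : ι → E × E) {χ : ι → ι → E → ℂ}
    (hχ : ∀ i j, IsCcSmooth (χ i j)) (x : E) :
    ∑ i, dirDeriv (v i) (fun y => ∑ j, dirDeriv (conjDir (v j)) (χ i j) y) x =
      ddbarTranspose v χ x :=
  Finset.sum_congr rfl fun i _ =>
    dirDeriv_sum _ _ fun j _ => ((hχ i j).dirDeriv _).differentiableAt x

lemma sum_dirDeriv_conjDir_sum_dirDeriv_eq_ddbarTranspose (v : ι → E × E)
    {χ : ι → ι → E → ℂ} (hχ : ∀ i j, IsCcSmooth (χ i j)) (x : E) :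
    ∑ j, dirDeriv (conjDir (v j)) (fun y => ∑ i, dirDeriv (v i) (χ i j) y) x =
      ddbarTranspose v χ x := by
  rw [ddbarTranspose, Finset.sum_comm]
  refine Finset.sum_congr rfl fun j _ => ?_
  rw [dirDeriv_sum _ _ fun i _ => ((hχ i j).dirDeriv _).differentiableAt x]
  exact Finset.sum_congr rfl fun i _ =>
    dirDeriv_comm _ _ (contDiff_infty.mp (hχ i j).contDiff 2) x

variable [FiniteDimensional ℝ E] [MeasurableSpace E] [BorelSpace E] {μ : Measure E}
  [μ.IsAddHaarMeasure] {U : Set E}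

lemma sum_sum_integral_mul_eq_of_dirDeriv_add {v w : ι → E × E} {a b : ι → E → ℂ}
    {F χ : ι → ι → E → ℂ} (ha : ∀ j, ContDiff ℝ 1 (a j)) (hb : ∀ i, ContDiff ℝ 1 (b i))
    (hF : ∀ i j, ∀ x ∈ U, dirDeriv (v i) (a j) x + dirDeriv (w j) (b i) x = F i j x)
    (hχ : ∀ i j, IsCcSmooth (χ i j)) (hχU : ∀ i j, tsupport (χ i j) ⊆ U) :
    ∑ i, ∑ j, ∫ x, F i j x * χ i j x ∂μ =
      -(∑ j, ∫ x, a j x * (∑ i, dirDeriv (v i) (χ i j) x) ∂μ +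
        ∑ i, ∫ x, b i x * (∑ j, dirDeriv (w j) (χ i j) x) ∂μ) := by
  have hint {g : E → ℂ} (hg : Continuous g) {φ : E → ℂ} (hφ : IsCcSmooth φ) :
      Integrable (fun x => g x * φ x) μ := hφ.integrable_mul hg.locallyIntegrable
  have hparts (i j : ι) : ∫ x, F i j x * χ i j x ∂μ =
      -(∫ x, a j x * dirDeriv (v i) (χ i j) x ∂μ + ∫ x, b i x * dirDeriv (w j) (χ i j) x ∂μ) := by
    have hχ₁ : ContDiff ℝ 1 (χ i j) := (hχ i j).contDiff.of_le (by simp)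
    rw [integral_mul_dirDeriv_eq_neg_dirDeriv_mul _ (ha j) hχ₁ (hχ i j).hasCompactSupport,
      integral_mul_dirDeriv_eq_neg_dirDeriv_mul _ (hb i) hχ₁ (hχ i j).hasCompactSupport,
      ← neg_add, neg_neg, ← integral_add (hint (continuous_dirDeriv _ (ha j)) (hχ i j))
        (hint (continuous_dirDeriv _ (hb i)) (hχ i j))]
    refine integral_congr_ae (.of_forall fun x => ?_)
    by_cases hx : x ∈ U
    · simp only [← hF i j x hx, add_mul]
    · simp only [image_eq_zero_of_notMem_tsupport fun h => hx (hχU i j h), mul_zero, add_zero]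
  simp only [hparts, Finset.sum_neg_distrib, Finset.sum_add_distrib, Finset.mul_sum,
    fun j => integral_finsetSum Finset.univ fun i _ =>
      hint (ha j).continuous ((hχ i j).dirDeriv (v i)),
    fun i => integral_finsetSum Finset.univ fun j _ =>
      hint (hb i).continuous ((hχ i j).dirDeriv (w j))]
  rw [Finset.sum_comm]

end DdbarTranspose

section SmoothFrameEstimate

variable {E : Type*} [NormedAddCommGroup E] [InnerProductSpace ℝ E] [FiniteDimensional ℝ E]
  [MeasurableSpace E] [BorelSpace E] {μ : Measure E} [μ.IsAddHaarMeasure]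
  {ι : Type*} [Fintype ι] [DecidableEq ι] {v : ι → E × E} {z : ι → E →L[ℝ] ℂ} {U : Set E}

namespace IsWirtingerFrame

lemma norm_sum_integral_mul_le_of_contDiff (h : IsWirtingerFrame v z) (hU : IsOpen U)
    (hUc : Convex ℝ U) (hUb : Bornology.IsBounded U) {y : E} {D : ℝ} (hD : ∀ x ∈ U, ‖x - y‖ ≤ D)
    {a χ : ι → E → ℂ} (ha : ∀ j, ContDiff ℝ 1 (a j))
    (hcomm : ∀ x ∈ U, ∀ j k, dirDeriv (v k) (a j) x = dirDeriv (v j) (a k) x)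
    (hχ : ∀ j, IsCcSmooth (χ j)) (hχU : ∀ j, tsupport (χ j) ⊆ U) :
    ‖∑ j, ∫ x, a j x * χ j x ∂μ‖ ≤ √(∑ j, ∫ x in U, ‖a j x‖ ^ 2 ∂μ) *
      √(Real.exp (D ^ 2) * ∫ x, ‖∑ j, dirDeriv (v j) (χ j) x‖ ^ 2 ∂μ) := by
  have hmem (j : ι) : MemLp (U.indicator (a j)) 2 μ := by
    rw [memLp_indicator_iff_restrict hU.measurableSet,
      memLp_two_iff_integrable_sq_norm (ha j).continuous.aestronglyMeasurable]
    exact integrableOn_of_continuous_of_isBounded ((ha j).continuous.norm.pow 2) hUb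
  have hmul (j : ι) : ∫ x, U.indicator (a j) x * χ j x ∂μ = ∫ x, a j x * χ j x ∂μ := by
    refine integral_congr_ae (.of_forall fun x => ?_)
    by_cases hx : x ∈ U
    · simp only [Set.indicator_of_mem hx]
    · simp only [image_eq_zero_of_notMem_tsupport fun h => hx (hχU j h), mul_zero]
  simpa only [hmul, integral_norm_sq_indicator hU.measurableSet] using
    norm_sum_integral_mul_le_of_convex (fun ξ => (h.sum_norm_sq_eq_dirComb ξ).le) hU hUc hD hmem
      (hasWeakCurlOn_indicator ha hcomm) hχ hχU

variable {F χ : ι → ι → E → ℂ}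

lemma norm_sum_integral_conePrimitive_mul_le (h : IsWirtingerFrame v z) (hU : IsOpen U)
    (hUc : Convex ℝ U) (hUb : Bornology.IsBounded U) {y : E} (hy : y ∈ U) {D : ℝ}
    (hD : ∀ x ∈ U, ‖x - y‖ ≤ D) (hF : ∀ i j, ContDiff ℝ 1 (F i j))
    (hclosed : ∀ i j k, ∀ w ∈ U, dirDeriv (conjDir (v k)) (F i j) w =
      dirDeriv (conjDir (v j)) (F i k) w)
    {φ : ι → E → ℂ} (hφ : ∀ j, IsCcSmooth (φ j)) (hφU : ∀ j, tsupport (φ j) ⊆ U) :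
    ‖∑ j, ∫ x, conePrimitive z y F j x * φ j x ∂μ‖ ≤
      √(D ^ 2 * ∫ x in U, (∫ t in (0 : ℝ)..1, ∑ j, ∑ i, ‖F i j (y + t • (x - y))‖ ^ 2) ∂μ) *
        √(Real.exp (D ^ 2) * ∫ x, ‖∑ j, dirDeriv (conjDir (v j)) (φ j) x‖ ^ 2 ∂μ) := by
  refine (h.star.norm_sum_integral_mul_le_of_contDiff hU hUc hUb hD
    (contDiff_conePrimitive z y hF)
    (fun x hx => h.dirDeriv_conjDir_conePrimitive_comm hUc hy hx hF hclosed) hφ hφU).trans ?_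
  gcongr
  exact sum_setIntegral_norm_conePrimitive_sq_le hU.measurableSet hUb hD h.sum_norm_sq hF

theorem norm_sum_sum_integral_mul_le_of_contDiff (h : IsWirtingerFrame v z) (hU : IsOpen U)
    (hUc : Convex ℝ U) (hne : U.Nonempty) (hUb : Bornology.IsBounded U)
    {D : ℝ} (hD : ∀ x ∈ U, ∀ y ∈ U, ‖x - y‖ ≤ D) (hF : ∀ i j, ContDiff ℝ 1 (F i j))
    (hclosed₁ : ∀ i j k, ∀ w ∈ U, dirDeriv (v k) (F i j) w = dirDeriv (v i) (F k j) w)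
    (hclosed₂ : ∀ i j k, ∀ w ∈ U, dirDeriv (conjDir (v k)) (F i j) w =
      dirDeriv (conjDir (v j)) (F i k) w)
    (hχ : ∀ i j, IsCcSmooth (χ i j)) (hχU : ∀ i j, tsupport (χ i j) ⊆ U) :
    ‖∑ i, ∑ j, ∫ x, F i j x * χ i j x ∂μ‖ ≤
      2 * (√(D ^ 2 * (2 ^ Module.finrank ℝ E * ∫ x in U, ∑ i, ∑ j, ‖F i j x‖ ^ 2 ∂μ)) *
        √(Real.exp (D ^ 2) * ∫ x, ‖ddbarTranspose v χ x‖ ^ 2 ∂μ)) := by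
  have hFc (i j : ι) := (hF i j).continuous
  obtain ⟨y, hy, hpole⟩ := exists_mem_setIntegral_segment_le (μ := μ) hU hUc hne hUb
    (h := fun x => ∑ i, ∑ j, ‖F i j x‖ ^ 2) (by fun_prop) fun x => by positivity
  have hsum (x : E) : ∑ j, ∑ i, ‖F i j x‖ ^ 2 = ∑ i, ∑ j, ‖F i j x‖ ^ 2 := Finset.sum_comm
  have hA := h.norm_sum_integral_conePrimitive_mul_le (μ := μ) hU hUc hUb hy
    (fun x hx => hD x hx y hy) hF hclosed₂ (fun j => .sum _ fun i _ => (hχ i j).dirDeriv (v i))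
    fun j => tsupport_sum_dirDeriv_subset v fun i => hχU i j
  have hB := h.star.norm_sum_integral_conePrimitive_mul_le (μ := μ) hU hUc hUb hy
    (fun x hx => hD x hx y hy) (fun k l => hF l k)
    (fun i j k w hw => by simpa only [conjDir_conjDir] using hclosed₁ j i k w hw)
    (fun i => .sum _ fun j _ => (hχ i j).dirDeriv (conjDir (v j)))
    fun i => tsupport_sum_dirDeriv_subset (fun j => conjDir (v j)) fun j => hχU i j
  simp only [hsum, sum_dirDeriv_conjDir_sum_dirDeriv_eq_ddbarTranspose v hχ] at hA
  simp only [conjDir_conjDir, sum_dirDeriv_sum_dirDeriv_eq_ddbarTranspose v hχ] at hB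
  rw [sum_sum_integral_mul_eq_of_dirDeriv_add (contDiff_conePrimitive z y hF)
    (contDiff_conePrimitive _ y fun k l => hF l k) (fun i j x hx =>
      h.dirDeriv_conePrimitive_add hUc hy hx hF hclosed₁ hclosed₂ i j) hχ hχU, norm_neg, two_mul]
  refine (norm_add_le _ _).trans (add_le_add (hA.trans ?_) (hB.trans ?_)) <;> gcongr

end IsWirtingerFrame

end SmoothFrameEstimate

section WeakClosed

variable {E : Type*} [NormedAddCommGroup E] [NormedSpace ℝ E] [MeasurableSpace E]
  {μ : Measure E} {U V : Set E} {Φ : E → ℝ} {ι : Type*} {v : ι → E × E} {g : ι → E → ℂ}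

lemma HasWeakCurlOn.indicator {q : ι → ι → E → ℂ} (h : HasWeakCurlOn (μ.restrict U) V Φ v g q)
    (hU : MeasurableSet U) :
    HasWeakCurlOn μ V Φ v (fun j => U.indicator (g j)) fun j k => U.indicator (q j k) := by
  intro j k χ hχ hχV
  simpa [integral_indicator_mul hU, integral_neg] using h j k χ hχ hχV

variable [FiniteDimensional ℝ E] [BorelSpace E] [μ.IsAddHaarMeasure]

lemma HasWeakCurlOn.dirDeriv_mollify_comm (h : HasWeakCurlOn μ U 0 v g fun _ _ => 0)
    (hg : ∀ j, LocallyIntegrable (g j) μ) (φ : ContDiffBump (0 : E)) {x : E}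
    (hx : Metric.closedBall x φ.rOut ⊆ U) (j k : ι) :
    dirDeriv (v j) (mollify μ φ (g k)) x = dirDeriv (v k) (mollify μ φ (g j)) x := by
  have hzero : mollify μ φ 0 x = 0 := by simp [mollify_apply]
  have hdiv := (h j k).sum_dirDeriv_mollify (Fin.forall_fin_two.mpr ⟨hg k, (hg j).neg⟩) φ hx
  simp only [Fin.sum_univ_two, Matrix.cons_val_zero, Matrix.cons_val_one, mollify_neg, hzero,
    dirDeriv_neg] at hdiv
  linear_combination hdiv

end WeakClosed

lemma TendstoL2.tendsto_integral_mul {α : Type*} [MeasurableSpace α] {μ : Measure α}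
    {F : ℕ → α → ℂ} {f g : α → ℂ} (h : TendstoL2 μ F f) (hg : MemLp g 2 μ) :
    Filter.Tendsto (fun m => ∫ x, F m x * g x ∂μ) Filter.atTop (nhds (∫ x, f x * g x ∂μ)) := by
  obtain ⟨ℓ, hℓ⟩ := exists_clm_eq_integral_mul hg
  have hint {f : α → ℂ} (hf : MemLp f 2 μ) : ℓ (hf.toLp f) = ∫ x, f x * g x ∂μ :=
    (hℓ _).trans (integral_congr_ae (hf.coeFn_toLp.mul .rfl))
  simpa only [Function.comp_def, hint] using (ℓ.continuous.tendsto _).comp h.tendsto_toLp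

section Estimate

variable {E : Type*} [NormedAddCommGroup E] [InnerProductSpace ℝ E] [FiniteDimensional ℝ E]
  [MeasurableSpace E] [BorelSpace E] {μ : Measure E} [μ.IsAddHaarMeasure]
  {ι : Type*} [Fintype ι] [DecidableEq ι] {v : ι → E × E} {z : ι → E →L[ℝ] ℂ} {U V : Set E}
  {f χ : ι → ι → E → ℂ}

namespace IsWirtingerFrame

lemma norm_sum_sum_integral_mollify_mul_le (h : IsWirtingerFrame v z) (hV : IsOpen V)
    (hVc : Convex ℝ V) (hne : V.Nonempty) (hVb : Bornology.IsBounded V)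
    {D : ℝ} (hD : ∀ x ∈ V, ∀ y ∈ V, ‖x - y‖ ≤ D) (hf : ∀ i j, LocallyIntegrable (f i j) μ)
    (hclosed₁ : ∀ j, HasWeakCurlOn μ U 0 v (fun i => f i j) fun _ _ => 0)
    (hclosed₂ : ∀ i, HasWeakCurlOn μ U 0 (fun j => conjDir (v j)) (f i) fun _ _ => 0)
    (φ : ContDiffBump (0 : E)) (hφ : ∀ x ∈ V, Metric.closedBall x φ.rOut ⊆ U)
    (hfφ : ∀ i j, MemLp (mollify μ φ (f i j)) 2 μ)
    (hχ : ∀ i j, IsCcSmooth (χ i j)) (hχV : ∀ i j, tsupport (χ i j) ⊆ V) :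
    ‖∑ i, ∑ j, ∫ x, mollify μ φ (f i j) x * χ i j x ∂μ‖ ≤
      2 * (√(D ^ 2 * (2 ^ Module.finrank ℝ E *
          ∑ i, ∑ j, ∫ x, ‖mollify μ φ (f i j) x‖ ^ 2 ∂μ)) *
        √(Real.exp (D ^ 2) * ∫ x, ‖ddbarTranspose v χ x‖ ^ 2 ∂μ)) := by
  have hint (i j : ι) := (hfφ i j).integrable_norm_pow two_ne_zero
  have hint' (i : ι) := integrable_finsetSum Finset.univ fun j _ => hint i j
  have hmono : ∫ x in V, ∑ i, ∑ j, ‖mollify μ φ (f i j) x‖ ^ 2 ∂μ ≤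
      ∑ i, ∑ j, ∫ x, ‖mollify μ φ (f i j) x‖ ^ 2 ∂μ := by
    simp only [← integral_finsetSum _ fun j _ => hint _ j,
      ← integral_finsetSum _ fun i _ => hint' i]
    exact setIntegral_le_integral (integrable_finsetSum _ fun i _ => hint' i)
      (.of_forall fun x => by positivity)
  refine (h.norm_sum_sum_integral_mul_le_of_contDiff hV hVc hne hVb hD
    (fun i j => (contDiff_mollify φ (hf i j)).of_le (by simp))
    (fun i j k x hx => (hclosed₁ j).dirDeriv_mollify_comm (fun i => hf i j) φ (hφ x hx) k i)
    (fun i j k x hx => (hclosed₂ i).dirDeriv_mollify_comm (hf i) φ (hφ x hx) k j) hχ hχV).trans ?_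
  gcongr

theorem norm_sum_sum_setIntegral_mul_le (h : IsWirtingerFrame v z) (hU : IsOpen U)
    (hUc : Convex ℝ U) (hne : U.Nonempty) (hUb : Bornology.IsBounded U)
    (hf : ∀ i j, MemLp (f i j) 2 (μ.restrict U))
    (hclosed₁ : ∀ j, HasWeakCurlOn (μ.restrict U) U 0 v (fun i => f i j) fun _ _ => 0)
    (hclosed₂ : ∀ i,
      HasWeakCurlOn (μ.restrict U) U 0 (fun j => conjDir (v j)) (f i) fun _ _ => 0)
    (hχ : ∀ i j, IsCcSmooth (χ i j)) (hχU : ∀ i j, tsupport (χ i j) ⊆ U) :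
    ‖∑ i, ∑ j, ∫ x in U, f i j x * χ i j x ∂μ‖ ≤
      2 * (√(Metric.diam U ^ 2 * (2 ^ Module.finrank ℝ E *
          ∑ i, ∑ j, ∫ x in U, ‖f i j x‖ ^ 2 ∂μ)) *
        √(Real.exp (Metric.diam U ^ 2) * ∫ x, ‖ddbarTranspose v χ x‖ ^ 2 ∂μ)) := by
  obtain ⟨p, hp⟩ := hne
  obtain ⟨V, hV, hVc, hKV, δ, hδ, hVU⟩ := exists_convex_isOpen_superset_closedBall_subset
    (K := {p} ∪ ⋃ i, ⋃ j, tsupport (χ i j))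
    (isCompact_singleton.union (isCompact_iUnion fun i => isCompact_iUnion fun j =>
      (hχ i j).hasCompactSupport)) hU hUc
    (Set.union_subset (by simpa using hp) (Set.iUnion₂_subset hχU))
  have hsub : V ⊆ U := fun x hx => hVU x hx (Metric.mem_closedBall_self hδ.le)
  have hg (i j : ι) : MemLp (U.indicator (f i j)) 2 μ :=
    (memLp_indicator_iff_restrict hU.measurableSet).mpr (hf i j)
  have hloc (i j : ι) := (hg i j).locallyIntegrable one_le_two
  obtain ⟨φ, hφ, -⟩ := exists_contDiffBump_tendsto_rOut (E := E)
  have hcc (i j : ι) (m : ℕ) := isCcSmooth_mollify (φ m) (hloc i j) hUb.isCompact_closure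
    fun y hy => Set.indicator_of_notMem (fun hyU => hy (subset_closure hyU)) _
  have hlim (i j : ι) := tendstoL2_mollify hφ (hg i j) fun m => (hcc i j m).memLp_two
  simp only [← integral_indicator_mul hU.measurableSet,
    ← integral_norm_sq_indicator hU.measurableSet]
  refine le_of_tendsto_of_tendsto
    (tendsto_finsetSum _ fun i _ => tendsto_finsetSum _ fun j _ =>
      (hlim i j).tendsto_integral_mul (hχ i j).memLp_two).norm
    ((((((tendsto_finsetSum _ fun i _ => tendsto_finsetSum _ fun j _ =>
      (hlim i j).integral_norm_sq).const_mul _).const_mul _).sqrt).mul_const _).const_mul _) ?_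
  filter_upwards [hφ.eventually_le_const hδ] with m hm
  exact h.norm_sum_sum_integral_mollify_mul_le hV hVc ⟨p, hKV (.inl rfl)⟩ (hUb.subset hsub)
    (fun x hx y hy => dist_eq_norm x y ▸ Metric.dist_le_diam_of_mem hUb (hsub hx) (hsub hy)) hloc
    (fun j => by simpa using (hclosed₁ j).indicator hU.measurableSet)
    (fun i => by simpa using (hclosed₂ i).indicator hU.measurableSet) (φ m)
    (fun x hx => (Metric.closedBall_subset_closedBall hm).trans (hVU x hx))
    (fun i j => (hcc i j m).memLp_two) hχ fun i j =>
      (Set.subset_iUnion₂_of_subset i j subset_rfl).trans (Set.subset_union_right.trans hKV)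

end IsWirtingerFrame

end Estimate

section RieszRepresentation

lemma exists_forall_eq_inner_of_norm_le {𝕜 X H : Type*} [RCLike 𝕜] [AddCommGroup X] [Module 𝕜 X]
    [NormedAddCommGroup H] [InnerProductSpace 𝕜 H] [CompleteSpace H] (A : X →ₗ[𝕜] H)
    (l : X →ₗ[𝕜] 𝕜) {C : ℝ} (hC : 0 ≤ C) (hl : ∀ x, ‖l x‖ ≤ C * ‖A x‖) :
    ∃ u : H, ‖u‖ ≤ C ∧ ∀ x, inner 𝕜 u (A x) = l x := by
  have hker : A.ker ≤ l.ker := fun x hx => by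
    simpa [LinearMap.mem_ker.mp hx] using hl x
  let m : A.range →ₗ[𝕜] 𝕜 := A.ker.liftQ l hker ∘ₗ A.quotKerEquivRange.symm
  have hm (x : X) : m (A.rangeRestrict x) = l x := by
    have hx : A.quotKerEquivRange.symm (A.rangeRestrict x) = A.ker.mkQ x :=
      A.quotKerEquivRange.symm_apply_eq.mpr rfl
    rw [LinearMap.comp_apply, LinearEquiv.coe_coe, hx, Submodule.mkQ_apply, Submodule.liftQ_apply]
  have hbound (y : A.range) : ‖m y‖ ≤ C * ‖y‖ := by
    obtain ⟨x, rfl⟩ := A.surjective_rangeRestrict y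
    exact (hm x).symm ▸ hl x
  obtain ⟨L, hL, hnorm⟩ := exists_extension_norm_eq A.range (m.mkContinuous C hbound)
  refine ⟨(InnerProductSpace.toDual 𝕜 H).symm L, ?_, fun x => ?_⟩
  · rw [LinearIsometryEquiv.norm_map, hnorm]
    exact m.mkContinuous_norm_le hC hbound
  · rw [InnerProductSpace.toDual_symm_apply]
    exact (hL (A.rangeRestrict x)).trans (hm x)

lemma exists_memLp_forall_integral_mul_eq_of_norm_le {α X : Type*} [MeasurableSpace α]
    {μ : Measure α} [AddCommGroup X] [Module ℂ X] (A : X →ₗ[ℂ] Lp ℂ 2 μ) (l : X →ₗ[ℂ] ℂ) {C : ℝ}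
    (hC : 0 ≤ C) (hl : ∀ x, ‖l x‖ ≤ C * ‖A x‖) :
    ∃ u : α → ℂ, MemLp u 2 μ ∧ (∫ x, ‖u x‖ ^ 2 ∂μ) ≤ C ^ 2 ∧
      ∀ χ, ∫ x, u x * A χ x ∂μ = l χ := by
  obtain ⟨u, hu, hul⟩ := exists_forall_eq_inner_of_norm_le A l hC hl
  refine ⟨fun x => conj (u x), (Lp.memLp u).star, ?_, fun χ => ?_⟩
  · simp only [RCLike.norm_conj]
    rw [integral_norm_sq_eq_norm_toLp_sq (Lp.memLp u), Lp.toLp_coeFn]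
    gcongr
  · simp only [mul_comm (conj _)]
    rw [integral_mul_conj_eq_inner (Lp.memLp u), Lp.toLp_coeFn, hul]

end RieszRepresentation

section TestFunctions

variable {E : Type*} [NormedAddCommGroup E] [NormedSpace ℝ E] {U : Set E}

/-- The space of test functions on `U`. -/
def testFun (U : Set E) : Submodule ℂ (E → ℂ) where
  carrier := {χ | IsCcSmooth χ ∧ tsupport χ ⊆ U}
  add_mem' hχ hψ := ⟨hχ.1.add hψ.1,
    (tsupport_add _ _).trans (Set.union_subset hχ.2 hψ.2)⟩
  zero_mem' := ⟨⟨contDiff_const, .zero⟩, by simp⟩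
  smul_mem' c _ hχ := ⟨hχ.1.mul_left contDiff_const, (tsupport_mul_subset_right).trans hχ.2⟩

namespace testFun

/-- `dirDeriv v` as an operator on test functions. -/
noncomputable def derivₗ (v : E × E) : testFun U →ₗ[ℂ] testFun U where
  toFun χ := ⟨dirDeriv v χ, χ.2.1.dirDeriv v, (tsupport_dirDeriv_subset v _).trans χ.2.2⟩
  map_add' χ ψ := Subtype.ext <| funext fun x =>
    dirDeriv_add v (χ.2.1.differentiableAt x) (ψ.2.1.differentiableAt x)
  map_smul' c χ := Subtype.ext <| funext fun x =>
    dirDeriv_const_mul v c (χ.2.1.differentiableAt x)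

variable [MeasurableSpace E] [OpensMeasurableSpace E] {μ : Measure E}
  [IsFiniteMeasureOnCompacts μ]

variable (μ) in
/-- The inclusion of the test functions into `L²`. -/
noncomputable def toL2 : testFun U →ₗ[ℂ] Lp ℂ 2 μ where
  toFun χ := χ.2.1.memLp_two.toLp _
  map_add' χ ψ := MemLp.toLp_add χ.2.1.memLp_two ψ.2.1.memLp_two
  map_smul' c χ := MemLp.toLp_const_smul c χ.2.1.memLp_two

lemma toL2_ae_eq (χ : testFun U) : toL2 μ χ =ᵐ[μ] χ := χ.2.1.memLp_two.coeFn_toLp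

lemma norm_toL2 (χ : testFun U) : ‖toL2 μ χ‖ = √(∫ x, ‖(χ : E → ℂ) x‖ ^ 2 ∂μ) := by
  rw [integral_norm_sq_eq_norm_toLp_sq χ.2.1.memLp_two, Real.sqrt_sq (norm_nonneg _)]
  rfl

lemma exists_linearMap_eq_setIntegral_mul {f : E → ℂ} (hU : MeasurableSet U)
    (hf : MemLp f 2 (μ.restrict U)) :
    ∃ l : testFun U →ₗ[ℂ] ℂ, ∀ χ, l χ = ∫ x in U, f x * (χ : E → ℂ) x ∂μ := by
  obtain ⟨ℓ, hℓ⟩ := exists_clm_eq_integral_mul ((memLp_indicator_iff_restrict hU).mpr hf)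
  refine ⟨ℓ ∘ₗ toL2 μ, fun χ => ?_⟩
  rw [← integral_indicator_mul hU]
  refine (hℓ _).trans (integral_congr_ae ((toL2_ae_eq χ).mono fun x hx => ?_))
  simp only [hx, mul_comm]

end testFun

variable [MeasurableSpace E] [OpensMeasurableSpace E] {μ : Measure E}
  [IsFiniteMeasureOnCompacts μ] {ι : Type*} [Fintype ι] {v : ι → E × E} {f : ι → ι → E → ℂ}

lemma exists_memLp_of_forall_norm_sum_sum_le (hU : MeasurableSet U)
    (hf : ∀ i j, MemLp (f i j) 2 (μ.restrict U)) {C : ℝ} (hC : 0 ≤ C)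
    (hle : ∀ χ : ι → ι → E → ℂ, (∀ i j, IsCcSmooth (χ i j)) → (∀ i j, tsupport (χ i j) ⊆ U) →
      ‖∑ i, ∑ j, ∫ x in U, f i j x * χ i j x ∂μ‖ ≤
        C * √(∫ x, ‖ddbarTranspose v χ x‖ ^ 2 ∂μ)) :
    ∃ u : E → ℂ, MemLp u 2 (μ.restrict U) ∧ (∫ x in U, ‖u x‖ ^ 2 ∂μ) ≤ C ^ 2 ∧
      ∀ i j χ, IsCcSmooth χ → tsupport χ ⊆ U →
        ∫ x in U, u x * dirDeriv (v i) (dirDeriv (conjDir (v j)) χ) x ∂μ =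
          ∫ x in U, f i j x * χ x ∂μ := by
  classical
  choose l hl using fun i j => testFun.exists_linearMap_eq_setIntegral_mul hU (hf i j)
  let B (i j : ι) : testFun U →ₗ[ℂ] testFun U :=
    testFun.derivₗ (v i) ∘ₗ testFun.derivₗ (conjDir (v j))
  let T := LinearMap.lsum ℂ _ ℂ fun i => LinearMap.lsum ℂ _ ℂ fun j => B i j
  let L := LinearMap.lsum ℂ _ ℂ fun i => LinearMap.lsum ℂ _ ℂ fun j => l i j
  have hT (χ : ι → ι → testFun U) : (T χ : E → ℂ) = ddbarTranspose v fun i j => χ i j := by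
    ext x
    simp [T, B, LinearMap.lsum_apply, ddbarTranspose, testFun.derivₗ]
  have hL (χ : ι → ι → testFun U) :
      L χ = ∑ i, ∑ j, ∫ x in U, f i j x * (χ i j : E → ℂ) x ∂μ := by
    simp [L, LinearMap.lsum_apply, hl]
  obtain ⟨u, hu, huC, huL⟩ :=
    exists_memLp_forall_integral_mul_eq_of_norm_le (testFun.toL2 μ ∘ₗ T) L hC fun χ => by
      rw [LinearMap.comp_apply, testFun.norm_toL2, hT, hL]
      exact hle _ (fun i j => (χ i j).2.1) fun i j => (χ i j).2.2
  refine ⟨u, hu.restrict U, (setIntegral_le_integral (hu.integrable_norm_pow two_ne_zero)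
    (.of_forall fun x => by positivity)).trans huC, fun i j χ hχ hχU => ?_⟩
  let χ' : testFun U := ⟨χ, hχ, hχU⟩
  have hsingle := huL (Pi.single i (Pi.single j χ'))
  simp only [LinearMap.comp_apply, T, L, LinearMap.lsum_piSingle, hl] at hsingle
  have hzero (x : E) (hx : x ∉ U) :
      u x * dirDeriv (v i) (dirDeriv (conjDir (v j)) χ) x = 0 :=
    mul_eq_zero_of_right _ (image_eq_zero_of_notMem_tsupport fun h => hx ((B i j χ').2.2 h))
  rw [← hsingle, setIntegral_eq_integral_of_forall_compl_eq_zero hzero]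
  exact integral_congr_ae (.mul .rfl (testFun.toL2_ae_eq (B i j χ')).symm)

end TestFunctions

section Existence

variable {E : Type*} [NormedAddCommGroup E] [InnerProductSpace ℝ E] [FiniteDimensional ℝ E]
  [MeasurableSpace E] [BorelSpace E] {μ : Measure E} [μ.IsAddHaarMeasure]
  {ι : Type*} [Fintype ι] [DecidableEq ι] {v : ι → E × E} {z : ι → E →L[ℝ] ℂ} {U : Set E}
  {f : ι → ι → E → ℂ}

theorem IsWirtingerFrame.exists_memLp_ddbar_eq (h : IsWirtingerFrame v z) (hU : IsOpen U)
    (hUc : Convex ℝ U) (hne : U.Nonempty) (hUb : Bornology.IsBounded U)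
    (hf : ∀ i j, MemLp (f i j) 2 (μ.restrict U))
    (hclosed₁ : ∀ j, HasWeakCurlOn (μ.restrict U) U 0 v (fun i => f i j) fun _ _ => 0)
    (hclosed₂ : ∀ i,
      HasWeakCurlOn (μ.restrict U) U 0 (fun j => conjDir (v j)) (f i) fun _ _ => 0) :
    ∃ u : E → ℂ, MemLp u 2 (μ.restrict U) ∧
      (∫ x in U, ‖u x‖ ^ 2 ∂μ) ≤ 2 ^ (Module.finrank ℝ E + 2) *
        Real.exp (2 * Metric.diam U ^ 2) * ∑ i, ∑ j, ∫ x in U, ‖f i j x‖ ^ 2 ∂μ ∧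
      ∀ i j χ, IsCcSmooth χ → tsupport χ ⊆ U →
        ∫ x in U, u x * dirDeriv (v i) (dirDeriv (conjDir (v j)) χ) x ∂μ =
          ∫ x in U, f i j x * χ x ∂μ := by
  set S := ∑ i, ∑ j, ∫ x in U, ‖f i j x‖ ^ 2 ∂μ
  set D := Metric.diam U
  have : 0 ≤ S := Finset.sum_nonneg fun i _ => Finset.sum_nonneg fun j _ =>
    integral_nonneg fun x => by positivity
  obtain ⟨u, hu, hu_le, hu_eq⟩ := exists_memLp_of_forall_norm_sum_sum_le (v := v)
    (C := 2 * (√(D ^ 2 * (2 ^ Module.finrank ℝ E * S)) * √(Real.exp (D ^ 2))))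
    hU.measurableSet hf (by positivity) fun χ hχ hχU => by
      refine (h.norm_sum_sum_setIntegral_mul_le hU hUc hne hUb hf hclosed₁ hclosed₂ hχ
        hχU).trans_eq ?_
      rw [Real.sqrt_mul (Real.exp_pos _).le]
      ring
  refine ⟨u, hu, hu_le.trans ?_, hu_eq⟩
  calc (2 * (√(D ^ 2 * (2 ^ Module.finrank ℝ E * S)) * √(Real.exp (D ^ 2)))) ^ 2
      = 2 ^ (Module.finrank ℝ E + 2) * (D ^ 2 * Real.exp (D ^ 2)) * S := by
        rw [mul_pow, mul_pow, Real.sq_sqrt (by positivity), Real.sq_sqrt (Real.exp_pos _).le]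
        ring
    _ ≤ 2 ^ (Module.finrank ℝ E + 2) * (Real.exp (D ^ 2) * Real.exp (D ^ 2)) * S := by
        gcongr
        linarith [Real.add_one_le_exp (D ^ 2)]
    _ = 2 ^ (Module.finrank ℝ E + 2) * Real.exp (2 * D ^ 2) * S := by
        rw [← Real.exp_add, two_mul]

end Existence

section MatrixValued

variable {α ι κ F : Type*} [MeasurableSpace α] {μ : Measure α} [Fintype ι] [Fintype κ]
  [NormedAddCommGroup F] {f : ι → κ → α → F}

lemma memLp_two_of_integrable_sum_sum_norm_sq (hf : ∀ i j, AEStronglyMeasurable (f i j) μ)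
    (hint : Integrable (fun x => ∑ i, ∑ j, ‖f i j x‖ ^ 2) μ) (i : ι) (j : κ) :
    MemLp (f i j) 2 μ := by
  refine (memLp_two_iff_integrable_sq_norm (hf i j)).mpr
    (hint.mono' ((hf i j).norm.pow 2) (.of_forall fun x => ?_))
  rw [Real.norm_of_nonneg (sq_nonneg _)]
  calc ‖f i j x‖ ^ 2 ≤ ∑ j, ‖f i j x‖ ^ 2 :=
        Finset.single_le_sum (f := fun j => ‖f i j x‖ ^ 2) (fun _ _ => sq_nonneg _)
          (Finset.mem_univ j)
    _ ≤ ∑ i, ∑ j, ‖f i j x‖ ^ 2 :=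
        Finset.single_le_sum (f := fun i => ∑ j, ‖f i j x‖ ^ 2)
          (fun _ _ => Finset.sum_nonneg fun _ _ => sq_nonneg _) (Finset.mem_univ i)

lemma sum_sum_integral_norm_sq (hf : ∀ i j, MemLp (f i j) 2 μ) :
    ∑ i, ∑ j, ∫ x, ‖f i j x‖ ^ 2 ∂μ = ∫ x, ∑ i, ∑ j, ‖f i j x‖ ^ 2 ∂μ := by
  have hint (i j) := (hf i j).integrable_norm_pow two_ne_zero
  rw [integral_finsetSum _ fun i _ => integrable_finsetSum _ fun j _ => hint i j]
  exact Finset.sum_congr rfl fun i _ => (integral_finsetSum _ fun j _ => hint i j).symm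

end MatrixValued

section Coordinates

variable {n : ℕ}

/-- The field `∂/∂zⱼ` on `ℝ²ⁿ` as a complexified direction. -/
noncomputable def zDir (j : Fin n) :
    EuclideanSpace ℝ (Fin (2 * n)) × EuclideanSpace ℝ (Fin (2 * n)) :=
  ((1 / 2 : ℝ) • EuclideanSpace.single (idx1 j) 1,
    -((1 / 2 : ℝ) • EuclideanSpace.single (idx2 j) 1))

/-- The coordinate function `zⱼ` on `ℝ²ⁿ ≃ ℂⁿ`. -/
noncomputable def zCoord (j : Fin n) : EuclideanSpace ℝ (Fin (2 * n)) →L[ℝ] ℂ :=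
  ofRealCLM ∘L EuclideanSpace.proj (idx1 j) + I • ofRealCLM ∘L EuclideanSpace.proj (idx2 j)

lemma zCoord_apply (j : Fin n) (w : EuclideanSpace ℝ (Fin (2 * n))) :
    zCoord j w = w (idx1 j) + I * w (idx2 j) := rfl

lemma wz_eq_dirDeriv (j : Fin n) (f : EuclideanSpace ℝ (Fin (2 * n)) → ℂ) :
    wz j f = dirDeriv (zDir j) f := by
  ext x
  simp only [wz, pd, dirDeriv, zDir, map_neg, map_smul, real_smul]
  push_cast
  ring

lemma wzbar_eq_dirDeriv_conjDir (j : Fin n) (f : EuclideanSpace ℝ (Fin (2 * n)) → ℂ) :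
    wzbar j f = dirDeriv (conjDir (zDir j)) f := by
  ext x
  simp only [wzbar, pd, dirDeriv, conjDir, zDir, neg_neg, map_smul, real_smul]
  push_cast
  ring

lemma sum_idx1_add_sum_idx2 {M : Type*} [AddCommMonoid M] (F : Fin (2 * n) → M) :
    ∑ j, F (idx1 j) + ∑ j, F (idx2 j) = ∑ i, F i := by
  have h : n + n = 2 * n := by omega
  rw [← (finCongr h).sum_comp, Fin.sum_univ_add]
  congr 1
  refine Finset.sum_congr rfl fun j _ => congrArg F (Fin.ext ?_)
  simp [idx2, add_comm]

lemma idx1_inj {i j : Fin n} : idx1 i = idx1 j ↔ i = j := by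
  simp [idx1, Fin.ext_iff]

lemma idx2_inj {i j : Fin n} : idx2 i = idx2 j ↔ i = j := by
  simp [idx2, Fin.ext_iff]

lemma idx1_ne_idx2 (i j : Fin n) : idx1 i ≠ idx2 j := by
  simp only [idx1, idx2, ne_eq, Fin.mk.injEq]
  omega

lemma isWirtingerFrame_zDir_zCoord (n : ℕ) :
    IsWirtingerFrame (zDir (n := n)) (zCoord (n := n)) where
  dirDeriv_apply i k x := by
    rw [dirDeriv_eq_of_hasFDerivAt _ (zCoord i).hasFDerivAt]
    rcases eq_or_ne i k with rfl | hik
    · have hI : 2⁻¹ + -(I * (I * 2⁻¹)) = 1 := by linear_combination (-1 / 2 : ℂ) * I_sq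
      simpa [zDir, zCoord_apply, idx1_ne_idx2, (idx1_ne_idx2 _ _).symm] using hI
    · simp [zDir, zCoord_apply, idx1_ne_idx2, (idx1_ne_idx2 _ _).symm, idx1_inj, idx2_inj, hik]
  dirDeriv_conjDir_apply i k x := by
    rw [dirDeriv_eq_of_hasFDerivAt _ (zCoord i).hasFDerivAt]
    rcases eq_or_ne i k with rfl | hik
    · have hI : 2⁻¹ + I * (2⁻¹ * I) = 0 := by linear_combination (1 / 2 : ℂ) * I_sq
      simpa [conjDir, zDir, zCoord_apply, idx1_ne_idx2, (idx1_ne_idx2 _ _).symm] using hI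
    · simp [conjDir, zDir, zCoord_apply, idx1_ne_idx2, (idx1_ne_idx2 _ _).symm, idx1_inj,
        idx2_inj, hik]
  sum_norm_sq w := by
    have hz (i : Fin n) : ‖zCoord i w‖ ^ 2 = w (idx1 i) ^ 2 + w (idx2 i) ^ 2 := by
      rw [zCoord_apply, mul_comm I, Complex.sq_norm, normSq_add_mul_I]
    simp only [hz, Finset.sum_add_distrib, EuclideanSpace.norm_sq_eq, Real.norm_eq_abs, sq_abs]
    exact sum_idx1_add_sum_idx2 fun i => w i ^ 2

end Coordinates

theorem poincare_lelong_unweighted_general {n : ℕ} {Ω : Set (EuclideanSpace ℝ (Fin (2 * n)))}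
    (hΩ : IsOpen Ω) (hne : Ω.Nonempty) (hconv : Convex ℝ Ω) (hb : Bornology.IsBounded Ω)
    {f : Fin n → Fin n → EuclideanSpace ℝ (Fin (2 * n)) → ℂ}
    (hfm : ∀ i j, AEStronglyMeasurable (f i j) (volume.restrict Ω))
    (hfi : IntegrableOn (fun x => ∑ i, ∑ j, ‖f i j x‖ ^ 2) Ω)
    (hclosed₁ : ∀ i j k χ, IsTestFun Ω χ →
      ∫ x in Ω, f i j x * wzbar k χ x = ∫ x in Ω, f i k x * wzbar j χ x)
    (hclosed₂ : ∀ i j k χ, IsTestFun Ω χ →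
      ∫ x in Ω, f i j x * wz k χ x = ∫ x in Ω, f k j x * wz i χ x) :
    ∃ u : EuclideanSpace ℝ (Fin (2 * n)) → ℂ, AEStronglyMeasurable u (volume.restrict Ω) ∧
      IntegrableOn (fun x => ‖u x‖ ^ 2) Ω ∧
      (∀ i j χ, IsTestFun Ω χ →
        I * ∫ x in Ω, u x * wz i (fun y => wzbar j χ y) x = ∫ x in Ω, f i j x * χ x) ∧
      ∫ x in Ω, ‖u x‖ ^ 2 ≤ 2 ^ (2 * n + 2) * Real.exp (2 * Metric.diam Ω ^ 2) *
        ∫ x in Ω, ∑ i, ∑ j, ‖f i j x‖ ^ 2 := by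
  have hf := memLp_two_of_integrable_sum_sum_norm_sq hfm hfi
  simp only [wz_eq_dirDeriv, wzbar_eq_dirDeriv_conjDir] at hclosed₁ hclosed₂ ⊢
  obtain ⟨u, hu, hu_le, hu_eq⟩ :=
    (isWirtingerFrame_zDir_zCoord n).exists_memLp_ddbar_eq hΩ hconv hne hb hf
      (fun j => hasWeakCurlOn_zero_of_forall_integral_mul_eq fun i k χ hχ hχΩ =>
        hclosed₂ i j k χ ⟨hχ.1, hχ.2, hχΩ⟩)
      (fun i => hasWeakCurlOn_zero_of_forall_integral_mul_eq fun j k χ hχ hχΩ =>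
        hclosed₁ i j k χ ⟨hχ.1, hχ.2, hχΩ⟩)
  rw [finrank_euclideanSpace_fin, sum_sum_integral_norm_sq hf] at hu_le
  have hnorm (x) : ‖-I * u x‖ = ‖u x‖ := by simp
  refine ⟨fun x => -I * u x, hu.1.const_mul _, ?_, fun i j χ hχ => ?_, ?_⟩
  · simpa only [hnorm, IntegrableOn] using hu.integrable_norm_pow two_ne_zero
  · simp only [mul_assoc, integral_const_mul]
    rw [← mul_assoc, mul_neg, I_mul_I, neg_neg, one_mul]
    exact hu_eq i j χ ⟨hχ.1, hχ.2.1⟩ hχ.2.2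
  · simpa only [hnorm] using hu_le

/-- the unweighted Poincaré–Lelong equation on a strictly convex bounded
domain `Ω ⊂ ℂ^n`: for every `d`-closed `f ∈ L²_{(1,1)}(Ω)` there is `u ∈ L²(Ω)` with
`i∂∂̄u = f` distributionally and `∫_Ω |u|² ≤ c_Ω ∫_Ω |f|²`, where `c_Ω > 0` depends only
on the diameter of `Ω`. -/
theorem poincare_lelong_unweighted (n : ℕ) :
    ∃ κ : ℝ → ℝ,
      ∀ (Ω : Set (EuclideanSpace ℝ (Fin (2 * n)))), IsOpen Ω → Ω.Nonempty →
        StrictConvex ℝ Ω → Bornology.IsBounded Ω →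
        0 < κ (Metric.diam Ω) ∧
        ∀ f : Fin n → Fin n → EuclideanSpace ℝ (Fin (2 * n)) → ℂ,
          (∀ i j, AEStronglyMeasurable (f i j) (volume.restrict Ω)) →
          IntegrableOn (fun x => ∑ i, ∑ j, ‖f i j x‖ ^ 2) Ω →
          (∀ (i j k : Fin n) (χ : EuclideanSpace ℝ (Fin (2 * n)) → ℂ), IsTestFun Ω χ →
            (∫ x in Ω, f i j x * wzbar k χ x) = ∫ x in Ω, f i k x * wzbar j χ x) →
          (∀ (i j k : Fin n) (χ : EuclideanSpace ℝ (Fin (2 * n)) → ℂ), IsTestFun Ω χ →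
            (∫ x in Ω, f i j x * wz k χ x) = ∫ x in Ω, f k j x * wz i χ x) →
          ∃ u : EuclideanSpace ℝ (Fin (2 * n)) → ℂ,
            AEStronglyMeasurable u (volume.restrict Ω) ∧
            IntegrableOn (fun x => ‖u x‖ ^ 2) Ω ∧
            (∀ (i j : Fin n) (χ : EuclideanSpace ℝ (Fin (2 * n)) → ℂ), IsTestFun Ω χ →
              Complex.I * ∫ x in Ω, u x * wz i (fun y => wzbar j χ y) x
                = ∫ x in Ω, f i j x * χ x) ∧
            (∫ x in Ω, ‖u x‖ ^ 2)
              ≤ κ (Metric.diam Ω) * ∫ x in Ω, ∑ i, ∑ j, ‖f i j x‖ ^ 2 := by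
  refine ⟨fun D => 2 ^ (2 * n + 2) * Real.exp (2 * D ^ 2), fun Ω hΩ hne hconv hb =>
    ⟨by positivity, fun f hfm hfi hclosed₁ hclosed₂ => ?_⟩⟩
  exact poincare_lelong_unweighted_general hΩ hne hconv.convex hb hfm hfi hclosed₁ hclosed₂
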